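/- arXiv:0710.1283 — 3 statements merged into one kernel-verified Lean document; each statement's English description precedes it below -/
import Mathlib

section
/- Fix an integer N ≥ 1 and positive integers c_0, …, c_{N−1}. Let E ⊆ D be the set of (x,y) ∈ D with ⌊1/y⌋ = c_0 and whose first N−1 partial quotients of x satisfy a_i(x) = c_i for 1 ≤ i ≤ N−1. Then for all reals 1 < a < b, the limit as R → ∞ of μ1{ α ∈ (0,1) irrational : a < q_{n_R(α)}(α)/R < b and a_{n_R(α)−k}(α) = c_k for all 0 ≤ k < N } exists and equals (∫_D φ dμ2)^{−1} · ∫_E ( max(0, φ(x,y) − ln a) − max(0, φ(x,y) − ln b) ) dμ2(x,y). -/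
open MeasureTheory Filter Set Topology

noncomputable section

/-- The Gauss map `x ↦ {1/x}`. -/
def gaussMap (x : ℝ) : ℝ := Int.fract (1 / x)

/-- The `n`-th partial quotient (1-indexed) of the continued fraction expansion of `α`:
`pq α n = ⌊1 / 𝒢^{n-1} α⌋`. -/
def pq (α : ℝ) (n : ℕ) : ℕ := ⌊1 / gaussMap^[n - 1] α⌋₊

/-- Denominators of the convergents attached to a (1-indexed) sequence of partial quotients:
`q 0 = 1`, `q 1 = b 1`, `q (n+2) = b (n+2) * q (n+1) + q n`. -/
def qden (b : ℕ → ℕ) : ℕ → ℕ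
  | 0 => 1
  | 1 => b 1
  | n + 2 => b (n + 2) * qden b (n + 1) + qden b n

/-- Numerators of the convergents attached to a (1-indexed) sequence of partial quotients:
`p 0 = 0`, `p 1 = 1`, `p (n+2) = b (n+2) * p (n+1) + p n`. -/
def pnum (b : ℕ → ℕ) : ℕ → ℕ
  | 0 => 0
  | 1 => 1
  | n + 2 => b (n + 2) * pnum b (n + 1) + pnum b n

/-- `n_R(α)`: the first index `n` with `q_n(α) > R`. -/
def nIndex (α : ℝ) (R : ℝ) : ℕ := sInf {n : ℕ | R < (qden (pq α) n : ℝ)}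

/-- The Gauss measure on `(0,1)`, with density `1 / (ln 2 · (1 + x))`. -/
def gaussMeasure : Measure ℝ :=
  (volume.restrict (Ioo (0 : ℝ) 1)).withDensity fun x =>
    ENNReal.ofReal (1 / (Real.log 2 * (1 + x)))

/-- The domain `D = ((0,1) ∖ ℚ) × ((0,1) ∖ ℚ)` of the natural extension of the Gauss map. -/
def Dset : Set (ℝ × ℝ) :=
  {p | p.1 ∈ Ioo (0 : ℝ) 1 ∧ Irrational p.1 ∧ p.2 ∈ Ioo (0 : ℝ) 1 ∧ Irrational p.2}

/-- The invariant measure `μ₂` on `D`, with density `1 / (ln 2 · (1 + x y)²)`. -/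
def mu2 : Measure (ℝ × ℝ) :=
  (volume.restrict Dset).withDensity fun p =>
    ENNReal.ofReal (1 / (Real.log 2 * (1 + p.1 * p.2) ^ 2))

/-- The roof function `φ(x, y) = ln (⌊1/y⌋ + x)`. -/
def roof (p : ℝ × ℝ) : ℝ := Real.log ((⌊1 / p.2⌋ : ℝ) + p.1)

/-- The natural extension of the Gauss map,
`Ĝ(x, y) = (1 / (⌊1/y⌋ + x), 1/y − ⌊1/y⌋)`. -/
def GhatMap (p : ℝ × ℝ) : ℝ × ℝ := (1 / ((⌊1 / p.2⌋ : ℝ) + p.1), Int.fract (1 / p.2))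

/-- Birkhoff sums `S_r φ(p) = ∑_{i<r} φ(Ĝ^i p)` of the roof function under `Ĝ`. -/
def birk (p : ℝ × ℝ) (r : ℕ) : ℝ := ∑ i ∈ Finset.range r, roof (GhatMap^[i] p)

/-- `r(p, T)`: the first `r` with `S_r φ(p) > T`. -/
def rTime (p : ℝ × ℝ) (T : ℝ) : ℕ := sInf {r : ℕ | T < birk p r}

/-- Value of a finite continued fraction `[b₁, b₂, …, bₘ] = 1/(b₁ + 1/(b₂ + ⋯ + 1/bₘ))`,
entries given as a list. -/
def cfList : List ℝ → ℝ
  | [] => 0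
  | b :: t => 1 / (b + cfList t)

/-- The `m`-th truncation `[b 1, b 2, …, b m]` of an infinite continued fraction. -/
def cfTrunc (b : ℕ → ℝ) (m : ℕ) : ℝ := cfList ((List.range m).map fun i => b (i + 1))

/-- Value of the infinite continued fraction `[b 1, b 2, …]`, i.e. the limit of its finite
truncations. -/
def cfVal (b : ℕ → ℝ) : ℝ := limUnder atTop fun m => cfTrunc b m

/-- The finite continued fraction on the reversed word,
`cfRev b k = [b k; b (k-1), …, b 1] = b k + 1/(b (k-1) + ⋯ + 1/(b 1))`. -/
def cfRev (b : ℕ → ℝ) (k : ℕ) : ℝ :=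
  b k + cfList ((List.range (k - 1)).map fun i => b (k - 1 - i))

/-- For a bi-infinite sequence `a : ℤ → ℕ` of partial quotients,
`fn a n = ln q_n − ∑_{k=1}^n ln [a_k; a_{k-1}, a_{k-2}, …]`. -/
def fn (a : ℤ → ℕ) (n : ℕ) : ℝ :=
  Real.log (qden (fun k => a (k : ℤ)) n : ℝ) -
    ∑ k ∈ Finset.Icc 1 n,
      Real.log ((a (k : ℤ) : ℝ) + cfVal fun j => (a ((k : ℤ) - (j : ℤ)) : ℝ))

/-- The bi-sided cylinder of length `n` in `D` prescribing the sequence coordinates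
`a_k = b k` for `−n ≤ k ≤ n` (where `a_k`, `k ≥ 1`, are the partial quotients of the second
coordinate and `a_{−j}`, `j ≥ 0`, are the partial quotients of the first coordinate). -/
def cylinder (n : ℕ) (b : ℤ → ℕ) : Set (ℝ × ℝ) :=
  {p ∈ Dset | (∀ k : ℕ, 1 ≤ k → k ≤ n → pq p.2 k = b (k : ℤ)) ∧
    ∀ j : ℕ, j ≤ n → pq p.1 (j + 1) = b (-(j : ℤ))}

/-- The phase space of the special flow over `Ĝ` with roof function `φ`. -/
def DPhi : Set ((ℝ × ℝ) × ℝ) := {q | q.1 ∈ Dset ∧ 0 ≤ q.2 ∧ q.2 < roof q.1}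

/-- The invariant probability measure `μ₃` of the special flow. -/
def mu3 : Measure ((ℝ × ℝ) × ℝ) :=
  (ENNReal.ofReal (∫ p, roof p ∂mu2))⁻¹ • ((mu2.prod volume).restrict DPhi)

/-- The special flow `Φ_t` (for `t ≥ 0`) built over `Ĝ` with roof function `φ`:
`Φ_t(p, s) = (Ĝ^{r-1} p, s + t − S_{r-1} φ(p))` where `r = r(p, s + t)`. -/
def flowMap (t : ℝ) (q : (ℝ × ℝ) × ℝ) : (ℝ × ℝ) × ℝ :=
  (GhatMap^[rTime q.1 (q.2 + t) - 1] q.1,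
    q.2 + t - birk q.1 (rTime q.1 (q.2 + t) - 1))

end


lemma klo_pow_bound (e : ℕ) : (e + 1) ^ 8 ≤ 8 ^ 8 * 2 ^ e := by
  have h1 : e + 1 ≤ 8 * 2 ^ (e / 8) := by
    have : e / 8 + 1 ≤ 2 ^ (e / 8) := Nat.lt_two_pow_self
    omega
  calc (e + 1) ^ 8 ≤ (8 * 2 ^ (e / 8)) ^ 8 := Nat.pow_le_pow_left h1 8
    _ = 8 ^ 8 * 2 ^ (e / 8 * 8) := by rw [mul_pow, ← pow_mul]
    _ ≤ 8 ^ 8 * 2 ^ e := by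
      gcongr
      · norm_num
      · omega

lemma klo_divisor_bound : ∃ C : ℕ, ∀ n : ℕ, n ≠ 0 → n.divisors.card ^ 8 ≤ C * n := by
  refine ⟨(8 ^ 8) ^ 256, fun n hn => ?_⟩
  rw [Nat.card_divisors hn, ← Finset.prod_pow]
  have key : ∀ p ∈ n.primeFactors, (n.factorization p + 1) ^ 8 ≤
      (if p < 256 then 8 ^ 8 else 1) * p ^ n.factorization p := by
    intro p hp
    have hp2 : 2 ≤ p := (Nat.prime_of_mem_primeFactors hp).two_le
    split_ifs with h
    · exact (klo_pow_bound _).trans (by gcongr)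
    · rw [one_mul]
      have h1 : n.factorization p + 1 ≤ 2 ^ (n.factorization p) := Nat.lt_two_pow_self
      calc (n.factorization p + 1) ^ 8 ≤ (2 ^ (n.factorization p)) ^ 8 := Nat.pow_le_pow_left h1 8
        _ = 256 ^ n.factorization p := by rw [← pow_mul, mul_comm, pow_mul]; norm_num
        _ ≤ _ := by gcongr; omega
  refine (Finset.prod_le_prod' key).trans ?_
  rw [Finset.prod_mul_distrib]
  have h2 : ∏ p ∈ n.primeFactors, p ^ n.factorization p = n :=
    Nat.prod_factorization_pow_eq_self hn
  rw [h2]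
  gcongr
  rw [Finset.prod_ite]
  simp only [Finset.prod_const, one_pow, mul_one]
  apply Nat.pow_le_pow_right (by norm_num)
  calc _ ≤ (Finset.range 256).card := by
        apply Finset.card_le_card
        intro p hp
        simp at hp ⊢
        exact hp.2
    _ = 256 := by simp

lemma klo_le_totient_mul (n : ℕ) : n ≤ n.divisors.card * n.totient := by
  rcases Nat.eq_zero_or_pos n with rfl | hn
  · simp
  calc n = ∑ d ∈ n.divisors, d.totient := (Nat.sum_totient n).symm
    _ ≤ ∑ d ∈ n.divisors, n.totient := by
      apply Finset.sum_le_sum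
      intro d hd
      exact Nat.le_of_dvd (Nat.totient_pos.2 hn) (Nat.totient_dvd_of_dvd (Nat.dvd_of_mem_divisors hd))
    _ = _ := by simp

lemma klo_fiber_nat (n : ℕ) [NeZero n] (m : ℕ) (hm : 0 < m) (c : ZMod n) :
    (Finset.univ.filter fun v : ZMod n => (m : ZMod n) * v = c).card ≤ m := by
  classical
  rcases (Finset.univ.filter fun v : ZMod n => (m : ZMod n) * v = c).eq_empty_or_nonempty with h | ⟨v0, hv0⟩
  · rw [h]; simp
  · have h1 := IsAddCyclic.card_nsmul_eq_zero_le (α := ZMod n) hm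
    refine le_trans ?_ h1
    apply Finset.card_le_card_of_injOn (fun v => v - v0)
    · intro v hv
      simp at hv hv0 ⊢
      rw [mul_sub, hv, hv0, sub_self]
    · intro a _ b _ hab
      simpa using hab

lemma klo_fiber_int (n : ℕ) [NeZero n] (h : ℤ) (hh : h ≠ 0) (c : ZMod n) :
    (Finset.univ.filter fun v : ZMod n => (h : ZMod n) * v = c).card ≤ h.natAbs := by
  obtain ⟨m, rfl | rfl⟩ := h.eq_nat_or_neg
  · have := klo_fiber_nat n m (by omega) c
    simpa using this
  · have := klo_fiber_nat n m (by omega) (-c)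
    have e : ∀ v : ZMod n, (((-(m : ℤ)) : ℤ) : ZMod n) * v = c ↔ (m : ZMod n) * v = -c := by
      intro v
      push_cast
      rw [neg_mul, neg_eq_iff_eq_neg]
    simp_rw [e]
    simpa using this

lemma klo_ann (n : ℕ) [NeZero n] (m : ZMod n) :
    (Finset.univ.filter fun c : ZMod n => m * c = 0).card ≤ Nat.gcd m.val n := by
  classical
  have hg : 0 < Nat.gcd m.val n := Nat.gcd_pos_of_pos_right _ (NeZero.pos n)
  refine le_trans (Finset.card_le_card ?_) (klo_fiber_nat n (Nat.gcd m.val n) hg 0)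
  intro c hc
  simp at hc ⊢
  have := Nat.gcd_eq_gcd_ab m.val n
  have h2 : ((Nat.gcd m.val n : ℤ) : ZMod n) = ((m.val * Nat.gcdA m.val n + n * Nat.gcdB m.val n : ℤ) : ZMod n) := by
    rw [this]
  push_cast at h2
  simp at h2
  rw [h2, mul_right_comm, hc, zero_mul]

lemma klo_sum_gcd (n : ℕ) [NeZero n] :
    ∑ a : ZMod n, Nat.gcd a.val n ≤ n * n.divisors.card := by
  classical
  have h1 : ∀ a : ZMod n, Nat.gcd a.val n ≤ ∑ d ∈ n.divisors, if d ∣ a.val then d else 0 := by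
    intro a
    have : Nat.gcd a.val n ∈ n.divisors := by
      simp [Nat.gcd_dvd_right, NeZero.ne n]
    refine le_trans ?_ (Finset.single_le_sum (f := fun d => if d ∣ a.val then d else 0) (fun _ _ => Nat.zero_le _) this)
    simp [Nat.gcd_dvd_left]
  refine (Finset.sum_le_sum fun a _ => h1 a).trans ?_
  rw [Finset.sum_comm, mul_comm]
  rw [← smul_eq_mul]
  apply Finset.sum_le_card_nsmul
  intro d hd
  have hdn := Nat.dvd_of_mem_divisors hd
  obtain ⟨k, rfl⟩ := hdn
  have hd0 : d ≠ 0 := fun h => NeZero.ne (d * k) (by simp [h])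
  rw [← Finset.sum_filter, Finset.sum_const, smul_eq_mul, mul_comm]
  gcongr
  calc _ ≤ (Finset.range k).card := by
        apply Finset.card_le_card_of_injOn (fun a => a.val / d)
        · intro a ha
          simp
          exact Nat.div_lt_of_lt_mul (ZMod.val_lt a)
        · intro a ha b hb hab
          simp at ha hb hab
          apply ZMod.val_injective
          rw [← Nat.div_mul_cancel ha, ← Nat.div_mul_cancel hb, hab]
    _ = k := by simp

/-- number of triples with vanishing product -/
lemma klo_triples (n : ℕ) [NeZero n] :
    (Finset.univ.filter fun t : ZMod n × ZMod n × ZMod n => t.1 * t.2.1 * t.2.2 = 0).card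
      ≤ n ^ 2 * n.divisors.card ^ 2 := by
  classical
  rw [Finset.card_filter, Fintype.sum_prod_type]
  simp_rw [Fintype.sum_prod_type, ← Finset.card_filter]
  calc _ ≤ ∑ a : ZMod n, ∑ b : ZMod n, Nat.gcd a.val n * Nat.gcd b.val n := by
        apply Finset.sum_le_sum; intro a _
        apply Finset.sum_le_sum; intro b _
        refine (klo_ann n (a * b)).trans ?_
        rw [ZMod.val_mul, ← Nat.gcd_rec]
        apply Nat.le_of_dvd
        · exact Nat.mul_pos (Nat.gcd_pos_of_pos_right _ (NeZero.pos n)) (Nat.gcd_pos_of_pos_right _ (NeZero.pos n))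
        · rw [Nat.gcd_comm a.val, Nat.gcd_comm b.val]
          exact Nat.gcd_mul_right_dvd_mul_gcd _ _ _
    _ = (∑ a : ZMod n, Nat.gcd a.val n) ^ 2 := by
        rw [sq, Finset.sum_mul_sum]
    _ ≤ (n * n.divisors.card) ^ 2 := Nat.pow_le_pow_left (klo_sum_gcd n) 2
    _ = _ := by ring


lemma klo_parseval (n : ℕ) [NeZero n] {P : Type*} [Fintype P] (A B : P → ZMod n) :
    ∑ r : ZMod n, ∑ s : ZMod n, ‖∑ p, ZMod.stdAddChar (r * A p + s * B p)‖ ^ 2 =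
      (n : ℝ) ^ 2 * ((Finset.univ.filter fun t : P × P => A t.1 = A t.2 ∧ B t.1 = B t.2).card : ℝ) := by
  classical
  rw [← Complex.ofReal_inj]
  push_cast
  have h1 : ∀ r s : ZMod n, ((‖∑ p, ZMod.stdAddChar (r * A p + s * B p)‖ : ℂ)) ^ 2 =
      ∑ t : P × P, ZMod.stdAddChar (r * (A t.1 - A t.2)) * ZMod.stdAddChar (s * (B t.1 - B t.2)) := by
    intro r s
    rw [← Complex.mul_conj', map_sum, Finset.sum_mul_sum, Fintype.sum_prod_type]
    refine Finset.sum_congr rfl fun p _ => Finset.sum_congr rfl fun p' _ => ?_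
    rw [← AddChar.map_neg_eq_conj, ← AddChar.map_add_eq_mul, ← AddChar.map_add_eq_mul]
    congr 1
    ring
  simp_rw [h1]
  have h2 : ∀ r : ZMod n, ∑ s : ZMod n, ∑ t : P × P, ZMod.stdAddChar (r * (A t.1 - A t.2)) * ZMod.stdAddChar (s * (B t.1 - B t.2))
     = ∑ t : P × P, ZMod.stdAddChar (r * (A t.1 - A t.2)) * ∑ s : ZMod n, ZMod.stdAddChar (s * (B t.1 - B t.2)) := by
    intro r
    rw [Finset.sum_comm]
    simp_rw [Finset.mul_sum]
  simp_rw [h2]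
  rw [Finset.sum_comm]
  simp_rw [← Finset.sum_mul, AddChar.sum_mulShift _ (ZMod.isPrimitive_stdAddChar n), ZMod.card]
  rw [Finset.card_filter]
  push_cast
  rw [Finset.mul_sum]
  refine Finset.sum_congr rfl fun t _ => ?_
  by_cases ha : A t.1 = A t.2 <;> by_cases hb : B t.1 = B t.2 <;>
    simp [ha, hb, sub_eq_zero, sq]

/-- Kloosterman sums -/
noncomputable def kloo (n : ℕ) [NeZero n] (r s : ZMod n) : ℂ :=
  ∑ u : (ZMod n)ˣ, ZMod.stdAddChar (r * (u : ZMod n) + s * ((u⁻¹ : (ZMod n)ˣ) : ZMod n))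

lemma kloo_sq (n : ℕ) [NeZero n] (r s : ZMod n) :
    kloo n r s ^ 2 = ∑ p : (ZMod n)ˣ × (ZMod n)ˣ,
      ZMod.stdAddChar (r * ((p.1 : ZMod n) + (p.2 : ZMod n)) +
        s * (((p.1⁻¹ : (ZMod n)ˣ) : ZMod n) + ((p.2⁻¹ : (ZMod n)ˣ) : ZMod n))) := by
  rw [kloo, sq, Finset.sum_mul_sum, Fintype.sum_prod_type]
  refine Finset.sum_congr rfl fun p _ => Finset.sum_congr rfl fun p' _ => ?_
  rw [← AddChar.map_add_eq_mul]
  congr 1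
  ring

lemma klo_quad_count (n : ℕ) [NeZero n] :
    (Finset.univ.filter fun t : ((ZMod n)ˣ × (ZMod n)ˣ) × ((ZMod n)ˣ × (ZMod n)ˣ) =>
      (t.1.1 : ZMod n) + t.1.2 = (t.2.1 : ZMod n) + t.2.2 ∧
      ((t.1.1⁻¹ : (ZMod n)ˣ) : ZMod n) + ((t.1.2⁻¹ : (ZMod n)ˣ) : ZMod n) =
      ((t.2.1⁻¹ : (ZMod n)ˣ) : ZMod n) + ((t.2.2⁻¹ : (ZMod n)ˣ) : ZMod n)).card
     ≤ 2 * (n ^ 2 * n.divisors.card ^ 2) := by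
  classical
  refine le_trans ?_ (Nat.mul_le_mul_left 2 (klo_triples n))
  let f : ((ZMod n)ˣ × (ZMod n)ˣ) × ((ZMod n)ˣ × (ZMod n)ˣ) → ZMod n × ZMod n × ZMod n :=
    fun t => ((t.1.1 : ZMod n) + t.1.2, (t.2.1 : ZMod n) - t.1.1, (t.2.1 : ZMod n) - t.1.2)
  refine Finset.card_le_mul_card_image_of_maps_to (f := f) ?_ 2 ?_
  · rintro ⟨⟨a, b⟩, ⟨c, d⟩⟩ h
    simp only [Finset.mem_filter, Finset.mem_univ, true_and, f] at h ⊢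
    obtain ⟨h1, h2⟩ := h
    -- multiply h2 by a*b*c*d
    have ha : (a : ZMod n) * ((a⁻¹ : (ZMod n)ˣ) : ZMod n) = 1 := Units.mul_inv a
    have hb : (b : ZMod n) * ((b⁻¹ : (ZMod n)ˣ) : ZMod n) = 1 := Units.mul_inv b
    have hc : (c : ZMod n) * ((c⁻¹ : (ZMod n)ˣ) : ZMod n) = 1 := Units.mul_inv c
    have hd : (d : ZMod n) * ((d⁻¹ : (ZMod n)ˣ) : ZMod n) = 1 := Units.mul_inv d
    have key : ((a : ZMod n) + b) * c * d = ((c : ZMod n) + d) * a * b := by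
      linear_combination ((a : ZMod n) * b * c * d) * h2 - ((a : ZMod n) * c * d) * hb
        - ((b : ZMod n) * c * d) * ha + ((a : ZMod n) * b * d) * hc + ((a : ZMod n) * b * c) * hd
    linear_combination -key + ((a : ZMod n) * b - ((a : ZMod n) + b) * c) * h1
  · rintro ⟨x, y, z⟩ _
    refine le_trans (Finset.card_le_card_of_injOn (fun t => ((t.2.1 : (ZMod n)ˣ) : ZMod n)) ?_ ?_)
      (klo_fiber_nat n 2 (by norm_num) (x + y + z))
    · rintro ⟨⟨a, b⟩, ⟨c, d⟩⟩ h
      simp [f] at h ⊢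
      obtain ⟨⟨h1, h2⟩, h3, h4, h5⟩ := h
      linear_combination h3 + h4 + h5
    · rintro ⟨⟨a, b⟩, ⟨c, d⟩⟩ h ⟨⟨a', b'⟩, ⟨c', d'⟩⟩ h' hcc
      simp [f] at h h' hcc
      obtain ⟨⟨h1, h2⟩, h3, h4, h5⟩ := h
      obtain ⟨⟨h1', h2'⟩, h3', h4', h5'⟩ := h'
      have hc : (c : ZMod n) = c' := by rw [hcc]
      have e1 : a = a' := Units.ext (by linear_combination hc - h4 + h4')
      have e2 : b = b' := Units.ext (by linear_combination hc - h5 + h5')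
      have e3 : d = d' := Units.ext (by linear_combination -h1 + h1' - hc + congrArg Units.val e1 + congrArg Units.val e2)
      have e4 : c = c' := Units.ext hc
      simp [e1, e2, e3, e4]

lemma kloo_fourth (n : ℕ) [NeZero n] :
    ∑ r : ZMod n, ∑ s : ZMod n, ‖kloo n r s‖ ^ 4 ≤ 2 * (n : ℝ) ^ 4 * (n.divisors.card : ℝ) ^ 2 := by
  have h := klo_parseval n (P := (ZMod n)ˣ × (ZMod n)ˣ) (fun p => (p.1 : ZMod n) + (p.2 : ZMod n))
    (fun p => ((p.1⁻¹ : (ZMod n)ˣ) : ZMod n) + ((p.2⁻¹ : (ZMod n)ˣ) : ZMod n))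
  have e : ∀ r s : ZMod n, ‖kloo n r s‖ ^ 4 = ‖kloo n r s ^ 2‖ ^ 2 := by
    intro r s
    rw [norm_pow, ← pow_mul]
  simp_rw [e, kloo_sq]
  rw [h]
  have h2 := klo_quad_count n
  have h3 : ((Finset.univ.filter fun t : ((ZMod n)ˣ × (ZMod n)ˣ) × ((ZMod n)ˣ × (ZMod n)ˣ) =>
      (t.1.1 : ZMod n) + t.1.2 = (t.2.1 : ZMod n) + t.2.2 ∧
      ((t.1.1⁻¹ : (ZMod n)ˣ) : ZMod n) + ((t.1.2⁻¹ : (ZMod n)ˣ) : ZMod n) =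
      ((t.2.1⁻¹ : (ZMod n)ˣ) : ZMod n) + ((t.2.2⁻¹ : (ZMod n)ˣ) : ZMod n)).card : ℝ)
     ≤ 2 * ((n : ℝ) ^ 2 * (n.divisors.card : ℝ) ^ 2) := by exact_mod_cast h2
  calc _ ≤ (n : ℝ) ^ 2 * (2 * ((n : ℝ) ^ 2 * (n.divisors.card : ℝ) ^ 2)) := by gcongr
    _ = _ := by ring

lemma kloo_dilate (n : ℕ) [NeZero n] (r s : ZMod n) (v : (ZMod n)ˣ) :
    kloo n (r * v) (s * ((v⁻¹ : (ZMod n)ˣ) : ZMod n)) = kloo n r s := by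
  rw [kloo, kloo, ← Equiv.sum_comp (Equiv.mulLeft v) (fun u : (ZMod n)ˣ =>
    (ZMod.stdAddChar (r * (u : ZMod n) + s * ((u⁻¹ : (ZMod n)ˣ) : ZMod n)) : ℂ))]
  refine Finset.sum_congr rfl fun u _ => ?_
  congr 1
  simp
  ring

lemma kloo_symm (n : ℕ) [NeZero n] (r s : ZMod n) : kloo n r s = kloo n s r := by
  rw [kloo, kloo, ← Equiv.sum_comp (Equiv.inv (ZMod n)ˣ) (fun u : (ZMod n)ˣ =>
    (ZMod.stdAddChar (r * (u : ZMod n) + s * ((u⁻¹ : (ZMod n)ˣ) : ZMod n)) : ℂ))]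
  refine Finset.sum_congr rfl fun u _ => ?_
  congr 1
  simp
  ring

lemma kloo_bound (n : ℕ) [NeZero n] (h k : ℤ) (hh : h ≠ 0) :
    (n.totient : ℝ) * ‖kloo n h k‖ ^ 4 ≤ h.natAbs * (2 * (n : ℝ) ^ 4 * (n.divisors.card : ℝ) ^ 2) := by
  classical
  let f : (ZMod n)ˣ → ZMod n × ZMod n := fun v => (h * v, k * ((v⁻¹ : (ZMod n)ˣ) : ZMod n))
  have h1 : (n.totient : ℝ) * ‖kloo n h k‖ ^ 4 = ∑ v : (ZMod n)ˣ, ‖kloo n (f v).1 (f v).2‖ ^ 4 := by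
    simp_rw [f, kloo_dilate]
    simp [ZMod.card_units_eq_totient]
  rw [h1]
  have h2 : ∑ v : (ZMod n)ˣ, ‖kloo n (f v).1 (f v).2‖ ^ 4 =
      ∑ t : ZMod n × ZMod n, ∑ v ∈ Finset.univ.filter (fun v => f v = t), ‖kloo n t.1 t.2‖ ^ 4 := by
    rw [← Finset.sum_fiberwise (s := Finset.univ) (g := f)]
    refine Finset.sum_congr rfl fun t _ => Finset.sum_congr rfl fun v hv => ?_
    simp at hv
    rw [hv]
  rw [h2]
  simp_rw [Finset.sum_const, nsmul_eq_mul]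
  calc _ ≤ ∑ t : ZMod n × ZMod n, (h.natAbs : ℝ) * ‖kloo n t.1 t.2‖ ^ 4 := by
        refine Finset.sum_le_sum fun t _ => ?_
        gcongr
        refine le_trans (Finset.card_le_card_of_injOn (fun v => ((v : (ZMod n)ˣ) : ZMod n)) ?_ ?_)
          (klo_fiber_int n h hh t.1)
        · intro v hv
          simp [f] at hv ⊢
          rw [← hv]
        · intro v _ w _ hvw
          exact Units.ext hvw
    _ ≤ _ := by
        rw [← Finset.mul_sum, Fintype.sum_prod_type]
        gcongr
        exact kloo_fourth n

lemma kloo_tendsto_aux (h k : ℤ) (hh : h ≠ 0) :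
    Tendsto (fun n : ℕ => kloo (n + 1) h k / ((n + 1).totient : ℂ)) atTop (𝓝 0) := by
  obtain ⟨C, hC⟩ := klo_divisor_bound
  rw [tendsto_zero_iff_norm_tendsto_zero]
  -- fourth power of the norm
  have key : ∀ n : ℕ, (‖kloo (n + 1) h k / ((n + 1).totient : ℂ)‖ ^ 4) ^ 8 ≤
      (h.natAbs * 2) ^ 8 * (C : ℝ) ^ 7 / (n + 1 : ℝ) := by
    intro n
    have h1 := kloo_bound (n + 1) h k hh
    have h2 : ((n + 1 : ℕ) : ℝ) ≤ ((n + 1).divisors.card : ℝ) * (n + 1).totient := by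
      exact_mod_cast klo_le_totient_mul (n + 1)
    have h3 : (((n + 1).divisors.card : ℝ)) ^ 8 ≤ C * ((n + 1 : ℕ) : ℝ) := by
      exact_mod_cast hC (n + 1) (by omega)
    have ht : (0 : ℝ) < (n + 1).totient := by exact_mod_cast Nat.totient_pos.2 (Nat.succ_pos n)
    rw [norm_div, Complex.norm_natCast]
    have hm : (0 : ℝ) < ((n + 1 : ℕ) : ℝ) := by positivity
    rw [show ((n : ℝ) + 1) = ((n + 1 : ℕ) : ℝ) by push_cast; rfl]
    have hd0 : (0 : ℝ) ≤ ((n + 1).divisors.card : ℝ) := by positivity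
    have hK0 : 0 ≤ ‖kloo (n + 1) h k‖ := norm_nonneg _
    have hH0 : (0 : ℝ) ≤ (h.natAbs : ℝ) := by positivity
    have hC0 : (0 : ℝ) ≤ (C : ℝ) := by positivity
    generalize ((n + 1 : ℕ) : ℝ) = m at *
    generalize (((n + 1).totient : ℕ) : ℝ) = t at *
    generalize (((n + 1).divisors.card : ℕ) : ℝ) = d at *
    generalize ‖kloo (n + 1) h k‖ = K at *
    generalize (h.natAbs : ℝ) = H at *
    generalize (C : ℝ) = C at *
    have a1 : (K / t) ^ 4 ≤ 2 * H * d ^ 7 / m := by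
      rw [div_pow, div_le_div_iff₀ (by positivity) hm]
      have a2 : m ^ 5 ≤ d ^ 5 * t ^ 5 := by
        rw [← mul_pow]; gcongr
      have a3 : K ^ 4 * m * (t * m ^ 4) ≤ 2 * H * d ^ 7 * t ^ 4 * (t * m ^ 4) := by
        calc K ^ 4 * m * (t * m ^ 4) = (t * K ^ 4) * m ^ 5 := by ring
          _ ≤ (H * (2 * m ^ 4 * d ^ 2)) * (d ^ 5 * t ^ 5) := by gcongr
          _ = _ := by ring
      exact le_of_mul_le_mul_right a3 (by positivity)
    calc ((K / t) ^ 4) ^ 8 ≤ (2 * H * d ^ 7 / m) ^ 8 := by gcongr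
      _ = (H * 2) ^ 8 * (d ^ 8) ^ 7 / m ^ 8 := by rw [div_pow]; ring
      _ ≤ (H * 2) ^ 8 * (C * m) ^ 7 / m ^ 8 := by gcongr
      _ = (H * 2) ^ 8 * C ^ 7 / m := by field_simp
  rw [Metric.tendsto_atTop]
  intro ε hε
  have h0 : Tendsto (fun n : ℕ => (h.natAbs * 2) ^ 8 * (C : ℝ) ^ 7 / (n + 1 : ℝ)) atTop (𝓝 0) :=
    tendsto_const_nhds.div_atTop (tendsto_atTop_add_const_right _ _ tendsto_natCast_atTop_atTop)
  have h1 := (h0.eventually (gt_mem_nhds (show (0 : ℝ) < (ε ^ 4) ^ 8 by positivity)))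
  obtain ⟨M, hM⟩ := eventually_atTop.1 h1
  refine ⟨M, fun n hn => ?_⟩
  rw [Real.dist_eq, sub_zero, abs_norm]
  have h2 := lt_of_pow_lt_pow_left₀ _ (by positivity) ((key n).trans_lt (hM n hn))
  exact lt_of_pow_lt_pow_left₀ _ hε.le h2

lemma kloo_tendsto (h k : ℤ) (hh : ¬ (h = 0 ∧ k = 0)) :
    Tendsto (fun n : ℕ => kloo (n + 1) h k / ((n + 1).totient : ℂ)) atTop (𝓝 0) := by
  by_cases h0 : h = 0
  · have hk : k ≠ 0 := fun hk => hh ⟨h0, hk⟩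
    have := kloo_tendsto_aux k h hk
    refine this.congr fun n => ?_
    rw [kloo_symm]
  · exact kloo_tendsto_aux h k h0


lemma eq_dense_tendsto {E : Type*} [NormedAddCommGroup E] [NormedSpace ℂ E]
    (T : ℕ → E →ₗ[ℂ] ℂ) (S : E →ₗ[ℂ] ℂ) (K : ℝ)
    (hT : ∀ n f, ‖T n f‖ ≤ K * ‖f‖) (hS : ∀ f, ‖S f‖ ≤ K * ‖f‖) (s : Set E)
    (hs : (Submodule.span ℂ s).topologicalClosure = ⊤)
    (h : ∀ f ∈ s, Tendsto (fun n => T n f) atTop (𝓝 (S f))) (f : E) :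
    Tendsto (fun n => T n f) atTop (𝓝 (S f)) := by
  have h1 : ∀ g ∈ Submodule.span ℂ s, Tendsto (fun n => T n g) atTop (𝓝 (S g)) := by
    intro g hg
    induction hg using Submodule.span_induction with
    | mem x hx => exact h x hx
    | zero => simp
    | add x y _ _ hx hy => simpa using hx.add hy
    | smul a x _ hx => simpa using hx.const_mul a
  have hf : f ∈ closure ((Submodule.span ℂ s : Submodule ℂ E) : Set E) := by
    have : f ∈ (Submodule.span ℂ s).topologicalClosure := by rw [hs]; trivial
    exact this
  rw [Metric.tendsto_atTop]
  intro ε hε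
  have hK : 0 ≤ |K| := abs_nonneg K
  obtain ⟨g, hg, hfg⟩ := Metric.mem_closure_iff.1 hf (ε / (3 * (|K| + 1))) (by positivity)
  obtain ⟨M, hM⟩ := Metric.tendsto_atTop.1 (h1 g hg) (ε / 3) (by positivity)
  refine ⟨M, fun n hn => ?_⟩
  have e1 := hT n (f - g)
  have e2 := hS (g - f)
  rw [map_sub] at e1 e2
  rw [dist_eq_norm] at hfg
  have e3 := hM n hn
  rw [dist_eq_norm] at e3 ⊢
  have e4 : K * ‖f - g‖ ≤ ε / 3 := by
    calc K * ‖f - g‖ ≤ (|K| + 1) * (ε / (3 * (|K| + 1))) := by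
          gcongr
          exact (le_abs_self K).trans (by linarith)
      _ = ε / 3 := by field_simp
  have e5 : ‖g - f‖ = ‖f - g‖ := norm_sub_rev _ _
  rw [e5] at e2
  have e6 : K * ‖f - g‖ < ε / 3 ∨ K * ‖f - g‖ = ε / 3 := lt_or_eq_of_le e4
  calc ‖T n f - S f‖ = ‖(T n f - T n g) + (T n g - S g) + (S g - S f)‖ := by congr 1; ring
    _ ≤ ‖T n f - T n g‖ + ‖T n g - S g‖ + ‖S g - S f‖ := norm_add₃_le
    _ < ε := by linarith

lemma eq_real_univ : (volume : Measure UnitAddCircle).real univ = 1 := by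
  simp [Measure.real, AddCircle.measure_univ]

lemma eq_integral_fourier (h : ℤ) : ∫ x : UnitAddCircle, fourier h x = if h = 0 then 1 else 0 := by
  split_ifs with h0
  · subst h0
    simp [eq_real_univ]
  · exact integral_eq_zero_of_add_right_eq_neg
      (fourier_add_half_inv_index (T := 1) h0 one_pos)

lemma eq_fourier_zmod (n : ℕ) [NeZero n] (h : ℤ) (j : ZMod n) :
    fourier h (ZMod.toAddCircle j) = ZMod.stdAddChar ((h : ZMod n) * j) := by
  rw [fourier_apply, ← map_zsmul, zsmul_eq_mul, ZMod.stdAddChar_apply]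
  rfl

/-- averages along the hyperbola `u * u' = 1` -/
noncomputable def hypAvg (n : ℕ) [NeZero n] (F G : UnitAddCircle → ℂ) : ℂ :=
  (∑ u : (ZMod n)ˣ, F (ZMod.toAddCircle (u : ZMod n)) *
    G (ZMod.toAddCircle ((u⁻¹ : (ZMod n)ˣ) : ZMod n))) / (n.totient : ℂ)

lemma eq_integral_norm_le (f : C(UnitAddCircle, ℂ)) : ‖∫ x, f x‖ ≤ ‖f‖ := by
  have := norm_integral_le_of_norm_le_const (μ := (volume : Measure UnitAddCircle)) (f := f) (C := ‖f‖)
    (ae_of_all _ fun x => f.norm_coe_le_norm x)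
  simpa [eq_real_univ] using this

lemma hypAvg_norm_le (n : ℕ) [NeZero n] (F G : C(UnitAddCircle, ℂ)) :
    ‖hypAvg n F G‖ ≤ ‖F‖ * ‖G‖ := by
  have ht : (0 : ℝ) < n.totient := by exact_mod_cast Nat.totient_pos.2 (NeZero.pos n)
  rw [hypAvg, norm_div, Complex.norm_natCast, div_le_iff₀ ht]
  refine (norm_sum_le _ _).trans ?_
  calc _ ≤ ∑ u : (ZMod n)ˣ, ‖F‖ * ‖G‖ := by
        refine Finset.sum_le_sum fun u _ => ?_
        rw [norm_mul]
        gcongr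
        · exact F.norm_coe_le_norm _
        · exact G.norm_coe_le_norm _
    _ = _ := by simp [ZMod.card_units_eq_totient, mul_comm]

noncomputable def intLin : C(UnitAddCircle, ℂ) →ₗ[ℂ] ℂ where
  toFun f := ∫ x, f x
  map_add' f g := by
    have hf : Integrable (fun x => f x) (volume : Measure UnitAddCircle) :=
      f.continuous.integrable_of_hasCompactSupport (HasCompactSupport.of_compactSpace _)
    have hg : Integrable (fun x => g x) (volume : Measure UnitAddCircle) :=
      g.continuous.integrable_of_hasCompactSupport (HasCompactSupport.of_compactSpace _)
    simpa using integral_add hf hg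
  map_smul' c f := by
    simp [integral_const_mul]

noncomputable def hypLin1 (n : ℕ) [NeZero n] (G : UnitAddCircle → ℂ) : C(UnitAddCircle, ℂ) →ₗ[ℂ] ℂ where
  toFun F := hypAvg n F G
  map_add' f g := by
    simp [hypAvg, add_mul, Finset.sum_add_distrib, add_div]
  map_smul' c f := by
    simp only [hypAvg, ContinuousMap.smul_apply, smul_eq_mul, mul_assoc, RingHom.id_apply]
    rw [← Finset.mul_sum, mul_div_assoc]

noncomputable def hypLin2 (n : ℕ) [NeZero n] (F : UnitAddCircle → ℂ) : C(UnitAddCircle, ℂ) →ₗ[ℂ] ℂ where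
  toFun G := hypAvg n F G
  map_add' f g := by
    simp [hypAvg, mul_add, Finset.sum_add_distrib, add_div]
  map_smul' c f := by
    simp only [hypAvg, ContinuousMap.smul_apply, smul_eq_mul, mul_left_comm _ c, RingHom.id_apply]
    rw [← Finset.mul_sum, mul_div_assoc]

lemma hypAvg_fourier (h k : ℤ) :
    Tendsto (fun n : ℕ => hypAvg (n + 1) (fourier h) (fourier k)) atTop
      (𝓝 ((∫ x : UnitAddCircle, fourier h x) * ∫ x : UnitAddCircle, fourier k x)) := by
  have e : ∀ n : ℕ, hypAvg (n + 1) (fourier h) (fourier k) =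
      kloo (n + 1) h k / ((n + 1).totient : ℂ) := by
    intro n
    rw [hypAvg, kloo]
    congr 1
    refine Finset.sum_congr rfl fun u _ => ?_
    rw [eq_fourier_zmod, eq_fourier_zmod, AddChar.map_add_eq_mul]
  simp_rw [e, eq_integral_fourier]
  by_cases hh : h = 0 ∧ k = 0
  · obtain ⟨rfl, rfl⟩ := hh
    simp only [if_true, mul_one]
    refine tendsto_const_nhds.congr fun n => ?_
    have ht : ((n + 1).totient : ℂ) ≠ 0 := by
      exact_mod_cast (Nat.totient_pos.2 (Nat.succ_pos n)).ne'
    rw [kloo]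
    simp [ZMod.card_units_eq_totient, ht]
  · have : (if h = 0 then (1 : ℂ) else 0) * (if k = 0 then (1 : ℂ) else 0) = 0 := by
      by_cases h0 : h = 0
      · have : k ≠ 0 := fun hk => hh ⟨h0, hk⟩
        simp [this]
      · simp [h0]
    rw [this]
    exact kloo_tendsto h k hh

lemma hypAvg_tendsto (F G : C(UnitAddCircle, ℂ)) :
    Tendsto (fun n : ℕ => hypAvg (n + 1) F G) atTop (𝓝 ((∫ x, F x) * ∫ x, G x)) := by
  have step1 : ∀ k : ℤ, ∀ F : C(UnitAddCircle, ℂ),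
      Tendsto (fun n : ℕ => hypAvg (n + 1) F (fourier k)) atTop
      (𝓝 ((∫ x, F x) * ∫ x : UnitAddCircle, fourier k x)) := by
    intro k F
    have hk : ‖∫ x : UnitAddCircle, fourier k x‖ ≤ ‖(fourier k : C(UnitAddCircle, ℂ))‖ := eq_integral_norm_le _
    have := eq_dense_tendsto (fun n : ℕ => hypLin1 (n + 1) (fourier k))
      ((∫ x : UnitAddCircle, fourier k x) • intLin) ‖(fourier k : C(UnitAddCircle, ℂ))‖
      (fun n f => by rw [mul_comm]; exact hypAvg_norm_le _ _ _)
      (fun f => by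
        rw [LinearMap.smul_apply, norm_smul]
        gcongr
        exact eq_integral_norm_le f)
      (range fourier) span_fourier_closure_eq_top (by
        rintro _ ⟨h, rfl⟩
        rw [LinearMap.smul_apply, smul_eq_mul, mul_comm]
        exact hypAvg_fourier h k) F
    rw [LinearMap.smul_apply, smul_eq_mul, mul_comm] at this
    exact this
  have := eq_dense_tendsto (fun n : ℕ => hypLin2 (n + 1) F)
      ((∫ x : UnitAddCircle, F x) • intLin) ‖F‖
      (fun n f => hypAvg_norm_le _ _ _)
      (fun f => by
        rw [LinearMap.smul_apply, norm_smul]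
        gcongr
        · exact eq_integral_norm_le F
        · exact eq_integral_norm_le f)
      (range fourier) span_fourier_closure_eq_top (by
        rintro _ ⟨k, rfl⟩
        exact step1 k F) G
  exact this


/-- real averages along the modular hyperbola -/
noncomputable def hypR (n : ℕ) [NeZero n] (F G : ℝ → ℝ) : ℝ :=
  (∑ u : (ZMod n)ˣ, F (((u : ZMod n).val : ℝ) / n) *
    G ((((u⁻¹ : (ZMod n)ˣ) : ZMod n).val : ℝ) / n)) / (n.totient : ℝ)

lemma hyp_val_mem (n : ℕ) [NeZero n] (u : ZMod n) : ((u.val : ℝ) / n) ∈ Ico (0 : ℝ) 1 := by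
  have hn : (0 : ℝ) < n := by exact_mod_cast NeZero.pos n
  refine ⟨by positivity, ?_⟩
  rw [div_lt_one hn]
  exact_mod_cast ZMod.val_lt u

lemma hyp_lift_integral (F : ℝ → ℝ) :
    ∫ x : UnitAddCircle, AddCircle.liftIco (1 : ℝ) 0 (fun x => (F x : ℂ)) x =
      ((∫ x in (0 : ℝ)..1, F x : ℝ) : ℂ) := by
  rw [← UnitAddCircle.intervalIntegral_preimage 0, ← intervalIntegral.integral_ofReal]
  simp only [zero_add]
  refine intervalIntegral.integral_congr_ae ?_
  have : ∀ᵐ x : ℝ, x ≠ 1 := by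
    simp [ae_iff]
  filter_upwards [this] with x hx1 hx
  rw [uIoc_of_le zero_le_one] at hx
  exact AddCircle.liftIco_zero_coe_apply (p := (1 : ℝ)) ⟨hx.1.le, lt_of_le_of_ne hx.2 hx1⟩

lemma hypR_tendsto_periodic (F G : ℝ → ℝ) (hF : ContinuousOn F (Icc 0 1))
    (hG : ContinuousOn G (Icc 0 1)) (hF1 : F 0 = F 1) (hG1 : G 0 = G 1) :
    Tendsto (fun n : ℕ => hypR (n + 1) F G) atTop
      (𝓝 ((∫ x in (0 : ℝ)..1, F x) * ∫ x in (0 : ℝ)..1, G x)) := by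
  have c : ∀ F : ℝ → ℝ, ContinuousOn F (Icc 0 1) → F 0 = F 1 →
      Continuous (AddCircle.liftIco (1 : ℝ) 0 (fun x => (F x : ℂ))) := by
    intro F hF hF1
    refine AddCircle.liftIco_zero_continuous (by rw [hF1]) ?_
    exact Complex.continuous_ofReal.comp_continuousOn hF
  have := hypAvg_tendsto ⟨_, c F hF hF1⟩ ⟨_, c G hG hG1⟩
  simp only [ContinuousMap.coe_mk] at this
  rw [hyp_lift_integral, hyp_lift_integral, ← Complex.ofReal_mul] at this
  have h2 := (Complex.continuous_re.tendsto _).comp this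
  rw [Complex.ofReal_re] at h2
  refine h2.congr fun n => ?_
  have : hypAvg (n + 1) (AddCircle.liftIco (1 : ℝ) 0 (fun x => (F x : ℂ)))
      (AddCircle.liftIco (1 : ℝ) 0 (fun x => (G x : ℂ))) = ((hypR (n + 1) F G : ℝ) : ℂ) := by
    rw [hypAvg, hypR]
    push_cast
    congr 1
    refine Finset.sum_congr rfl fun u _ => ?_
    have k : ∀ (F : ℝ → ℝ) (u : ZMod (n + 1)),
        AddCircle.liftIco (1 : ℝ) 0 (fun x => (F x : ℂ)) (ZMod.toAddCircle u) =
          (F ((u.val : ℝ) / ((n : ℝ) + 1)) : ℂ) := by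
      intro F u
      rw [ZMod.toAddCircle_apply]
      have := AddCircle.liftIco_zero_coe_apply (p := (1 : ℝ)) (f := fun x => (F x : ℂ))
        (hyp_val_mem (n + 1) u)
      rw [this]
      simp
    rw [k, k]
  simp only [Function.comp]
  rw [this, Complex.ofReal_re]

lemma hypR_id (n : ℕ) [NeZero n] (hn : 2 ≤ n) (G : ℝ → ℝ) (hG : ∀ w ∈ Icc (0 : ℝ) 1, G (1 - w) = G w) :
    hypR n (fun u => u) G = 1 / 2 * hypR n (fun _ => 1) G := by
  have hn0 : (n : ℝ) ≠ 0 := by positivity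
  have : Fact (1 < n) := ⟨hn⟩
  have key : ∀ u : (ZMod n)ˣ, (((-u : (ZMod n)ˣ) : ZMod n).val : ℝ) / n = 1 - ((u : ZMod n).val : ℝ) / n := by
    intro u
    rw [Units.val_neg, ZMod.neg_val, if_neg (Units.ne_zero u), Nat.cast_sub (ZMod.val_lt _).le]
    field_simp
  have e : ∑ u : (ZMod n)ˣ, (((u : ZMod n).val : ℝ) / n) *
    G ((((u⁻¹ : (ZMod n)ˣ) : ZMod n).val : ℝ) / n) = ∑ u : (ZMod n)ˣ, (1 - ((u : ZMod n).val : ℝ) / n) *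
    G ((((u⁻¹ : (ZMod n)ˣ) : ZMod n).val : ℝ) / n) := by
    rw [← Equiv.sum_comp (Equiv.neg (ZMod n)ˣ)]
    refine Finset.sum_congr rfl fun u _ => ?_
    have h := hyp_val_mem n ((u⁻¹ : (ZMod n)ˣ) : ZMod n)
    rw [Equiv.neg_apply, key, inv_neg, key, hG _ ⟨h.1, h.2.le⟩]
  have e2 : 2 * ∑ u : (ZMod n)ˣ, (((u : ZMod n).val : ℝ) / n) *
    G ((((u⁻¹ : (ZMod n)ˣ) : ZMod n).val : ℝ) / n) = ∑ u : (ZMod n)ˣ,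
    G ((((u⁻¹ : (ZMod n)ˣ) : ZMod n).val : ℝ) / n) := by
    rw [two_mul]
    nth_rw 2 [e]
    rw [← Finset.sum_add_distrib]
    refine Finset.sum_congr rfl fun u _ => ?_
    ring
  simp only [hypR, one_mul]
  rw [← e2]
  ring

lemma hypR_tendsto (F G : ℝ → ℝ) (hF : ContinuousOn F (Icc 0 1))
    (hG : ContinuousOn G (Icc 0 1)) (hG1 : ∀ w ∈ Icc (0 : ℝ) 1, G (1 - w) = G w) :
    Tendsto (fun n : ℕ => hypR (n + 1) F G) atTop
      (𝓝 ((∫ x in (0 : ℝ)..1, F x) * ∫ x in (0 : ℝ)..1, G x)) := by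
  have g01 : G 0 = G 1 := by simpa using hG1 1 (by simp)
  set d := F 1 - F 0 with hd
  have c0 : ContinuousOn (fun x => F x - d * x) (Icc 0 1) := by fun_prop
  have h1 := hypR_tendsto_periodic (fun x => F x - d * x) G c0 hG (by simp [d]) g01
  have h2 := hypR_tendsto_periodic (fun _ => 1) G (by fun_prop) hG rfl g01
  have h3 := h1.add (h2.const_mul (d * (1 / 2)))
  have e : (∫ x in (0 : ℝ)..1, F x - d * x) = (∫ x in (0 : ℝ)..1, F x) - d * (1 / 2) := by
    rw [intervalIntegral.integral_sub, intervalIntegral.integral_const_mul, integral_id]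
    · norm_num
    · exact ContinuousOn.intervalIntegrable (by rwa [uIcc_of_le zero_le_one])
    · exact Continuous.intervalIntegrable (by fun_prop) _ _
  rw [e] at h3
  have e4 : ((∫ x in (0 : ℝ)..1, F x) - d * (1 / 2)) * (∫ x in (0 : ℝ)..1, G x) +
    d * (1 / 2) * ((∫ x in (0 : ℝ)..1, (1 : ℝ)) * ∫ x in (0 : ℝ)..1, G x) =
    (∫ x in (0 : ℝ)..1, F x) * ∫ x in (0 : ℝ)..1, G x := by
    rw [intervalIntegral.integral_const]
    simp
    ring
  rw [e4] at h3
  refine h3.congr' ?_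
  filter_upwards [eventually_ge_atTop 1] with n hn
  have := hypR_id (n + 1) (by omega) G hG1
  rw [mul_assoc, ← this]
  simp only [hypR]
  rw [← mul_div_assoc, ← add_div, Finset.mul_sum, ← Finset.sum_add_distrib]
  congr 1
  refine Finset.sum_congr rfl fun u _ => ?_
  ring


/-- Gauss density -/
noncomputable def gd (x : ℝ) : ℝ := 1 / (Real.log 2 * (1 + x))

/-- symmetrised Gauss density -/
noncomputable def gdS (w : ℝ) : ℝ := gd w + gd (1 - w)

lemma gm_log2 : 0 < Real.log 2 := Real.log_pos (by norm_num)

lemma gd_continuousOn : ContinuousOn gd (Icc 0 1) := by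
  unfold gd
  refine ContinuousOn.div (by fun_prop) (by fun_prop) fun x hx => ?_
  have := gm_log2
  have := hx.1
  positivity

lemma gd_pos {x : ℝ} (hx : 0 ≤ x) : 0 < gd x := by
  have := gm_log2
  unfold gd
  positivity

lemma gd_measurable : Measurable gd := by
  unfold gd
  fun_prop

lemma gdS_symm (w : ℝ) : gdS (1 - w) = gdS w := by
  simp [gdS, add_comm]

lemma gdS_continuousOn : ContinuousOn gdS (Icc 0 1) := by
  unfold gdS
  refine gd_continuousOn.add (gd_continuousOn.comp (by fun_prop) ?_)
  intro x hx
  exact ⟨by linarith [hx.2], by linarith [hx.1]⟩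

lemma gdS_nonneg {w : ℝ} (hw : w ∈ Icc (0 : ℝ) 1) : 0 ≤ gdS w :=
  add_nonneg (gd_pos hw.1).le (gd_pos (by linarith [hw.2])).le

lemma gd_integral : ∫ x in (0 : ℝ)..1, gd x = 1 := by
  have h : ∀ x : ℝ, gd x = (Real.log 2)⁻¹ * (x + 1)⁻¹ := by
    intro x
    rw [gd, one_div, mul_inv, add_comm]
  simp_rw [h]
  rw [intervalIntegral.integral_const_mul,
    intervalIntegral.integral_comp_add_right (fun x => x⁻¹), integral_inv_of_pos (by norm_num) (by norm_num)]
  have := gm_log2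
  norm_num

lemma gdS_integral : ∫ x in (0 : ℝ)..1, gdS x = 2 := by
  unfold gdS
  rw [intervalIntegral.integral_add]
  · have := intervalIntegral.integral_comp_sub_left gd (a := 0) (b := 1) 1
    rw [this]
    simp only [sub_self, sub_zero, gd_integral]
    norm_num
  · exact ContinuousOn.intervalIntegrable (by rw [uIcc_of_le zero_le_one]; exact gd_continuousOn)
  · refine ContinuousOn.intervalIntegrable ?_
    rw [uIcc_of_le zero_le_one]
    refine gd_continuousOn.comp (by fun_prop) ?_
    intro x hx
    exact ⟨by linarith [hx.2], by linarith [hx.1]⟩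

lemma gm_def : gaussMeasure =
    (volume.restrict (Ioo (0 : ℝ) 1)).withDensity fun x => ENNReal.ofReal (gd x) := rfl

lemma gm_apply (s : Set ℝ) (hs : MeasurableSet s) :
    gaussMeasure s = ∫⁻ x in s ∩ Ioo 0 1, ENNReal.ofReal (gd x) := by
  rw [gm_def, withDensity_apply _ hs, Measure.restrict_restrict hs]

lemma gm_integral (f : ℝ → ℝ) : ∫ x, f x ∂gaussMeasure = ∫ x in Ioo (0 : ℝ) 1, gd x * f x := by
  rw [gm_def, integral_withDensity_eq_integral_toReal_smul (by have := gd_measurable; fun_prop)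
    (ae_of_all _ fun x => ENNReal.ofReal_lt_top)]
  refine setIntegral_congr_fun measurableSet_Ioo fun x hx => ?_
  simp only [smul_eq_mul]
  rw [ENNReal.toReal_ofReal (gd_pos hx.1.le).le]

lemma gd_integrableOn : IntegrableOn gd (Ioo 0 1) :=
  (gd_continuousOn.integrableOn_compact isCompact_Icc).mono_set Ioo_subset_Icc_self

instance gm_prob : IsProbabilityMeasure gaussMeasure := by
  constructor
  rw [gm_apply _ MeasurableSet.univ, univ_inter, ← ofReal_integral_eq_lintegral_ofReal gd_integrableOn,
    ← integral_Ioc_eq_integral_Ioo, ← intervalIntegral.integral_of_le zero_le_one, gd_integral, ENNReal.ofReal_one]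
  refine (ae_restrict_iff' measurableSet_Ioo).2 (ae_of_all _ fun x hx => (gd_pos hx.1.le).le)

lemma gm_ac : gaussMeasure ≪ volume := by
  rw [gm_def]
  exact (withDensity_absolutelyContinuous _ _).trans Measure.restrict_le_self.absolutelyContinuous

instance gm_noAtoms : NullSingletonClass gaussMeasure := ⟨fun x => gm_ac (by simp)⟩

lemma fm_tendsto (μs : ℕ → FiniteMeasure ℝ) (μ : FiniteMeasure ℝ) (h : Tendsto μs atTop (𝓝 μ))
    (h0 : μ ≠ 0) (A : Set ℝ) (hA : (μ : Measure ℝ) (frontier A) = 0) :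
    Tendsto (fun n => (μs n A : ℝ)) atTop (𝓝 (μ A : ℝ)) := by
  have h1 := FiniteMeasure.tendsto_normalize_of_tendsto h h0
  have hm : μ.mass ≠ 0 := by rwa [μ.mass_nonzero_iff]
  have h2 : μ.normalize (frontier A) = 0 := by
    have := μ.self_eq_mass_mul_normalize (frontier A)
    have h3 : μ (frontier A) = 0 := by
      rw [FiniteMeasure.coeFn_def]
      simp [hA]
    rw [h3] at this
    rcases mul_eq_zero.1 this.symm with h | h
    · exact absurd h hm
    · exact h
  have h4 := ProbabilityMeasure.tendsto_measure_of_null_frontier_of_tendsto h1 h2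
  have h5 := h.mass.mul h4
  simp_rw [← FiniteMeasure.self_eq_mass_mul_normalize] at h5
  exact (NNReal.tendsto_coe).2 h5

/-- weight on the modular hyperbola -/
noncomputable def hypW (n : ℕ) [NeZero n] (u : (ZMod n)ˣ) : ℝ :=
  1 / (1 + ((u : ZMod n).val : ℝ) / n) * gdS ((((u⁻¹ : (ZMod n)ˣ) : ZMod n).val : ℝ) / n) / n.totient

lemma hypW_nonneg (n : ℕ) [NeZero n] (u : (ZMod n)ˣ) : 0 ≤ hypW n u := by
  have h := hyp_val_mem n (u : ZMod n)
  have h' := hyp_val_mem n ((u⁻¹ : (ZMod n)ˣ) : ZMod n)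
  have := gdS_nonneg ⟨h'.1, h'.2.le⟩
  unfold hypW
  have := h.1
  positivity

noncomputable def hypM (n : ℕ) [NeZero n] : Measure ℝ :=
  ∑ u : (ZMod n)ˣ, ENNReal.ofReal (hypW n u) • Measure.dirac (((u : ZMod n).val : ℝ) / n)

instance hypM_fin (n : ℕ) [NeZero n] : IsFiniteMeasure (hypM n) := by
  constructor
  rw [hypM, Measure.finsetSum_apply]
  exact ENNReal.sum_lt_top.2 fun u _ => by simp

lemma hypM_apply (n : ℕ) [NeZero n] (A : Set ℝ) (hA : MeasurableSet A) :
    (hypM n A).toReal = hypR n (A.indicator fun u => 1 / (1 + u)) gdS := by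
  rw [hypM, Measure.finsetSum_apply, ENNReal.toReal_sum (by intro u _; simp [hA]; exact ENNReal.mul_ne_top ENNReal.ofReal_ne_top (by unfold Set.indicator; split_ifs <;> simp)), hypR, Finset.sum_div]
  refine Finset.sum_congr rfl fun u _ => ?_
  rw [Measure.smul_apply, Measure.dirac_apply' _ hA, smul_eq_mul, ENNReal.toReal_mul,
    ENNReal.toReal_ofReal (hypW_nonneg n u), hypW]
  unfold Set.indicator
  split_ifs <;> simp

lemma hypM_integral (n : ℕ) [NeZero n] (f : ℝ → ℝ) (hf : Continuous f) :
    ∫ x, f x ∂hypM n = hypR n (fun u => f u * (1 / (1 + u))) gdS := by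
  rw [hypM, integral_finsetSum_measure, hypR, Finset.sum_div]
  · refine Finset.sum_congr rfl fun u _ => ?_
    rw [integral_smul_measure, integral_dirac, ENNReal.toReal_ofReal (hypW_nonneg n u), hypW, smul_eq_mul]
    ring
  · intro u _
    exact (integrable_dirac (by simp)).smul_measure ENNReal.ofReal_ne_top

lemma hypR_tendsto_set (A : Set ℝ) (hA : MeasurableSet A) (hA0 : gaussMeasure (frontier A) = 0) :
    Tendsto (fun n : ℕ => hypR (n + 1) (A.indicator fun u => 1 / (1 + u)) gdS) atTop
      (𝓝 (2 * Real.log 2 * (gaussMeasure A).toReal)) := by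
  have hl := gm_log2
  let ν : Measure ℝ := ENNReal.ofReal (2 * Real.log 2) • gaussMeasure
  have hν : IsFiniteMeasure ν := ⟨by simp [ν, ENNReal.mul_lt_top]⟩
  let μs : ℕ → FiniteMeasure ℝ := fun n => ⟨hypM (n + 1), hypM_fin _⟩
  let μ : FiniteMeasure ℝ := ⟨ν, hν⟩
  have h0 : μ ≠ 0 := by
    intro h
    have : ν univ = 0 := by
      have h2 : (μ : Measure ℝ) univ = 0 := by rw [h]; simp
      exact h2
    simp [ν] at this
    linarith
  have h := fm_tendsto μs μ ?_ h0 A ?_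
  · have e : ((μ A : NNReal) : ℝ) = 2 * Real.log 2 * (gaussMeasure A).toReal := by
      change (ν A).toReal = _
      simp only [ν, Measure.smul_apply, smul_eq_mul, ENNReal.toReal_mul]
      rw [ENNReal.toReal_ofReal (by positivity)]
    rw [e] at h
    refine h.congr fun n => ?_
    rw [← hypM_apply _ A hA]
    rfl
  · rw [FiniteMeasure.tendsto_iff_forall_integral_tendsto]
    intro f
    have h1 := hypR_tendsto (fun u => f u * (1 / (1 + u))) gdS (by
      refine ContinuousOn.mul f.continuous.continuousOn ?_
      refine ContinuousOn.div (by fun_prop) (by fun_prop) fun x hx => ?_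
      have := hx.1
      positivity) gdS_continuousOn (fun w _ => gdS_symm w)
    have e : ∫ x, f x ∂(μ : Measure ℝ) = (∫ x in (0 : ℝ)..1, f x * (1 / (1 + x))) * ∫ x in (0 : ℝ)..1, gdS x := by
      change ∫ x, f x ∂ν = _
      simp only [ν]
      rw [integral_smul_measure, gm_integral, gdS_integral, intervalIntegral.integral_of_le zero_le_one,
        integral_Ioc_eq_integral_Ioo, ENNReal.toReal_ofReal (by positivity), smul_eq_mul,
        ← integral_const_mul, ← integral_mul_const]
      refine setIntegral_congr_fun measurableSet_Ioo fun x hx => ?_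
      have := hx.1
      simp only [gd]
      field_simp
    rw [e]
    refine h1.congr fun n => ?_
    rw [← hypM_integral _ _ f.continuous]
    rfl
  · change ν (frontier A) = 0
    simp [ν, hA0]


/-- cylinder set in the first `N` partial quotients -/
def Cset (N : ℕ) (c : Fin N → ℕ) : Set ℝ := {u | ∀ k : Fin N, pq u (k + 1) = c k}

lemma gaussMap_measurable : Measurable gaussMap := by
  unfold gaussMap
  exact measurable_fract.comp (by fun_prop)

lemma pq_measurable (n : ℕ) : Measurable fun u => pq u n := by
  unfold pq
  exact Nat.measurable_floor.comp ((measurable_const).div (gaussMap_measurable.iterate _))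

lemma Cset_measurable (N : ℕ) (c : Fin N → ℕ) : MeasurableSet (Cset N c) := by
  have : Cset N c = ⋂ k : Fin N, (fun u => pq u (k + 1)) ⁻¹' {c k} := by
    ext u; simp [Cset]
  rw [this]
  exact MeasurableSet.iInter fun k => pq_measurable _ (measurableSet_singleton _)

lemma irr_one_div {x : ℝ} (hx : Irrational x) : Irrational (1 / x) := by
  rw [one_div]; exact hx.inv

lemma gaussMap_irr {x : ℝ} (hx : Irrational x) : Irrational (gaussMap x) := by
  unfold gaussMap
  rw [Int.fract]
  exact (irr_one_div hx).sub_intCast _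

lemma gaussMap_iter_irr {x : ℝ} (hx : Irrational x) (k : ℕ) : Irrational (gaussMap^[k] x) := by
  induction k with
  | zero => exact hx
  | succ k ih => rw [Function.iterate_succ_apply']; exact gaussMap_irr ih

lemma floor_eventually {y : ℝ} (hy : Irrational y) : ∀ᶠ z in 𝓝 y, ⌊z⌋ = ⌊y⌋ := by
  have h1 : (⌊y⌋ : ℝ) < y := lt_of_le_of_ne (Int.floor_le y) (fun h => hy.ne_int ⌊y⌋ h.symm)
  have h2 : y < ⌊y⌋ + 1 := Int.lt_floor_add_one y
  filter_upwards [Ioo_mem_nhds h1 h2] with z hz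
  exact Int.floor_eq_iff.2 ⟨hz.1.le, hz.2⟩

lemma nfloor_eventually {y : ℝ} (hy : Irrational y) : ∀ᶠ z in 𝓝 y, ⌊z⌋₊ = ⌊y⌋₊ := by
  filter_upwards [floor_eventually hy] with z hz
  rw [← Int.floor_toNat, ← Int.floor_toNat, hz]

lemma gaussMap_contAt {x : ℝ} (hx : Irrational x) : ContinuousAt gaussMap x := by
  have h0 : x ≠ 0 := hx.ne_zero
  have c1 : ContinuousAt (fun x : ℝ => 1 / x) x := by
    exact continuousAt_const.div continuousAt_id h0
  have h1 := c1.eventually (floor_eventually (irr_one_div hx))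
  have c2 : ContinuousAt (fun z : ℝ => 1 / z - (⌊1 / x⌋ : ℝ)) x := c1.sub continuousAt_const
  refine c2.congr ?_
  filter_upwards [h1] with z hz
  rw [gaussMap, Int.fract, hz]

lemma gaussMap_iter_contAt {x : ℝ} (hx : Irrational x) (k : ℕ) : ContinuousAt (gaussMap^[k]) x := by
  induction k with
  | zero => exact continuousAt_id
  | succ k ih =>
    rw [Function.iterate_succ']
    exact ContinuousAt.comp (gaussMap_contAt (gaussMap_iter_irr hx k)) ih

lemma pq_eventually {x : ℝ} (hx : Irrational x) (n : ℕ) : ∀ᶠ z in 𝓝 x, pq z n = pq x n := by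
  have h := gaussMap_iter_contAt hx (n - 1)
  have hi := gaussMap_iter_irr hx (n - 1)
  have c1 : ContinuousAt (fun z : ℝ => 1 / gaussMap^[n - 1] z) x :=
    continuousAt_const.div h hi.ne_zero
  exact c1.eventually (nfloor_eventually (irr_one_div hi))

lemma Cset_frontier (N : ℕ) (c : Fin N → ℕ) (s : ℝ) :
    gaussMeasure (frontier (Cset N c ∩ Iic s)) = 0 := by
  have hsub : frontier (Cset N c ∩ Iic s) ⊆ range ((↑) : ℚ → ℝ) ∪ {s} := by
    intro u hu
    by_contra hcon
    simp only [mem_union, mem_singleton_iff, not_or] at hcon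
    have hirr : Irrational u := hcon.1
    have hev : ∀ᶠ z in 𝓝 u, ∀ k : Fin N, pq z (k + 1) = pq u (k + 1) :=
      eventually_all.2 fun k => pq_eventually hirr _
    have hev2 : ∀ᶠ z in 𝓝 u, (z ≤ s ↔ u ≤ s) := by
      rcases lt_or_gt_of_ne hcon.2 with h | h
      · filter_upwards [Iio_mem_nhds h] with z hz
        exact ⟨fun _ => h.le, fun _ => le_of_lt hz⟩
      · filter_upwards [Ioi_mem_nhds h] with z hz
        exact ⟨fun h' => absurd h' (not_le.2 hz), fun h' => absurd h' (not_le.2 h)⟩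
    have hev3 : ∀ᶠ z in 𝓝 u, (z ∈ Cset N c ∩ Iic s ↔ u ∈ Cset N c ∩ Iic s) := by
      filter_upwards [hev, hev2] with z h1 h2
      simp only [Cset, mem_inter_iff, mem_setOf_eq, mem_Iic, h2, h1]
    rw [frontier_eq_closure_inter_closure] at hu
    by_cases hm : u ∈ Cset N c ∩ Iic s
    · have := mem_closure_iff_frequently.1 hu.2
      obtain ⟨z, hz, hz2⟩ := (this.and_eventually hev3).exists
      exact hz (hz2.2 hm)
    · have := mem_closure_iff_frequently.1 hu.1
      obtain ⟨z, hz, hz2⟩ := (this.and_eventually hev3).exists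
      exact hm (hz2.1 hz)
  refine measure_mono_null hsub ?_
  exact ((countable_range _).union (countable_singleton s)).measure_zero _

/-- The weighted counting function -/
noncomputable def Psi (N : ℕ) (c : Fin N → ℕ) (n : ℕ) [NeZero n] (s : ℝ) : ℝ :=
  hypR n ((Cset N c ∩ Iic s).indicator fun u => 1 / (1 + u)) gdS

/-- limit of the counting function -/
noncomputable def HH (N : ℕ) (c : Fin N → ℕ) (s : ℝ) : ℝ :=
  2 * Real.log 2 * (gaussMeasure (Cset N c ∩ Iic s)).toReal

lemma Psi_tendsto (N : ℕ) (c : Fin N → ℕ) (s : ℝ) :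
    Tendsto (fun n : ℕ => Psi N c (n + 1) s) atTop (𝓝 (HH N c s)) :=
  hypR_tendsto_set _ ((Cset_measurable N c).inter measurableSet_Iic) (Cset_frontier N c s)

lemma Psi_mono (N : ℕ) (c : Fin N → ℕ) (n : ℕ) [NeZero n] : Monotone (Psi N c n) := by
  intro s t hst
  unfold Psi
  rw [← hypM_apply _ _ ((Cset_measurable N c).inter measurableSet_Iic),
    ← hypM_apply _ _ ((Cset_measurable N c).inter measurableSet_Iic)]
  refine ENNReal.toReal_mono (measure_ne_top _ _) (measure_mono ?_)
  exact inter_subset_inter_right _ (Iic_subset_Iic.2 hst)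

lemma HH_mono (N : ℕ) (c : Fin N → ℕ) : Monotone (HH N c) := by
  intro s t hst
  have := gm_log2
  unfold HH
  gcongr
  exact measure_ne_top _ _

lemma gm_Ioc_le (s t : ℝ) (hst : s ≤ t) : (gaussMeasure (Ioc s t)).toReal ≤ (t - s) / Real.log 2 := by
  have hl := gm_log2
  refine ENNReal.toReal_le_of_le_ofReal (div_nonneg (by linarith) hl.le) ?_
  rw [gm_apply _ measurableSet_Ioc]
  calc ∫⁻ x in Ioc s t ∩ Ioo 0 1, ENNReal.ofReal (gd x) ≤
      ∫⁻ x in Ioc s t ∩ Ioo 0 1, ENNReal.ofReal (1 / Real.log 2) := by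
        refine setLIntegral_mono measurable_const fun x hx => ENNReal.ofReal_le_ofReal ?_
        have := hx.2.1
        unfold gd
        rw [mul_comm]
        gcongr
        nlinarith
    _ = ENNReal.ofReal (1 / Real.log 2) * volume (Ioc s t ∩ Ioo 0 1) := by rw [setLIntegral_const]
    _ ≤ ENNReal.ofReal (1 / Real.log 2) * volume (Ioc s t) := by gcongr; exact inter_subset_left
    _ = _ := by
      rw [Real.volume_Ioc, ← ENNReal.ofReal_mul (by positivity)]
      congr 1
      ring

lemma HH_lip (N : ℕ) (c : Fin N → ℕ) (s t : ℝ) (hst : s ≤ t) : HH N c t - HH N c s ≤ 2 * (t - s) := by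
  have hl := gm_log2
  have h1 : gaussMeasure (Cset N c ∩ Iic t) ≤ gaussMeasure (Cset N c ∩ Iic s) + gaussMeasure (Ioc s t) := by
    refine (measure_mono ?_).trans (measure_union_le _ _)
    rintro u ⟨hu, hut⟩
    by_cases h : u ≤ s
    · exact Or.inl ⟨hu, h⟩
    · exact Or.inr ⟨not_le.1 h, hut⟩
  have h2 := ENNReal.toReal_mono (by finiteness) h1
  rw [ENNReal.toReal_add (by finiteness) (by finiteness)] at h2
  have h3 := gm_Ioc_le s t hst
  unfold HH
  have h4 : (gaussMeasure (Cset N c ∩ Iic t)).toReal - (gaussMeasure (Cset N c ∩ Iic s)).toReal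
     ≤ (t - s) / Real.log 2 := by linarith
  calc _ = 2 * Real.log 2 * ((gaussMeasure (Cset N c ∩ Iic t)).toReal - (gaussMeasure (Cset N c ∩ Iic s)).toReal) := by ring
    _ ≤ 2 * Real.log 2 * ((t - s) / Real.log 2) := by gcongr
    _ = _ := by field_simp

lemma polya (f : ℕ → ℝ → ℝ) (H : ℝ → ℝ) (hf : ∀ n, Monotone (f n)) (hH : Monotone H)
    (hL : ∀ s t, s ≤ t → H t - H s ≤ 2 * (t - s))
    (h : ∀ s, Tendsto (fun n => f n s) atTop (𝓝 (H s))) (ε : ℝ) (hε : 0 < ε) :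
    ∀ᶠ n in atTop, ∀ s ∈ Icc (0 : ℝ) 1, |f n s - H s| ≤ ε := by
  obtain ⟨M, hM⟩ := exists_nat_gt (4 / ε)
  have hM0 : (0 : ℝ) < M := lt_trans (by positivity) hM
  have hM' : 2 * (1 / (M : ℝ)) ≤ ε / 2 := by
    rw [div_lt_iff₀ hε] at hM
    rw [mul_one_div, div_le_iff₀ hM0]
    linarith
  have hev : ∀ᶠ n in atTop, ∀ i ∈ Finset.range (M + 2), |f n ((i : ℝ) / M) - H ((i : ℝ) / M)| < ε / 2 := by
    rw [Filter.eventually_all_finset]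
    intro i _
    have := Metric.tendsto_nhds.1 (h ((i : ℝ) / M)) (ε / 2) (by positivity)
    simpa [Real.dist_eq] using this
  filter_upwards [hev] with n hn s hs
  set i := ⌊s * M⌋₊ with hi
  have h1 : (i : ℝ) ≤ s * M := Nat.floor_le (by have := hs.1; positivity)
  have h2 : s * M < i + 1 := Nat.lt_floor_add_one _
  have h3 : i ≤ M := by
    have : (i : ℝ) ≤ M := h1.trans (by nlinarith [hs.2])
    exact_mod_cast this
  have e1 := abs_lt.1 (hn i (Finset.mem_range.2 (by omega)))
  have e2 := abs_lt.1 (hn (i + 1) (Finset.mem_range.2 (by omega)))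
  have k1 : (i : ℝ) / M ≤ s := by rwa [div_le_iff₀ hM0]
  have k2 : s ≤ ((i + 1 : ℕ) : ℝ) / M := by
    rw [le_div_iff₀ hM0]; push_cast; exact h2.le
  have k3 : ((i + 1 : ℕ) : ℝ) / M - (i : ℝ) / M = 1 / M := by
    push_cast; ring
  have l1 := hL _ _ (k1.trans k2)
  have m1 := hf n k1
  have m2 := hf n k2
  have m3 := hH k1
  have m4 := hH k2
  rw [k3] at l1
  rw [abs_le]
  constructor <;> linarith

lemma Psi_unif (N : ℕ) (c : Fin N → ℕ) (ε : ℝ) (hε : 0 < ε) :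
    ∀ᶠ n : ℕ in atTop, ∀ s ∈ Icc (0 : ℝ) 1, |Psi N c (n + 1) s - HH N c s| ≤ ε :=
  polya (fun n => Psi N c (n + 1)) (HH N c) (fun n => Psi_mono N c _) (HH_mono N c)
    (HH_lip N c) (Psi_tendsto N c) ε hε


/-- integers strictly between `a*R` and `b*R` -/
noncomputable def SR (a b R : ℝ) : Finset ℕ :=
  (Finset.range (⌈b * R⌉₊ + 1)).filter fun n => a * R < n ∧ (n : ℝ) < b * R

lemma mem_SR {a b R : ℝ} {n : ℕ} : n ∈ SR a b R ↔ a * R < n ∧ (n : ℝ) < b * R := by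
  unfold SR
  rw [Finset.mem_filter, Finset.mem_range]
  refine ⟨fun h => h.2, fun h => ⟨?_, h⟩⟩
  have : (n : ℝ) < ⌈b * R⌉₊ := h.2.trans_le (Nat.le_ceil _)
  have : n < ⌈b * R⌉₊ := by exact_mod_cast this
  omega

lemma card_SR_le {a b R : ℝ} (ha : 0 < a) (hb : 0 < b) (hR : 0 < R) : ((SR a b R).card : ℝ) ≤ b * R := by
  have hsub : SR a b R ⊆ Finset.Icc 1 ⌊b * R⌋₊ := by
    intro n hn
    rw [mem_SR] at hn
    rw [Finset.mem_Icc]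
    constructor
    · have : (0 : ℝ) < n := lt_trans (by positivity) hn.1
      exact_mod_cast this
    · exact Nat.le_floor hn.2.le
  have h := Finset.card_le_card hsub
  rw [Nat.card_Icc, Nat.add_sub_cancel] at h
  calc ((SR a b R).card : ℝ) ≤ (⌊b * R⌋₊ : ℝ) := by exact_mod_cast h
    _ ≤ b * R := Nat.floor_le (by positivity)

/-- Riemann sum -/
noncomputable def rsum (k : ℝ → ℝ) (a b R : ℝ) : ℝ := (1 / R) * ∑ m ∈ SR a b R, k (m / R)

lemma rsum_bound (k : ℝ → ℝ) (a b B : ℝ) (ha : 0 < a) (hb : 0 < b) (hB : ∀ v ∈ Icc a b, |k v| ≤ B)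
    (hB0 : 0 ≤ B) (R : ℝ) (hR : 0 < R) : |rsum k a b R| ≤ b * B := by
  unfold rsum
  rw [abs_mul, abs_of_pos (by positivity)]
  have h1 : |∑ m ∈ SR a b R, k (m / R)| ≤ ∑ m ∈ SR a b R, B := by
    refine (Finset.abs_sum_le_sum_abs _ _).trans (Finset.sum_le_sum fun m hm => hB _ ?_)
    rw [mem_SR] at hm
    exact ⟨by rw [le_div_iff₀ hR]; exact hm.1.le, by rw [div_le_iff₀ hR]; exact hm.2.le⟩
  rw [Finset.sum_const, nsmul_eq_mul] at h1
  calc 1 / R * |∑ m ∈ SR a b R, k (m / R)| ≤ 1 / R * ((b * R) * B) := by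
        gcongr
        refine h1.trans ?_
        gcongr
        exact card_SR_le ha hb hR
    _ = b * B := by field_simp

lemma rsum_eq_integral (k : ℝ → ℝ) (a b R : ℝ) (ha : 0 < a) (hb : 0 < b) (hR : 0 < R) :
    rsum k a b R = ∫ v in Ioi (0 : ℝ), (Ioo a b).indicator k (⌈v * R⌉ / R) := by
  set K := (Ioo a b).indicator k with hK
  set M := ⌈b * R⌉₊ with hM
  have hMb : b ≤ (M : ℝ) / R := by rw [le_div_iff₀ hR]; exact Nat.le_ceil _
  have h0M : (0 : ℝ) ≤ (M : ℝ) / R := by positivity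
  have e1 : ∫ v in Ioi (0 : ℝ), K (⌈v * R⌉ / R) = ∫ v in Ioc (0 : ℝ) (M / R), K (⌈v * R⌉ / R) := by
    refine setIntegral_eq_of_subset_of_forall_diff_eq_zero measurableSet_Ioi Ioc_subset_Ioi_self ?_
    rintro v ⟨hv, hv2⟩
    have hv3 : (M : ℝ) / R < v := by
      by_contra h
      exact hv2 ⟨hv, not_lt.1 h⟩
    refine indicator_of_notMem ?_ _
    intro h
    have : v ≤ ⌈v * R⌉ / R := by rw [le_div_iff₀ hR]; exact Int.le_ceil _
    linarith [h.2]
  have hcongr : ∀ m : ℕ, ∀ v ∈ Ioc ((m : ℝ) / R) (((m + 1 : ℕ) : ℝ) / R), K (⌈v * R⌉ / R) = K (((m + 1 : ℕ) : ℝ) / R) := by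
    intro m v hv
    have : ⌈v * R⌉ = ((m + 1 : ℕ) : ℤ) := by
      rw [Int.ceil_eq_iff]
      constructor
      · have := (div_lt_iff₀ hR).1 hv.1
        push_cast
        linarith
      · have := (le_div_iff₀ hR).1 hv.2
        exact_mod_cast this
    rw [this]
    simp
  have hle : ∀ m : ℕ, (m : ℝ) / R ≤ ((m + 1 : ℕ) : ℝ) / R := by
    intro m; gcongr; simp
  have e2 : ∫ v in (0 : ℝ)..(M / R), K (⌈v * R⌉ / R) =
      ∑ m ∈ Finset.range M, ∫ v in ((m : ℝ) / R)..(((m + 1 : ℕ) : ℝ) / R), K (⌈v * R⌉ / R) := by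
    have := intervalIntegral.sum_integral_adjacent_intervals (a := fun m : ℕ => (m : ℝ) / R) (n := M)
      (f := fun v => K (⌈v * R⌉ / R)) (μ := volume) ?_
    · rw [this]; simp
    · intro m _
      rw [intervalIntegrable_iff_integrableOn_Ioc_of_le (hle m)]
      refine IntegrableOn.congr_fun (f := fun _ => K (((m + 1 : ℕ) : ℝ) / R)) ?_ (fun v hv => (hcongr m v hv).symm) measurableSet_Ioc
      exact integrableOn_const (by simp)
  have e3 : ∀ m : ℕ, ∫ v in ((m : ℝ) / R)..(((m + 1 : ℕ) : ℝ) / R), K (⌈v * R⌉ / R) = (1 / R) * K (((m + 1 : ℕ) : ℝ) / R) := by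
    intro m
    rw [intervalIntegral.integral_of_le (hle m), setIntegral_congr_fun measurableSet_Ioc (hcongr m),
      ← intervalIntegral.integral_of_le (hle m), intervalIntegral.integral_const, smul_eq_mul]
    push_cast
    ring
  rw [e1, ← intervalIntegral.integral_of_le h0M, e2, Finset.sum_congr rfl fun m _ => e3 m, ← Finset.mul_sum, rsum]
  congr 1
  have e4 : ∑ m ∈ Finset.range (M + 1), K ((m : ℝ) / R) = ∑ m ∈ Finset.range M, K (((m + 1 : ℕ) : ℝ) / R) := by
    rw [Finset.sum_range_succ']
    have : K (((0 : ℕ) : ℝ) / R) = 0 := by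
      refine indicator_of_notMem ?_ _
      intro h
      have := h.1
      simp at this
      linarith
    rw [this, add_zero]
  rw [← e4, SR, Finset.sum_filter]
  refine Finset.sum_congr rfl fun m _ => ?_
  rw [hK, indicator_apply]
  have : (a * R < m ∧ (m : ℝ) < b * R) ↔ ((m : ℝ) / R ∈ Ioo a b) := by
    rw [mem_Ioo, lt_div_iff₀ hR, div_lt_iff₀ hR]
  simp only [this]

lemma rsum_tendsto (k : ℝ → ℝ) (hk : Continuous k) (a b : ℝ) (ha : 0 < a) (hab : a < b) :
    Tendsto (fun R => rsum k a b R) atTop (𝓝 (∫ v in a..b, k v)) := by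
  have hb : 0 < b := ha.trans hab
  obtain ⟨B, hB⟩ := (isCompact_Icc (a := a) (b := b)).exists_bound_of_continuousOn hk.continuousOn
  have hB0 : 0 ≤ B := (norm_nonneg _).trans (hB a ⟨le_rfl, hab.le⟩)
  set K := (Ioo a b).indicator k with hK
  have hKm : Measurable K := hk.measurable.indicator measurableSet_Ioo
  have hKb : ∀ v, ‖K v‖ ≤ B := by
    intro v
    rw [hK, indicator_apply]
    split_ifs with h
    · exact hB v ⟨h.1.le, h.2.le⟩
    · simpa using hB0
  have e : ∫ v in a..b, k v = ∫ v in Ioi (0 : ℝ), K v := by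
    rw [intervalIntegral.integral_of_le hab.le, integral_Ioc_eq_integral_Ioo, hK, setIntegral_indicator measurableSet_Ioo]
    congr 2
    ext v
    simp only [mem_inter_iff, mem_Ioo, mem_Ioi]
    exact ⟨fun h => ⟨ha.trans h.1, h⟩, fun h => h.2⟩
  rw [e]
  have h := tendsto_integral_filter_of_dominated_convergence (μ := volume.restrict (Ioi (0 : ℝ)))
    (F := fun (R : ℝ) v => K (⌈v * R⌉ / R)) (f := K) (l := atTop) ((Iic b).indicator fun _ => B) ?_ ?_ ?_ ?_
  · refine h.congr' ?_
    filter_upwards [eventually_gt_atTop 0] with R hR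
    exact (rsum_eq_integral k a b R ha hb hR).symm
  · filter_upwards with R
    refine Measurable.aestronglyMeasurable ?_
    refine hKm.comp ?_
    have : Measurable fun v : ℝ => ((⌈v * R⌉ : ℤ) : ℝ) := by
      have h1 : Measurable fun v : ℝ => ⌈v * R⌉ := Int.measurable_ceil.comp (by fun_prop)
      exact (measurable_from_top (f := fun z : ℤ => (z : ℝ))).comp h1
    exact this.div_const R
  · filter_upwards [eventually_gt_atTop 0] with R hR
    filter_upwards with v
    by_cases hv : v ≤ b
    · rw [indicator_of_mem (show v ∈ Iic b from hv)]
      exact hKb _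
    · rw [indicator_of_notMem (show v ∉ Iic b from hv), hK, indicator_of_notMem]
      · simp
      · intro h
        have : v ≤ ⌈v * R⌉ / R := by rw [le_div_iff₀ hR]; exact Int.le_ceil _
        linarith [h.2]
  · rw [integrable_indicator_iff measurableSet_Iic]
    refine integrableOn_const ?_
    rw [Measure.restrict_apply measurableSet_Iic, Iic_inter_Ioi]
    simp
  · have hae : ∀ᵐ v : ℝ ∂(volume.restrict (Ioi (0 : ℝ))), v ≠ a ∧ v ≠ b := by
      have h1 : ∀ᵐ v : ℝ, v ≠ a := by simp [ae_iff]
      have h2 : ∀ᵐ v : ℝ, v ≠ b := by simp [ae_iff]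
      exact ae_restrict_of_ae (h1.and h2)
    filter_upwards [hae, ae_restrict_mem measurableSet_Ioi] with v hv hv0
    have hc : ContinuousAt K v := by
      rcases lt_or_gt_of_ne hv.1 with h | h
      · refine (continuousAt_const (y := (0 : ℝ))).congr ?_
        filter_upwards [Iio_mem_nhds h] with w hw
        exact (indicator_of_notMem (fun h' => absurd h'.1 (not_lt.2 (le_of_lt hw))) _).symm
      · rcases lt_or_gt_of_ne hv.2 with h2 | h2
        · refine hk.continuousAt.congr ?_
          filter_upwards [Ioo_mem_nhds h h2] with w hw
          exact (indicator_of_mem hw _).symm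
        · refine (continuousAt_const (y := (0 : ℝ))).congr ?_
          filter_upwards [Ioi_mem_nhds h2] with w hw
          exact (indicator_of_notMem (fun h' => absurd h'.2 (not_lt.2 (le_of_lt hw))) _).symm
    refine hc.tendsto.comp ?_
    have u : Tendsto (fun R : ℝ => v + 1 / R) atTop (𝓝 v) := by
      have : Tendsto (fun R : ℝ => 1 / R) atTop (𝓝 0) := by
        simpa using tendsto_inv_atTop_zero (𝕜 := ℝ)
      simpa using tendsto_const_nhds.add this
    refine tendsto_of_tendsto_of_tendsto_of_le_of_le' tendsto_const_nhds u ?_ ?_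
    · filter_upwards [eventually_gt_atTop 0] with R hR
      rw [le_div_iff₀ hR]; exact Int.le_ceil _
    · filter_upwards [eventually_gt_atTop 0] with R hR
      rw [div_le_iff₀ hR, add_mul, one_div, inv_mul_cancel₀ hR.ne']
      exact (Int.ceil_lt_add_one _).le


open ArithmeticFunction in
lemma moebius_tsum : HasSum (fun d : ℕ => (moebius d : ℝ) / (d : ℝ) ^ 2) (6 / Real.pi ^ 2) := by
  have h2 : (1 : ℝ) < (2 : ℂ).re := by norm_num
  have h := LSeries_zeta_mul_Lseries_moebius h2
  rw [LSeries_zeta_eq_riemannZeta h2, riemannZeta_two] at h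
  have hs := (LSeriesSummable_moebius_iff.2 h2).hasSum
  have e : ∀ d : ℕ, LSeries.term (fun n => ((moebius n : ℤ) : ℂ)) 2 d = (((moebius d : ℝ) / (d : ℝ) ^ 2 : ℝ) : ℂ) := by
    intro d
    rcases eq_or_ne d 0 with rfl | hd
    · simp
    · rw [LSeries.term_of_ne_zero hd]
      push_cast
      norm_cast
  have hpi : (Real.pi : ℂ) ≠ 0 := by exact_mod_cast Real.pi_ne_zero
  have e3 : LSeries (fun n => ((moebius n : ℤ) : ℂ)) 2 = ((6 / Real.pi ^ 2 : ℝ) : ℂ) := by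
    push_cast
    field_simp
    field_simp at h
    linear_combination h
  unfold LSeries at e3
  rw [e3] at hs
  rw [show LSeries.term (fun n => ((moebius n : ℤ) : ℂ)) 2 = _ from funext e] at hs
  exact_mod_cast hs

open ArithmeticFunction in
lemma totient_div (n : ℕ) (hn : 0 < n) :
    (n.totient : ℝ) / n = ∑ d ∈ n.divisors, (moebius d : ℝ) / d := by
  have h := (sum_eq_iff_sum_mul_moebius_eq (R := ℝ) (f := fun n => (n.totient : ℝ)) (g := fun n => (n : ℝ))).1
    (fun n _ => by exact_mod_cast Nat.sum_totient n) n hn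
  rw [Nat.sum_divisorsAntidiagonal (f := fun x y : ℕ => ((moebius x : ℤ) : ℝ) * (y : ℝ))] at h
  rw [← h, Finset.sum_div]
  refine Finset.sum_congr rfl fun d hd => ?_
  have hd' := Nat.dvd_of_mem_divisors hd
  have hd0 : (d : ℝ) ≠ 0 := by
    have := Nat.pos_of_mem_divisors hd
    positivity
  rw [Nat.cast_div hd' hd0]
  have : (n : ℝ) ≠ 0 := by positivity
  field_simp

open ArithmeticFunction in
lemma totsum_eq (k : ℝ → ℝ) (a b R : ℝ) (ha : 0 < a) (hb : 0 < b) (hR : 0 < R) :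
    (1 / R) * ∑ n ∈ SR a b R, (n.totient : ℝ) / n * k (n / R) =
      ∑' d : ℕ, (moebius d : ℝ) / (d : ℝ) ^ 2 * rsum k a b (R / d) := by
  set M := ⌈b * R⌉₊ with hM
  have hpos : ∀ n ∈ SR a b R, 0 < n := by
    intro n hn
    have : (0 : ℝ) < n := lt_trans (by positivity) (mem_SR.1 hn).1
    exact_mod_cast this
  rw [tsum_eq_sum (s := Finset.Icc 1 M)]
  swap
  · intro d hd
    rcases Nat.eq_zero_or_pos d with rfl | hd0
    · simp
    · have hdM : M < d := by
        by_contra h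
        exact hd (Finset.mem_Icc.2 ⟨hd0, not_lt.1 h⟩)
      have : SR a b (R / d) = ∅ := by
        rw [Finset.eq_empty_iff_forall_notMem]
        intro m hm
        rw [mem_SR] at hm
        have hd' : (0 : ℝ) < d := by exact_mod_cast hd0
        have h1 : b * R ≤ d := (Nat.le_ceil _).trans (by exact_mod_cast hdM.le)
        have h2 : b * (R / d) ≤ 1 := by
          rw [← mul_div_assoc, div_le_one hd']; exact h1
        have h3 : (0 : ℝ) < m := lt_trans (by positivity) hm.1
        have h4 : (1 : ℝ) ≤ m := by exact_mod_cast h3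
        linarith [hm.2]
      rw [rsum, this]
      simp
  have e1 : ∑ n ∈ SR a b R, (n.totient : ℝ) / n * k (n / R) =
      ∑ n ∈ SR a b R, ∑ d ∈ Finset.Icc 1 M, if d ∣ n then (moebius d : ℝ) / d * k (n / R) else 0 := by
    refine Finset.sum_congr rfl fun n hn => ?_
    rw [totient_div n (hpos n hn), Finset.sum_mul, ← Finset.sum_filter]
    refine Finset.sum_congr ?_ fun _ _ => rfl
    ext d
    rw [Nat.mem_divisors, Finset.mem_filter, Finset.mem_Icc]
    constructor
    · rintro ⟨h1, h2⟩
      refine ⟨⟨Nat.pos_of_dvd_of_pos h1 (hpos n hn), (Nat.le_of_dvd (hpos n hn) h1).trans ?_⟩, h1⟩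
      have : (n : ℝ) ≤ M := (mem_SR.1 hn).2.le.trans (Nat.le_ceil _)
      exact_mod_cast this
    · rintro ⟨_, h⟩
      exact ⟨h, (hpos n hn).ne'⟩
  rw [e1, Finset.sum_comm, Finset.mul_sum]
  refine Finset.sum_congr rfl fun d hd => ?_
  have hd0 : 0 < d := (Finset.mem_Icc.1 hd).1
  have hd' : (0 : ℝ) < d := by exact_mod_cast hd0
  rw [← Finset.sum_filter, ← Finset.mul_sum, rsum]
  have e2 : ∑ n ∈ (SR a b R).filter (fun n => d ∣ n), k (n / R) = ∑ m ∈ SR a b (R / d), k (m / (R / d)) := by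
    symm
    refine Finset.sum_nbij' (fun m => d * m) (fun n => n / d) ?_ ?_ ?_ ?_ ?_
    · intro m hm
      rw [mem_SR] at hm
      rw [Finset.mem_filter, mem_SR]
      refine ⟨⟨?_, ?_⟩, dvd_mul_right _ _⟩
      · have := hm.1
        rw [← mul_div_assoc, div_lt_iff₀ hd'] at this
        push_cast; linarith
      · have := hm.2
        rw [← mul_div_assoc, lt_div_iff₀ hd'] at this
        push_cast; linarith
    · intro n hn
      rw [Finset.mem_filter, mem_SR] at hn
      rw [mem_SR, Nat.cast_div hn.2 hd'.ne', ← mul_div_assoc, ← mul_div_assoc]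
      exact ⟨by gcongr; exact hn.1.1, by gcongr; exact hn.1.2⟩
    · intro m _
      exact Nat.mul_div_cancel_left m hd0
    · intro n hn
      exact Nat.mul_div_cancel' (Finset.mem_filter.1 hn).2
    · intro m _
      congr 1
      push_cast
      field_simp
  rw [e2]
  field_simp

open ArithmeticFunction in
lemma totsum_tendsto (k : ℝ → ℝ) (hk : Continuous k) (a b : ℝ) (ha : 0 < a) (hab : a < b) :
    Tendsto (fun R => (1 / R) * ∑ n ∈ SR a b R, (n.totient : ℝ) / n * k (n / R)) atTop
      (𝓝 (6 / Real.pi ^ 2 * ∫ v in a..b, k v)) := by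
  have hb : 0 < b := ha.trans hab
  obtain ⟨B, hB⟩ := (isCompact_Icc (a := a) (b := b)).exists_bound_of_continuousOn hk.continuousOn
  have hB0 : 0 ≤ B := (norm_nonneg _).trans (hB a ⟨le_rfl, hab.le⟩)
  have hlim : 6 / Real.pi ^ 2 * ∫ v in a..b, k v = ∑' d : ℕ, (moebius d : ℝ) / (d : ℝ) ^ 2 * ∫ v in a..b, k v := by
    rw [tsum_mul_right, moebius_tsum.tsum_eq]
  rw [hlim]
  have h := tendsto_tsum_of_dominated_convergence (𝓕 := atTop)
    (f := fun (R : ℝ) (d : ℕ) => (moebius d : ℝ) / (d : ℝ) ^ 2 * rsum k a b (R / d))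
    (g := fun d : ℕ => (moebius d : ℝ) / (d : ℝ) ^ 2 * ∫ v in a..b, k v)
    (bound := fun d : ℕ => 1 / (d : ℝ) ^ 2 * (b * B)) ?_ ?_ ?_
  · refine h.congr' ?_
    filter_upwards [eventually_gt_atTop 0] with R hR
    exact (totsum_eq k a b R ha hb hR).symm
  · exact (Real.summable_one_div_nat_pow.2 (by norm_num)).mul_right _
  · intro d
    rcases Nat.eq_zero_or_pos d with rfl | hd
    · simp
    · refine Tendsto.const_mul _ ((rsum_tendsto k hk a b ha hab).comp ?_)
      exact tendsto_id.atTop_div_const (by exact_mod_cast hd)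
  · filter_upwards [eventually_gt_atTop 0] with R hR d
    rcases Nat.eq_zero_or_pos d with rfl | hd
    · simp
    · have hd' : (0 : ℝ) < d := by exact_mod_cast hd
      rw [norm_mul]
      refine mul_le_mul ?_ (rsum_bound k a b B ha hb hB hB0 _ (by positivity)) (norm_nonneg _) (by positivity)
      rw [norm_div, Real.norm_eq_abs, Real.norm_of_nonneg (by positivity : (0 : ℝ) ≤ (d : ℝ) ^ 2)]
      gcongr
      have := abs_moebius_le_one (n := d)
      exact_mod_cast this


lemma HH_continuous (N : ℕ) (c : Fin N → ℕ) : Continuous (HH N c) := by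
  have : LipschitzWith 2 (HH N c) := by
    refine LipschitzWith.of_dist_le_mul fun s t => ?_
    rw [Real.dist_eq, Real.dist_eq]
    change _ ≤ (2 : ℝ) * _
    rcases le_total s t with h | h
    · have h1 := HH_lip N c s t h
      have h2 := HH_mono N c h
      rw [abs_of_nonpos (by linarith), abs_of_nonpos (by linarith)]
      linarith
    · have h1 := HH_lip N c t s h
      have h2 := HH_mono N c h
      rw [abs_of_nonneg (by linarith), abs_of_nonneg (by linarith)]
      linarith
  exact this.continuous

/-- counting function for all `n` (no instance argument) -/
noncomputable def PsiN (N : ℕ) (c : Fin N → ℕ) (n : ℕ) (s : ℝ) : ℝ := Psi N c (n - 1 + 1) s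

lemma PsiN_eq (N : ℕ) (c : Fin N → ℕ) (n : ℕ) [NeZero n] (s : ℝ) : PsiN N c n s = Psi N c n s := by
  obtain ⟨m, rfl⟩ : ∃ m, n = m + 1 := ⟨n - 1, by have := NeZero.pos n; omega⟩
  rfl

lemma mainsum_tendsto (N : ℕ) (c : Fin N → ℕ) (a b : ℝ) (ha : 1 < a) (hab : a < b) :
    Tendsto (fun R => ∑ n ∈ SR a b R, (n.totient : ℝ) / (n : ℝ) ^ 2 * PsiN N c n (R / n)) atTop
      (𝓝 (6 / Real.pi ^ 2 * ∫ v in a..b, HH N c (1 / v) / v)) := by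
  have ha0 : 0 < a := by linarith
  have hb0 : 0 < b := by linarith
  set k : ℝ → ℝ := fun v => HH N c (1 / max v 1) / max v 1 with hk
  have hmax : ∀ v : ℝ, max v 1 ≠ 0 := fun v => (lt_of_lt_of_le one_pos (le_max_right v 1)).ne'
  have hkc : Continuous k := by
    have hm : Continuous fun v : ℝ => max v 1 := by fun_prop
    exact ((HH_continuous N c).comp (continuous_const.div hm hmax)).div hm hmax
  have h := totsum_tendsto k hkc a b ha0 hab
  have e : ∫ v in a..b, k v = ∫ v in a..b, HH N c (1 / v) / v := by
    refine intervalIntegral.integral_congr fun v hv => ?_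
    rw [uIcc_of_le hab.le] at hv
    simp only [hk, max_eq_left (ha.le.trans hv.1)]
  rw [e] at h
  have hdiff : Tendsto (fun R => (∑ n ∈ SR a b R, (n.totient : ℝ) / (n : ℝ) ^ 2 * PsiN N c n (R / n)) -
     (1 / R) * ∑ n ∈ SR a b R, (n.totient : ℝ) / n * k (n / R)) atTop (𝓝 0) := by
    rw [Metric.tendsto_nhds]
    intro ε hε
    set ε' := ε * a / (2 * b) with hε'
    obtain ⟨M, hM⟩ := eventually_atTop.1 (Psi_unif N c ε' (by positivity))
    filter_upwards [eventually_gt_atTop 0, eventually_ge_atTop ((M : ℝ) + 1)] with R hR hRM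
    rw [dist_zero_right, Finset.mul_sum, ← Finset.sum_sub_distrib, Real.norm_eq_abs]
    have hb : ∀ n ∈ SR a b R, |(n.totient : ℝ) / (n : ℝ) ^ 2 * PsiN N c n (R / n) -
        (1 / R) * ((n.totient : ℝ) / n * k (n / R))| ≤ 1 / (a * R) * ε' := by
      intro n hn
      rw [mem_SR] at hn
      have haR : R < a * R := by nlinarith
      have hnR : R < n := haR.trans hn.1
      have hn0 : (0 : ℝ) < n := hR.trans hnR
      have hnM : M + 1 ≤ n := by
        have : ((M + 1 : ℕ) : ℝ) ≤ n := by push_cast; linarith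
        exact_mod_cast this
      have h1 : (1 : ℝ) ≤ n / R := by rw [le_div_iff₀ hR]; linarith
      have hp := hM (n - 1) (by omega) (R / n) ⟨by positivity, by rw [div_le_one hn0]; exact hnR.le⟩
      have e1 : (n.totient : ℝ) / (n : ℝ) ^ 2 * PsiN N c n (R / n) -
        (1 / R) * ((n.totient : ℝ) / n * k (n / R)) =
          (n.totient : ℝ) / (n : ℝ) ^ 2 * (PsiN N c n (R / n) - HH N c (R / n)) := by
        simp only [hk, max_eq_left h1, one_div_div]
        field_simp
      rw [e1, abs_mul, abs_of_nonneg (by positivity)]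
      refine mul_le_mul ?_ hp (abs_nonneg _) (by positivity)
      have ht : (n.totient : ℝ) ≤ n := by exact_mod_cast Nat.totient_le n
      calc (n.totient : ℝ) / (n : ℝ) ^ 2 ≤ (n : ℝ) / (n : ℝ) ^ 2 := by gcongr
        _ = 1 / (n : ℝ) := by field_simp
        _ ≤ 1 / (a * R) := by gcongr; exact hn.1.le
    refine (Finset.abs_sum_le_sum_abs _ _).trans_lt ((Finset.sum_le_sum hb).trans_lt ?_)
    rw [Finset.sum_const, nsmul_eq_mul]
    calc ((SR a b R).card : ℝ) * (1 / (a * R) * ε') ≤ (b * R) * (1 / (a * R) * ε') := by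
          gcongr
          exact card_SR_le ha0 hb0 hR
      _ = ε / 2 := by rw [hε']; field_simp
      _ < ε := by linarith
  have := hdiff.add h
  simpa using this

/-- the trapezoidal function -/
noncomputable def KK (a b s : ℝ) : ℝ := max 0 (s - Real.log a) - max 0 (s - Real.log b)

lemma gm_ae_mem : ∀ᵐ u ∂gaussMeasure, u ∈ Ioo (0 : ℝ) 1 := by
  rw [gm_def]
  exact (withDensity_absolutelyContinuous _ _).ae_le (ae_restrict_mem measurableSet_Ioo)

lemma KK_eq_integral (a b u : ℝ) (ha : 1 < a) (hab : a < b) (hu : 0 < u) :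
    ∫ v in Ioc a b, (if u ≤ 1 / v then 1 / v else 0) = KK a b (-Real.log u) := by
  have ha0 : 0 < a := by linarith
  have hb0 : 0 < b := by linarith
  have e1 : ∫ v in Ioc a b, (if u ≤ 1 / v then 1 / v else 0) = ∫ v in Ioc a b ∩ Iic (1 / u), 1 / v := by
    rw [← setIntegral_indicator measurableSet_Iic]
    refine setIntegral_congr_fun measurableSet_Ioc fun v hv => ?_
    have hv0 : 0 < v := ha0.trans hv.1
    simp only [indicator_apply, mem_Iic]
    have : u ≤ 1 / v ↔ v ≤ 1 / u := by rw [le_div_iff₀ hv0, le_div_iff₀ hu, mul_comm]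
    simp only [this]
  rw [e1]
  have hlab : Real.log a < Real.log b := Real.log_lt_log ha0 hab
  have hl : -Real.log u = Real.log (1 / u) := by rw [one_div, Real.log_inv]
  rw [hl, KK]
  have hu' : 0 < 1 / u := by positivity
  have hset : Ioc a b ∩ Iic (1 / u) = Ioc a (min b (1 / u)) := by
    ext v; simp only [mem_inter_iff, mem_Ioc, mem_Iic, le_min_iff]; tauto
  rw [hset]
  rcases le_or_gt (1 / u) a with h | h
  · have : Ioc a (min b (1 / u)) = ∅ := Ioc_eq_empty (not_lt.2 ((min_le_right _ _).trans h))
    rw [this]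
    have h1 := Real.log_le_log hu' h
    rw [max_eq_left (by linarith), max_eq_left (by linarith)]
    simp
  · have hm : a ≤ min b (1 / u) := le_min hab.le h.le
    rw [← intervalIntegral.integral_of_le hm, integral_one_div_of_pos ha0 (ha0.trans_le hm),
      Real.log_div (ha0.trans_le hm).ne' ha0.ne']
    have h1 := Real.log_le_log ha0 h.le
    rw [max_eq_right (by linarith : (0 : ℝ) ≤ Real.log (1 / u) - Real.log a)]
    rcases le_total b (1 / u) with h2 | h2
    · have := Real.log_le_log hb0 h2
      rw [min_eq_left h2, max_eq_right (by linarith)]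
      ring
    · have := Real.log_le_log hu' h2
      rw [min_eq_right h2, max_eq_left (by linarith)]
      ring

lemma HH_fubini (N : ℕ) (c : Fin N → ℕ) (a b : ℝ) (ha : 1 < a) (hab : a < b) :
    ∫ v in a..b, HH N c (1 / v) / v =
      2 * Real.log 2 * ∫ u in Cset N c, KK a b (-Real.log u) ∂gaussMeasure := by
  have ha0 : 0 < a := by linarith
  have hC := Cset_measurable N c
  set f : ℝ → ℝ → ℝ := fun v u => if u ≤ 1 / v then 1 / v else 0 with hf
  have hmeas : Measurable (Function.uncurry f) := by
    unfold Function.uncurry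
    simp only [hf]
    refine Measurable.ite ?_ (by fun_prop) measurable_const
    exact measurableSet_le measurable_snd (by fun_prop)
  have hIntg : Integrable (Function.uncurry f) ((volume.restrict (Ioc a b)).prod (gaussMeasure.restrict (Cset N c))) := by
    refine Integrable.of_bound hmeas.aestronglyMeasurable (1 / a) ?_
    have hp : ∀ᵐ p ∂((volume.restrict (Ioc a b)).prod (gaussMeasure.restrict (Cset N c))), p.1 ∈ Ioc a b :=
      Measure.quasiMeasurePreserving_fst.ae (ae_restrict_mem measurableSet_Ioc)
    filter_upwards [hp] with p hp
    have hp0 : 0 < p.1 := ha0.trans hp.1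
    simp only [Function.uncurry, hf]
    split_ifs
    · rw [Real.norm_of_nonneg (by positivity)]
      gcongr
      exact hp.1.le
    · simp; positivity
  have hsw := integral_integral_swap hIntg
  have e1 : ∫ v in Ioc a b, ∫ u in Cset N c, f v u ∂gaussMeasure = ∫ v in Ioc a b, (gaussMeasure (Cset N c ∩ Iic (1 / v))).toReal / v := by
    refine setIntegral_congr_fun measurableSet_Ioc fun v hv => ?_
    have : ∀ u, f v u = (Iic (1 / v)).indicator (fun _ => 1 / v) u := by
      intro u; simp only [hf, indicator_apply, mem_Iic]
    simp only [this]
    rw [setIntegral_indicator measurableSet_Iic, setIntegral_const, smul_eq_mul, Measure.real, mul_one_div]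
  have e2 : ∫ u in Cset N c, (∫ v in Ioc a b, f v u) ∂gaussMeasure = ∫ u in Cset N c, KK a b (-Real.log u) ∂gaussMeasure := by
    refine integral_congr_ae (ae_restrict_of_ae ?_)
    filter_upwards [gm_ae_mem] with u hu
    exact KK_eq_integral a b u ha hab hu.1
  rw [← e2, ← hsw, e1, intervalIntegral.integral_of_le hab.le, ← integral_const_mul]
  refine setIntegral_congr_fun measurableSet_Ioc fun v hv => ?_
  simp only [HH]
  ring


/-- density of `mu2` -/
noncomputable def rho2 (p : ℝ × ℝ) : ℝ := 1 / (Real.log 2 * (1 + p.1 * p.2) ^ 2)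

lemma rho2_measurable : Measurable rho2 := by
  unfold rho2
  fun_prop

lemma ae_irr : ∀ᵐ x : ℝ, Irrational x := by
  rw [ae_iff]
  have : {x : ℝ | ¬ Irrational x} = range ((↑) : ℚ → ℝ) := by
    ext x; simp [Irrational]
  rw [this]
  exact (countable_range _).measure_zero _

lemma mu2_eq : mu2 = ((volume.restrict (Ioo (0 : ℝ) 1)).prod (volume.restrict (Ioo (0 : ℝ) 1))).withDensity
    fun p => ENNReal.ofReal (rho2 p) := by
  have hS : volume.restrict (Ioo (0 : ℝ) 1 ∩ {x | Irrational x}) = volume.restrict (Ioo (0 : ℝ) 1) := by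
    refine Measure.restrict_congr_set ?_
    filter_upwards [ae_irr] with x hx
    refine propext ⟨fun h => h.1, fun h => ⟨h, hx⟩⟩
  have hD : Dset = (Ioo (0 : ℝ) 1 ∩ {x | Irrational x}) ×ˢ (Ioo (0 : ℝ) 1 ∩ {x | Irrational x}) := by
    ext p
    constructor
    · rintro ⟨h1, h2, h3, h4⟩
      exact ⟨⟨h1, h2⟩, h3, h4⟩
    · rintro ⟨⟨h1, h2⟩, h3, h4⟩
      exact ⟨h1, h2, h3, h4⟩
  unfold mu2
  rw [hD, Measure.volume_eq_prod, ← Measure.prod_restrict, hS]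
  rfl

/-- the first coordinate of the natural extension -/
noncomputable def TT (p : ℝ × ℝ) : ℝ := 1 / ((⌊1 / p.2⌋ : ℝ) + p.1)

lemma TT_measurable : Measurable TT := by
  unfold TT
  have : Measurable fun p : ℝ × ℝ => ((⌊1 / p.2⌋ : ℤ) : ℝ) := by
    have h1 : Measurable fun p : ℝ × ℝ => ⌊1 / p.2⌋ := Int.measurable_floor.comp (by fun_prop)
    exact (measurable_from_top (f := fun z : ℤ => (z : ℝ))).comp h1
  fun_prop

/-- intervals of constancy of the floor -/
noncomputable def Ic (c : ℕ) : Set ℝ := Ioc (1 / ((c : ℝ) + 2)) (1 / ((c : ℝ) + 1))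

lemma Ic_floor (c : ℕ) {y : ℝ} (hy : y ∈ Ic c) : ⌊1 / y⌋ = (c : ℤ) + 1 := by
  have h0 : 0 < y := lt_trans (by positivity) hy.1
  rw [Int.floor_eq_iff]
  push_cast
  constructor
  · rw [le_div_iff₀ h0]
    have := hy.2
    rw [le_div_iff₀ (by positivity)] at this
    linarith
  · rw [div_lt_iff₀ h0]
    have := hy.1
    rw [div_lt_iff₀ (by positivity)] at this
    linarith

lemma Ic_meas (c : ℕ) : MeasurableSet (Ic c) := measurableSet_Ioc

lemma Ic_disj : Pairwise (Function.onFun Disjoint Ic) := by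
  intro c d hcd
  rw [Function.onFun, Set.disjoint_left]
  intro y hy hy2
  have := (Ic_floor c hy).symm.trans (Ic_floor d hy2)
  omega

lemma Ic_union : ⋃ c, Ic c = Ioc (0 : ℝ) 1 := by
  ext y
  rw [mem_iUnion]
  constructor
  · rintro ⟨c, hc⟩
    refine ⟨lt_trans (by positivity) hc.1, hc.2.trans ?_⟩
    rw [div_le_one (by positivity)]
    have : (0 : ℝ) ≤ c := by positivity
    linarith
  · rintro ⟨h0, h1⟩
    have h2 : 1 ≤ 1 / y := by rw [le_div_iff₀ h0]; linarith
    have h3 : 1 ≤ ⌊1 / y⌋₊ := Nat.le_floor (by simpa using h2)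
    obtain ⟨c, hc⟩ : ∃ c, ⌊1 / y⌋₊ = c + 1 := ⟨⌊1 / y⌋₊ - 1, by omega⟩
    refine ⟨c, ?_, ?_⟩
    · have := Nat.lt_floor_add_one (1 / y)
      rw [hc] at this
      push_cast at this
      rw [div_lt_iff₀ h0] at this
      rw [div_lt_iff₀ (by positivity)]
      linarith
    · have := Nat.floor_le (by positivity : 0 ≤ 1 / y)
      rw [hc] at this
      push_cast at this
      rw [le_div_iff₀ h0] at this
      rw [le_div_iff₀ (by positivity)]
      linarith

lemma Ic_lintegral (F : ℝ → ENNReal) :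
    ∫⁻ y in Ioo (0 : ℝ) 1, F y = ∑' c, ∫⁻ y in Ic c, F y := by
  rw [setLIntegral_congr Ioo_ae_eq_Ioc, ← Ic_union, lintegral_iUnion (fun c => Ic_meas c) Ic_disj]

lemma rho2_inner (c : ℕ) (x : ℝ) (hx : 0 < x) :
    ∫⁻ y in Ic c, ENNReal.ofReal (rho2 (x, y)) =
      ENNReal.ofReal (1 / (Real.log 2 * (((c : ℝ) + 1 + x) * ((c : ℝ) + 2 + x)))) := by
  have hl := gm_log2
  have hle : 1 / ((c : ℝ) + 2) ≤ 1 / ((c : ℝ) + 1) := by gcongr; norm_num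
  have hpos : 0 < 1 / ((c : ℝ) + 2) := by positivity
  have hcont : ContinuousOn (fun y => rho2 (x, y)) (Icc (1 / ((c : ℝ) + 2)) (1 / ((c : ℝ) + 1))) := by
    unfold rho2
    refine ContinuousOn.div (by fun_prop) (by fun_prop) fun y hy => ?_
    have : 0 < y := hpos.trans_le hy.1
    positivity
  rw [Ic, ← ofReal_integral_eq_lintegral_ofReal]
  · congr 1
    rw [← intervalIntegral.integral_of_le hle]
    have hd : ∀ y ∈ uIcc (1 / ((c : ℝ) + 2)) (1 / ((c : ℝ) + 1)),
        HasDerivAt (fun y => (Real.log 2)⁻¹ * (y / (1 + x * y))) (rho2 (x, y)) y := by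
      intro y hy
      rw [uIcc_of_le hle] at hy
      have hy0 : 0 < y := hpos.trans_le hy.1
      have hne : 1 + x * y ≠ 0 := by positivity
      have h1 : HasDerivAt (fun y : ℝ => 1 + x * y) x y := by
        simpa using ((hasDerivAt_id y).const_mul x).const_add 1
      have h2 := ((hasDerivAt_id y).div h1 hne).const_mul (Real.log 2)⁻¹
      refine h2.congr_deriv ?_
      simp only [rho2, id]
      field_simp
      ring
    rw [intervalIntegral.integral_eq_sub_of_hasDerivAt hd]
    · field_simp
      ring
    · exact ContinuousOn.intervalIntegrable (by rwa [uIcc_of_le hle])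
  · exact (hcont.integrableOn_compact isCompact_Icc).mono_set Ioc_subset_Icc_self
  · refine (ae_restrict_iff' measurableSet_Ioc).2 (ae_of_all _ fun y hy => ?_)
    unfold rho2
    have : 0 < y := hpos.trans hy.1
    positivity

lemma gauss_branch (c : ℕ) (f : ℝ → ENNReal) :
    ∫⁻ u in Ic c, ENNReal.ofReal (gd u) * f u =
    ∫⁻ x in Ioo (0 : ℝ) 1, ENNReal.ofReal (1 / (Real.log 2 * (((c : ℝ) + 1 + x) * ((c : ℝ) + 2 + x)))) *
      f (1 / ((c : ℝ) + 1 + x)) := by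
  have hl := gm_log2
  have himg : (fun x : ℝ => 1 / ((c : ℝ) + 1 + x)) '' Ioo 0 1 = Ioo (1 / ((c : ℝ) + 2)) (1 / ((c : ℝ) + 1)) := by
    ext u
    constructor
    · rintro ⟨x, hx, rfl⟩
      have := hx.1
      exact ⟨one_div_lt_one_div_of_lt (by positivity) (by linarith [hx.2]),
        one_div_lt_one_div_of_lt (by positivity) (by linarith [hx.1])⟩
    · rintro ⟨h1, h2⟩
      have hu : 0 < u := lt_trans (by positivity) h1
      refine ⟨1 / u - (c + 1), ⟨?_, ?_⟩, ?_⟩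
      · have := (lt_div_iff₀ (by positivity)).1 h2
        rw [sub_pos, lt_div_iff₀ hu]
        linarith
      · have := (div_lt_iff₀ (by positivity)).1 h1
        rw [sub_lt_iff_lt_add, div_lt_iff₀ hu]
        linarith
      · simp
  rw [Ic, ← setLIntegral_congr Ioo_ae_eq_Ioc, ← himg,
    lintegral_image_eq_lintegral_abs_deriv_mul measurableSet_Ioo
      (f' := fun x => -1 / ((c : ℝ) + 1 + x) ^ 2)]
  · refine setLIntegral_congr_fun measurableSet_Ioo fun x hx => ?_
    have := hx.1
    rw [← mul_assoc, ← ENNReal.ofReal_mul (abs_nonneg _)]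
    congr 2
    rw [neg_div, abs_neg, abs_of_nonneg (by positivity), gd]
    field_simp
    ring
  · intro x hx
    have := hx.1
    have h1 : HasDerivAt (fun x : ℝ => (c : ℝ) + 1 + x) 1 x := (hasDerivAt_id x).const_add _
    have h2 := h1.inv (by positivity)
    simp only [one_div]
    exact h2.hasDerivWithinAt
  · intro x hx y hy h
    have h1 := hx.1
    have h2 := hy.1
    simp only [one_div, inv_inj] at h
    linarith

lemma mu2_lintegral (f : ℝ → ENNReal) (hf : Measurable f) :
    ∫⁻ p, f (TT p) ∂mu2 = ∫⁻ u, f u ∂gaussMeasure := by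
  have hfm : Measurable fun p => f (TT p) := hf.comp TT_measurable
  have hr : Measurable fun p => ENNReal.ofReal (rho2 p) := rho2_measurable.ennreal_ofReal
  have hg : Measurable fun u => ENNReal.ofReal (gd u) := gd_measurable.ennreal_ofReal
  rw [mu2_eq, lintegral_withDensity_eq_lintegral_mul _ hr hfm, gm_def,
    lintegral_withDensity_eq_lintegral_mul _ hg hf, lintegral_prod _ (hr.mul hfm).aemeasurable]
  simp only [Pi.mul_apply]
  rw [Ic_lintegral (fun u => ENNReal.ofReal (gd u) * f u), tsum_congr fun c => gauss_branch c f]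
  rw [← lintegral_tsum (fun c => by fun_prop)]
  refine setLIntegral_congr_fun measurableSet_Ioo fun x hx => ?_
  rw [Ic_lintegral]
  refine tsum_congr fun c => ?_
  have hry : Measurable fun y => ENNReal.ofReal (rho2 (x, y)) := hr.comp measurable_prodMk_left
  rw [← rho2_inner c x hx.1, ← lintegral_mul_const _ hry]
  refine setLIntegral_congr_fun measurableSet_Ioc fun y hy => ?_
  simp only [TT, Ic_floor c hy]
  push_cast
  rfl

lemma mu2_map : Measure.map TT mu2 = gaussMeasure := by
  ext s hs
  rw [← lintegral_indicator_one hs, ← lintegral_indicator_one hs, lintegral_map (measurable_one.indicator hs) TT_measurable,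
    mu2_lintegral _ (measurable_one.indicator hs)]


lemma log_pow_integrable (k : ℕ) : IntervalIntegrable (fun u : ℝ => u ^ k * (-Real.log u)) volume 0 1 := by
  have h : IntervalIntegrable Real.log volume 0 1 := intervalIntegral.intervalIntegrable_log'
  exact h.neg.continuousOn_mul (by fun_prop)

lemma log_pow_integral (k : ℕ) : ∫ u in (0 : ℝ)..1, u ^ k * (-Real.log u) = 1 / ((k : ℝ) + 1) ^ 2 := by
  have hk : (k : ℝ) + 1 ≠ 0 := by positivity
  have hd : ∀ u ∈ Ioo (0 : ℝ) 1, HasDerivAt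
      (fun u => -(1 / ((k : ℝ) + 1)) * (u ^ k * (u * Real.log u)) + u ^ (k + 1) / ((k : ℝ) + 1) ^ 2)
      (u ^ k * (-Real.log u)) u := by
    intro u hu
    have hu0 : u ≠ 0 := hu.1.ne'
    have h1 := (((hasDerivAt_id u).pow (k + 1)).mul (Real.hasDerivAt_log hu0)).const_mul (-(1 / ((k : ℝ) + 1)))
    have h2 := ((hasDerivAt_id u).pow (k + 1)).div_const (((k : ℝ) + 1) ^ 2)
    have h3 := h1.add h2
    refine (h3.congr_deriv ?_).congr_of_eventuallyEq ?_
    · simp only [id, Pi.pow_apply]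
      push_cast
      field_simp
      ring
    · filter_upwards with v
      simp only [Pi.add_apply, Pi.mul_apply, Pi.pow_apply, id]
      ring
  rw [intervalIntegral.integral_eq_sub_of_hasDerivAt_of_le zero_le_one ?_ hd (log_pow_integrable k)]
  · simp
  · have := Real.continuous_mul_log
    fun_prop

lemma alt_sum : HasSum (fun k : ℕ => (-1 : ℝ) ^ k / ((k : ℝ) + 1) ^ 2) (Real.pi ^ 2 / 12) := by
  have h0 := hasSum_zeta_two
  have h1 : HasSum (fun k : ℕ => 1 / ((k : ℝ) + 1) ^ 2) (Real.pi ^ 2 / 6) := by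
    have := (hasSum_nat_add_iff' (f := fun n : ℕ => 1 / (n : ℝ) ^ 2) 1).2 h0
    simpa using this
  obtain ⟨f, hf⟩ : ∃ f : ℕ → ℝ, ∀ k, f k = (1 - (-1 : ℝ) ^ k) / ((k : ℝ) + 1) ^ 2 := ⟨_, fun _ => rfl⟩
  have he : HasSum (fun j : ℕ => f (2 * j)) 0 := by
    have : (fun j : ℕ => f (2 * j)) = fun _ => 0 := by
      funext j
      rw [hf, pow_mul]
      norm_num
    rw [this]
    exact hasSum_zero
  have ho : HasSum (fun j : ℕ => f (2 * j + 1)) (1 / 2 * (Real.pi ^ 2 / 6)) := by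
    have : (fun j : ℕ => f (2 * j + 1)) = fun j : ℕ => 1 / 2 * (1 / ((j : ℝ) + 1) ^ 2) := by
      funext j
      rw [hf, pow_succ, pow_mul]
      have : (j : ℝ) + 1 ≠ 0 := by positivity
      have e : (((2 * j + 1 : ℕ) : ℝ) + 1) = 2 * ((j : ℝ) + 1) := by push_cast; ring
      rw [e, mul_pow]
      norm_num
      field_simp
      norm_num
    rw [this]
    exact h1.mul_left _
  have h3 := he.even_add_odd ho
  have h4 := h1.sub h3
  have e1 : (fun k : ℕ => (-1 : ℝ) ^ k / ((k : ℝ) + 1) ^ 2) = fun k : ℕ => 1 / ((k : ℝ) + 1) ^ 2 - f k := by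
    funext k
    rw [hf]
    ring
  have e2 : Real.pi ^ 2 / 12 = Real.pi ^ 2 / 6 - (0 + 1 / 2 * (Real.pi ^ 2 / 6)) := by ring
  rw [e1, e2]
  exact h4

lemma log_integral_series : ∫ u in Ioo (0 : ℝ) 1, 1 / (1 + u) * (-Real.log u) = Real.pi ^ 2 / 12 := by
  have hnn : ∀ k : ℕ, ∀ u ∈ Ioo (0 : ℝ) 1, 0 ≤ u ^ k * (-Real.log u) := by
    intro k u hu
    have := Real.log_nonpos hu.1.le hu.2.le
    have := hu.1
    exact mul_nonneg (by positivity) (by linarith)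
  have hIntg : ∀ k : ℕ, IntegrableOn (fun u : ℝ => u ^ k * (-Real.log u)) (Ioo 0 1) := by
    intro k
    have := log_pow_integrable k
    rw [intervalIntegrable_iff_integrableOn_Ioc_of_le zero_le_one] at this
    exact this.mono_set Ioo_subset_Ioc_self
  have hval : ∀ k : ℕ, ∫ u in Ioo (0 : ℝ) 1, u ^ k * (-Real.log u) = 1 / ((k : ℝ) + 1) ^ 2 := by
    intro k
    rw [← log_pow_integral k, intervalIntegral.integral_of_le zero_le_one, integral_Ioc_eq_integral_Ioo]
  have h1 : Summable (fun k : ℕ => 1 / ((k : ℝ) + 1) ^ 2) := by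
    have := (summable_nat_add_iff (f := fun n : ℕ => 1 / (n : ℝ) ^ 2) 1).2 hasSum_zeta_two.summable
    simpa using this
  have h := hasSum_integral_of_summable_integral_norm (μ := volume.restrict (Ioo (0 : ℝ) 1))
    (F := fun (k : ℕ) (u : ℝ) => (-1 : ℝ) ^ k * (u ^ k * (-Real.log u))) (fun k => (hIntg k).const_mul _) (by
      refine h1.congr fun k => ?_
      rw [← hval k]
      refine setIntegral_congr_fun measurableSet_Ioo fun u hu => ?_
      simp only [norm_mul, norm_pow, norm_neg, norm_one, one_pow, one_mul]
      rw [← norm_pow, ← norm_neg (Real.log u), ← norm_mul, Real.norm_of_nonneg (hnn k u hu)])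
  have e1 : (fun k : ℕ => ∫ u in Ioo (0 : ℝ) 1, (-1 : ℝ) ^ k * (u ^ k * (-Real.log u))) =
      fun k : ℕ => (-1 : ℝ) ^ k / ((k : ℝ) + 1) ^ 2 := by
    ext k
    rw [integral_const_mul, hval k]
    ring
  rw [e1] at h
  rw [h.unique alt_sum |>.symm]
  refine setIntegral_congr_fun measurableSet_Ioo fun u hu => ?_
  have hg := hasSum_geometric_of_abs_lt_one (r := -u) (by rw [abs_neg, abs_of_pos hu.1]; exact hu.2)
  have hg2 := (hg.mul_right (-Real.log u)).tsum_eq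
  have e2 : ∀ k : ℕ, (-1 : ℝ) ^ k * (u ^ k * (-Real.log u)) = (-u) ^ k * (-Real.log u) := by
    intro k
    rw [neg_pow u k, mul_assoc]
  simp_rw [e2]
  rw [hg2]
  congr 1
  rw [sub_neg_eq_add, one_div]

lemma gm_log_integral : ∫ u, -Real.log u ∂gaussMeasure = Real.pi ^ 2 / (12 * Real.log 2) := by
  have hl := gm_log2
  rw [gm_integral]
  have : ∀ u : ℝ, gd u * (-Real.log u) = (Real.log 2)⁻¹ * (1 / (1 + u) * (-Real.log u)) := by
    intro u
    rw [gd, one_div, mul_inv, one_div, mul_assoc]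
  simp_rw [this]
  rw [integral_const_mul, log_integral_series]
  field_simp

lemma roof_eq (p : ℝ × ℝ) : roof p = -Real.log (TT p) := by
  simp only [roof, TT]
  rw [one_div (_ + _), Real.log_inv, neg_neg]

lemma roof_integral : ∫ p, roof p ∂mu2 = Real.pi ^ 2 / (12 * Real.log 2) := by
  rw [← gm_log_integral, ← mu2_map, integral_map TT_measurable.aemeasurable]
  · simp_rw [roof_eq]
  · exact (Real.measurable_log.neg).aestronglyMeasurable

lemma irr_measurable : MeasurableSet {x : ℝ | Irrational x} := by
  have : {x : ℝ | Irrational x} = (range ((↑) : ℚ → ℝ))ᶜ := by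
    ext x; simp [Irrational]
  rw [this]
  exact (countable_range _).measurableSet.compl

lemma Dset_measurable : MeasurableSet Dset := by
  have hD : Dset = (Ioo (0 : ℝ) 1 ∩ {x | Irrational x}) ×ˢ (Ioo (0 : ℝ) 1 ∩ {x | Irrational x}) := by
    ext p
    constructor
    · rintro ⟨h1, h2, h3, h4⟩
      exact ⟨⟨h1, h2⟩, h3, h4⟩
    · rintro ⟨⟨h1, h2⟩, h3, h4⟩
      exact ⟨h1, h2, h3, h4⟩
  rw [hD]
  exact (measurableSet_Ioo.inter irr_measurable).prod (measurableSet_Ioo.inter irr_measurable)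

lemma mu2_ae_mem : ∀ᵐ p ∂mu2, p ∈ Dset := by
  unfold mu2
  exact (withDensity_absolutelyContinuous _ _).ae_le (ae_restrict_mem Dset_measurable)

lemma gaussMap_TT {p : ℝ × ℝ} (hp : p ∈ Dset) : gaussMap (TT p) = p.1 := by
  have h := hp.1
  rw [gaussMap, TT, one_div_one_div, Int.fract_intCast_add, Int.fract_eq_self.2 ⟨h.1.le, h.2⟩]

lemma pq_TT_one {p : ℝ × ℝ} (hp : p ∈ Dset) : pq (TT p) 1 = ⌊1 / p.2⌋₊ := by
  have h := hp.1
  simp only [pq, Nat.sub_self, Function.iterate_zero, id]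
  rw [TT, one_div_one_div, ← Int.floor_toNat, ← Int.floor_toNat, Int.floor_intCast_add,
    Int.floor_eq_zero_iff.2 ⟨h.1.le, h.2⟩, add_zero]

lemma pq_TT_succ {p : ℝ × ℝ} (hp : p ∈ Dset) (i : ℕ) (hi : 1 ≤ i) : pq (TT p) (i + 1) = pq p.1 i := by
  obtain ⟨j, rfl⟩ : ∃ j, i = j + 1 := ⟨i - 1, by omega⟩
  simp only [pq, Nat.add_sub_cancel]
  rw [Function.iterate_succ_apply, gaussMap_TT hp]

lemma E_iff (N : ℕ) (hN : 0 < N) (c : Fin N → ℕ) {p : ℝ × ℝ} (hp : p ∈ Dset) :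
    (⌊1 / p.2⌋₊ = c ⟨0, hN⟩ ∧ ∀ i : Fin N, 1 ≤ (i : ℕ) → pq p.1 (i : ℕ) = c i) ↔ TT p ∈ Cset N c := by
  constructor
  · rintro ⟨h0, h1⟩ ⟨k, hk⟩
    rcases Nat.eq_zero_or_pos k with rfl | h
    · simp only [zero_add]
      rw [pq_TT_one hp, h0]
    · simp only
      rw [pq_TT_succ hp k h]
      exact h1 ⟨k, hk⟩ h
  · intro h
    refine ⟨?_, fun i hi => ?_⟩
    · rw [← pq_TT_one hp]
      exact h ⟨0, hN⟩
    · rw [← pq_TT_succ hp _ hi]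
      exact h i

lemma rhs_integral (N : ℕ) (hN : 0 < N) (c : Fin N → ℕ) (a b : ℝ) :
    ∫ p in {p ∈ Dset | ⌊1 / p.2⌋₊ = c ⟨0, hN⟩ ∧
            ∀ i : Fin N, 1 ≤ (i : ℕ) → pq p.1 (i : ℕ) = c i},
          (max 0 (roof p - Real.log a) - max 0 (roof p - Real.log b)) ∂mu2 =
      ∫ u in Cset N c, KK a b (-Real.log u) ∂gaussMeasure := by
  rw [← mu2_map, setIntegral_map (Cset_measurable N c) ?_ TT_measurable.aemeasurable]
  · have : ∀ p : ℝ × ℝ, max 0 (roof p - Real.log a) - max 0 (roof p - Real.log b) = KK a b (-Real.log (TT p)) := by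
      intro p; rw [roof_eq]; rfl
    simp_rw [this]
    congr 1
    refine Measure.restrict_congr_set ?_
    filter_upwards [mu2_ae_mem] with p hp
    refine propext ⟨fun h => (E_iff N hN c hp).1 h.2, fun h => ⟨hp, (E_iff N hN c hp).2 h⟩⟩
  · unfold KK
    refine Measurable.aestronglyMeasurable ?_
    have := Real.measurable_log
    fun_prop

lemma limit_eq (N : ℕ) (hN : 0 < N) (c : Fin N → ℕ) (a b : ℝ) (ha : 1 < a) (hab : a < b) :
    6 / Real.pi ^ 2 * ∫ v in a..b, HH N c (1 / v) / v = (∫ p, roof p ∂mu2)⁻¹ *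
        ∫ p in {p ∈ Dset | ⌊1 / p.2⌋₊ = c ⟨0, hN⟩ ∧
            ∀ i : Fin N, 1 ≤ (i : ℕ) → pq p.1 (i : ℕ) = c i},
          (max 0 (roof p - Real.log a) - max 0 (roof p - Real.log b)) ∂mu2 := by
  rw [rhs_integral, roof_integral, HH_fubini N c a b ha hab]
  have hl := gm_log2
  have hpi := Real.pi_pos
  field_simp
  ring


/-- `t n`, in `(0,1)` and irrational -/
lemma tt_mem {α : ℝ} (h0 : α ∈ Ioo (0 : ℝ) 1) (hi : Irrational α) (n : ℕ) :
    gaussMap^[n] α ∈ Ioo (0 : ℝ) 1 ∧ Irrational (gaussMap^[n] α) := by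
  induction n with
  | zero => exact ⟨h0, hi⟩
  | succ n ih =>
    rw [Function.iterate_succ_apply']
    obtain ⟨h1, h2⟩ := ih
    have h3 : Irrational (gaussMap (gaussMap^[n] α)) := by
      rw [gaussMap, one_div, Int.fract]
      exact (irrational_inv_iff.2 h2).sub_intCast _
    refine ⟨⟨lt_of_le_of_ne (Int.fract_nonneg _) ?_, Int.fract_lt_one _⟩, h3⟩
    intro h
    have h4 : gaussMap (gaussMap^[n] α) = 0 := h.symm
    rw [h4] at h3
    exact h3 ⟨0, by simp⟩

lemma tt_step {α : ℝ} (h0 : α ∈ Ioo (0 : ℝ) 1) (hi : Irrational α) (n : ℕ) :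
    gaussMap^[n] α * ((pq α (n + 1) : ℝ) + gaussMap^[n + 1] α) = 1 ∧ 1 ≤ pq α (n + 1) := by
  obtain ⟨h1, h2⟩ := tt_mem h0 hi n
  rw [Function.iterate_succ_apply', pq, Nat.add_sub_cancel, gaussMap]
  have hp : 0 < 1 / gaussMap^[n] α := one_div_pos.2 h1.1
  have e : ((⌊1 / gaussMap^[n] α⌋₊ : ℕ) : ℝ) = (⌊1 / gaussMap^[n] α⌋ : ℝ) :=
    natCast_floor_eq_intCast_floor hp.le
  rw [e, Int.floor_add_fract]
  refine ⟨mul_one_div_cancel h1.1.ne', ?_⟩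
  rw [Nat.one_le_floor_iff]
  exact (one_le_div h1.1).2 h1.2.le

/-- digit read-off -/
lemma tt_read (c : ℕ) (t : ℝ) (ht : t ∈ Ioo (0 : ℝ) 1) :
    gaussMap (1 / ((c : ℝ) + t)) = t ∧ ⌊1 / (1 / ((c : ℝ) + t))⌋₊ = c := by
  rw [gaussMap, one_div_one_div]
  constructor
  · rw [Int.fract_natCast_add, Int.fract_eq_self]
    exact ⟨ht.1.le, ht.2⟩
  · rw [Nat.floor_eq_iff (by have := ht.1; positivity)]
    constructor <;> linarith [ht.1, ht.2]

lemma q_succ (b : ℕ → ℕ) (n : ℕ) : qden b (n + 2) = b (n + 2) * qden b (n + 1) + qden b n := rfl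
lemma p_succ (b : ℕ → ℕ) (n : ℕ) : pnum b (n + 2) = b (n + 2) * pnum b (n + 1) + pnum b n := rfl

lemma q_pos (b : ℕ → ℕ) (hb : ∀ n, 1 ≤ b (n + 1)) (n : ℕ) : 1 ≤ qden b n ∧ 1 ≤ qden b (n + 1) := by
  induction n with
  | zero => exact ⟨le_refl _, hb 0⟩
  | succ n ih => exact ⟨ih.2, by rw [q_succ]; exact le_trans ih.1 (Nat.le_add_left _ _)⟩

lemma q_lt (b : ℕ → ℕ) (hb : ∀ n, 1 ≤ b (n + 1)) (n : ℕ) : qden b (n + 1) < qden b (n + 2) := by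
  rw [q_succ]
  have := (q_pos b hb n).1
  have := hb (n + 1)
  nlinarith

lemma q_mono (b : ℕ → ℕ) (hb : ∀ n, 1 ≤ b (n + 1)) : Monotone (qden b) := by
  refine monotone_nat_of_le_succ fun n => ?_
  cases n with
  | zero => exact hb 0
  | succ n => exact (q_lt b hb n).le

lemma q_ge (b : ℕ → ℕ) (hb : ∀ n, 1 ≤ b (n + 1)) (n : ℕ) : n ≤ qden b n := by
  induction n with
  | zero => exact Nat.zero_le _
  | succ n ih =>
    cases n with
    | zero => exact hb 0
    | succ n =>
      have h := q_lt b hb n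
      show n + 2 ≤ qden b (n + 2)
      omega

lemma p_le_q (b : ℕ → ℕ) (hb : ∀ n, 1 ≤ b (n + 1)) (n : ℕ) :
    pnum b n ≤ qden b n ∧ pnum b (n + 1) ≤ qden b (n + 1) := by
  induction n with
  | zero => exact ⟨Nat.zero_le _, hb 0⟩
  | succ n ih =>
    refine ⟨ih.2, ?_⟩
    rw [q_succ, p_succ]
    exact Nat.add_le_add (Nat.mul_le_mul_left _ ih.2) ih.1

lemma pq_det (b : ℕ → ℕ) (n : ℕ) :
    (pnum b (n + 1) : ℤ) * qden b n - pnum b n * qden b (n + 1) = (-1) ^ n := by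
  induction n with
  | zero => simp [pnum, qden]
  | succ n ih =>
    rw [q_succ, p_succ, pow_succ, ← ih]
    push_cast
    ring

lemma alpha_eq {α : ℝ} (h0 : α ∈ Ioo (0 : ℝ) 1) (hi : Irrational α) (m : ℕ) :
    α * ((qden (pq α) (m + 1) : ℝ) + qden (pq α) m * gaussMap^[m + 1] α) =
      (pnum (pq α) (m + 1) : ℝ) + pnum (pq α) m * gaussMap^[m + 1] α := by
  induction m with
  | zero =>
    have := (tt_step h0 hi 0).1
    simpa [pnum, qden] using this
  | succ m ih =>
    obtain ⟨h1, h2⟩ := tt_step h0 hi (m + 1)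
    have h3 := (tt_mem h0 hi (m + 1)).1.1
    rw [q_succ, p_succ]
    push_cast
    rw [← sub_eq_zero] at ih ⊢
    have : gaussMap^[m + 1] α * (α * ((pq α (m + 2) : ℝ) * qden (pq α) (m + 1) + qden (pq α) m +
      qden (pq α) (m + 1) * gaussMap^[m + 2] α) - ((pq α (m + 2) : ℝ) * pnum (pq α) (m + 1) + pnum (pq α) m +
      pnum (pq α) (m + 1) * gaussMap^[m + 2] α)) = 0 := by
      rw [← ih]
      linear_combination (α * qden (pq α) (m + 1) - pnum (pq α) (m + 1)) * h1
    exact (mul_eq_zero.1 this).resolve_left h3.ne'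

/-- the converse: a matrix of determinant `±1` comes from the continued fraction -/
lemma conv_exists (k : ℕ) : ∀ (q' q : ℕ) (p' p : ℤ) (α t : ℝ), q ≤ k → α ∈ Ioo (0 : ℝ) 1 → 1 ≤ q → q < q' →
    0 ≤ p → p ≤ q → (p * q' - p' * q = 1 ∨ p * q' - p' * q = -1) → t ∈ Ioo (0 : ℝ) 1 →
    α * ((q' : ℝ) + q * t) = p' + p * t →
    ∃ m, qden (pq α) (m + 1) = q' ∧ qden (pq α) m = q ∧ gaussMap^[m + 1] α = t := by
  induction k with
  | zero => intro q' q p' p α t h1 _ h2; omega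
  | succ k ih =>
    intro q' q p' p α t hk hα hq hqq hp0 hp hdet ht he
    obtain rfl | hq2 := Nat.eq_or_lt_of_le hq
    · -- base case
      have hc : p = 0 ∨ p = 1 := by omega
      have hq'r : (2 : ℝ) ≤ q' := by exact_mod_cast hqq
      have ht0 := ht.1
      rcases hc with rfl | rfl
      · have hp' : p' = 1 ∨ p' = -1 := by omega
        rcases hp' with rfl | rfl
        · have hα' : α = 1 / ((q' : ℝ) + t) := by
            rw [eq_div_iff (by positivity)]
            push_cast at he
            linarith
          obtain ⟨r1, r2⟩ := tt_read q' t ht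
          rw [← hα'] at r1 r2
          refine ⟨0, ?_, rfl, r1⟩
          exact r2
        · exfalso
          push_cast at he
          have := hα.1
          have : 0 < α * ((q' : ℝ) + 1 * t) := by positivity
          linarith
      · have hp' : p' = q' - 1 ∨ p' = q' + 1 := by
          push_cast at hdet
          omega
        rcases hp' with rfl | rfl
        · obtain ⟨d, rfl⟩ : ∃ d, q' = d + 1 := ⟨q' - 1, by omega⟩
          have hd : (1 : ℝ) ≤ d := by exact_mod_cast (by omega : 1 ≤ d)
          push_cast at he
          have hs : 1 / ((d : ℝ) + t) ∈ Ioo (0 : ℝ) 1 := by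
            refine ⟨by positivity, ?_⟩
            rw [div_lt_one (by positivity)]
            linarith
          have hα' : α = 1 / (((1 : ℕ) : ℝ) + 1 / ((d : ℝ) + t)) := by
            have : (d : ℝ) + t ≠ 0 := by positivity
            rw [eq_div_iff (by positivity)]
            push_cast
            field_simp
            linarith
          obtain ⟨r1, r2⟩ := tt_read 1 _ hs
          rw [← hα'] at r1 r2
          obtain ⟨r3, r4⟩ := tt_read d t ht
          refine ⟨1, ?_, ?_, ?_⟩
          · have e1 : pq α 1 = 1 := r2
            have e2 : pq α 2 = d := by
              rw [pq]
              show ⌊1 / gaussMap α⌋₊ = d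
              rw [r1, r4]
            show pq α 2 * pq α 1 + 1 = d + 1
            rw [e1, e2, mul_one]
          · exact r2
          · show gaussMap (gaussMap α) = t
            rw [r1, r3]
        · exfalso
          push_cast at he
          have := hα.2
          have h : 0 < (1 - α) * ((q' : ℝ) + 1 * t) := mul_pos (by linarith) (by positivity)
          nlinarith
    · -- step
      obtain ⟨c, hc⟩ : ∃ c, c = q' / q := ⟨_, rfl⟩
      obtain ⟨r, hr⟩ : ∃ r, r = q' % q := ⟨_, rfl⟩
      have hdm : q * c + r = q' := by rw [hc, hr]; exact Nat.div_add_mod _ _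
      have hrq : r < q := by rw [hr]; exact Nat.mod_lt _ (by omega)
      have hc1 : 1 ≤ c := by rw [hc]; exact (Nat.one_le_div_iff (by omega)).2 hqq.le
      have hdet' : p * r - (p' - c * p) * q = 1 ∨ p * r - (p' - c * p) * q = -1 := by
        rw [← hdm] at hdet
        push_cast at hdet
        rcases hdet with h | h
        · left; linarith
        · right; linarith
      have hr1 : 1 ≤ r := by
        by_contra hcon
        have hr0 : r = 0 := by omega
        have hd : (q : ℤ) ∣ 1 := by
          rcases hdet' with h | h
          · exact ⟨-(p' - c * p), by rw [hr0] at h; push_cast at h; linarith⟩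
          · exact ⟨(p' - c * p), by rw [hr0] at h; push_cast at h; linarith⟩
        have := Int.le_of_dvd one_pos hd
        omega
      have hq2' : (2 : ℤ) ≤ q := by exact_mod_cast hq2
      have hr1' : (1 : ℤ) ≤ r := by exact_mod_cast hr1
      have hb0 : 0 ≤ p' - c * p := by
        by_contra hcon
        have h1 : p' - c * p ≤ -1 := by omega
        have h2 : 0 ≤ p * r := by positivity
        rcases hdet' with h | h <;> nlinarith
      have hb1 : p' - c * p ≤ r := by
        by_contra hcon
        have h1 : (r : ℤ) + 1 ≤ p' - c * p := by omega
        have h2 : p * r ≤ q * r := mul_le_mul_of_nonneg_right hp (by omega)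
        rcases hdet' with h | h <;> nlinarith
      have ht0 := ht.1
      have hc1r : (1 : ℝ) ≤ c := by exact_mod_cast hc1
      have hs : 1 / ((c : ℝ) + t) ∈ Ioo (0 : ℝ) 1 := by
        refine ⟨by positivity, ?_⟩
        rw [div_lt_one (by positivity)]
        linarith
      obtain ⟨m, m1, m2, m3⟩ := ih q r p (p' - c * p) α (1 / ((c : ℝ) + t)) (by omega) hα hr1 hrq hb0 hb1
        (by rcases hdet' with h | h
            · right; linarith
            · left; linarith) hs (by
          have : (c : ℝ) + t ≠ 0 := by positivity
          rw [← hdm] at he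
          push_cast at he ⊢
          field_simp
          linarith)
      obtain ⟨r3, r4⟩ := tt_read c t ht
      have e2 : pq α (m + 2) = c := by
        rw [pq]
        show ⌊1 / gaussMap^[m + 1] α⌋₊ = c
        rw [m3, r4]
      refine ⟨m + 1, ?_, m1, ?_⟩
      · rw [q_succ, m1, m2, e2, ← hdm, mul_comm]
      · rw [Function.iterate_succ_apply', m3, r3]


lemma pq_ge {α : ℝ} (h0 : α ∈ Ioo (0 : ℝ) 1) (hi : Irrational α) (n : ℕ) : 1 ≤ pq α (n + 1) :=
  (tt_step h0 hi n).2

lemma nIndex_set_nonempty {α : ℝ} (h0 : α ∈ Ioo (0 : ℝ) 1) (hi : Irrational α) (R : ℝ) :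
    {n : ℕ | R < (qden (pq α) n : ℝ)}.Nonempty := by
  obtain ⟨n, hn⟩ := exists_nat_gt R
  refine ⟨n, hn.trans_le ?_⟩
  exact_mod_cast q_ge _ (pq_ge h0 hi) n

lemma nIndex_eq {α : ℝ} (h0 : α ∈ Ioo (0 : ℝ) 1) (hi : Irrational α) {R : ℝ} {m : ℕ}
    (h1 : (qden (pq α) m : ℝ) ≤ R) (h2 : R < qden (pq α) (m + 1)) : nIndex α R = m + 1 := by
  refine le_antisymm (Nat.sInf_le h2) ?_
  by_contra hcon
  have h3 : nIndex α R ≤ m := by omega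
  have h4 : R < (qden (pq α) (nIndex α R) : ℝ) := Nat.sInf_mem (nIndex_set_nonempty h0 hi R)
  have h5 : (qden (pq α) (nIndex α R) : ℝ) ≤ qden (pq α) m := by
    exact_mod_cast q_mono _ (pq_ge h0 hi) h3
  linarith

lemma nIndex_spec {α : ℝ} (h0 : α ∈ Ioo (0 : ℝ) 1) (hi : Irrational α) {R : ℝ} (hR : 1 ≤ R) :
    ∃ m, nIndex α R = m + 1 ∧ (qden (pq α) m : ℝ) ≤ R ∧ R < qden (pq α) (m + 1) := by
  have h4 : R < (qden (pq α) (nIndex α R) : ℝ) := Nat.sInf_mem (nIndex_set_nonempty h0 hi R)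
  obtain ⟨m, hm⟩ : ∃ m, nIndex α R = m + 1 := by
    refine Nat.exists_eq_succ_of_ne_zero fun h => ?_
    rw [h] at h4
    simp only [qden, Nat.cast_one] at h4
    linarith
  refine ⟨m, hm, ?_, hm ▸ h4⟩
  by_contra hcon
  have : nIndex α R ≤ m := Nat.sInf_le (not_le.1 hcon)
  omega

/-- the interval pair -/
def JJ (n x w : ℕ) : Set ℝ :=
  Ioo ((w : ℝ) / n - 1 / (n * (n + x))) (w / n) ∪ Ioo (1 - (w : ℝ) / n) (1 - (w : ℝ) / n + 1 / (n * (n + x)))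

/-- the cell -/
def BB (R : ℝ) (n x : ℕ) : Set ℝ :=
  {α : ℝ | (α ∈ Ioo (0 : ℝ) 1 ∧ Irrational α) ∧ qden (pq α) (nIndex α R) = n ∧ qden (pq α) (nIndex α R - 1) = x}

lemma J1_solve {n x w : ℕ} {p : ℤ} (hx : 1 ≤ x) (hn : x < n) (hdet : (w : ℤ) * x - p * n = 1) {β : ℝ}
    (hβ : β ∈ Ioo ((w : ℝ) / n - 1 / (n * (n + x))) (w / n)) :
    ∃ t ∈ Ioo (0 : ℝ) 1, β * ((n : ℝ) + x * t) = w + p * t := by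
  have hxr : (1 : ℝ) ≤ x := by exact_mod_cast hx
  have hnr : (x : ℝ) < n := by exact_mod_cast hn
  have hn0 : (0 : ℝ) < n := by linarith
  have hd : (w : ℝ) * x - p * n = 1 := by exact_mod_cast hdet
  obtain ⟨h1, h2⟩ := hβ
  obtain ⟨δ, hδ⟩ : ∃ δ, δ = (w : ℝ) / n - β := ⟨_, rfl⟩
  have hβ' : n * β = w - n * δ := by rw [hδ]; field_simp; ring
  have hδ0 : 0 < δ := by linarith
  have hδ1 : δ * (n * (n + x)) < 1 := by
    rw [← lt_div_iff₀ (by positivity)]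
    linarith
  have hden : 0 < x * β - p := by
    have : n * (x * β - p) = 1 - x * (n * δ) := by linear_combination x * hβ' + hd
    have h3 : 0 < n * (x * β - p) := by
      rw [this]
      nlinarith [mul_pos hδ0 (mul_pos hn0 hn0)]
    exact pos_of_mul_pos_right h3 hn0.le |> fun h => h
  refine ⟨(w - n * β) / (x * β - p), ⟨?_, ?_⟩, ?_⟩
  · apply div_pos _ hden
    rw [hβ']
    have := mul_pos hn0 hδ0
    linarith
  · rw [div_lt_one hden, hβ']
    have : n * (x * β - p) = 1 - x * (n * δ) := by linear_combination x * hβ' + hd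
    have h3 : n * (n * δ) < n * (x * β - p) := by
      rw [this]; nlinarith
    have := lt_of_mul_lt_mul_left h3 hn0.le
    linarith
  · have hne := hden.ne'
    rw [div_eq_mul_inv]
    have h5 : (x * β - p) * (x * β - p)⁻¹ = 1 := mul_inv_cancel₀ hne
    linear_combination (w - n * β) * h5

lemma BB_eq {R : ℝ} (hR : 1 ≤ R) {n x w : ℕ} (hx : 1 ≤ x) (hxR : (x : ℝ) ≤ R) (hn : R < n)
    (hw : w < n) (hinv : ((w * x : ℕ) : ZMod n) = 1) :
    BB R n x = JJ n x w ∩ {α | Irrational α} := by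
  have hxr : (1 : ℝ) ≤ x := by exact_mod_cast hx
  have hnr : (x : ℝ) < n := by linarith
  have hn0 : (0 : ℝ) < n := by linarith
  have hxn : x < n := by exact_mod_cast hnr
  have hn2 : 2 ≤ n := by omega
  have : Fact (1 < n) := ⟨by omega⟩
  have hw1 : 1 ≤ w := by
    rcases Nat.eq_zero_or_pos w with h | h
    · subst h
      simp at hinv
    · exact h
  have hwr : (1 : ℝ) ≤ w := by exact_mod_cast hw1
  have hwr' : (w : ℝ) + 1 ≤ n := by exact_mod_cast hw
  have hLpos : 0 < 1 / ((n : ℝ) * (n + x)) := by positivity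
  have hLle : 1 / ((n : ℝ) * (n + x)) ≤ 1 / n := by
    apply one_div_le_one_div_of_le hn0
    nlinarith
  have hw_ge : 1 / (n : ℝ) ≤ w / n := by gcongr
  have hw_le : (w : ℝ) / n + 1 / n ≤ 1 := by
    rw [← add_div, div_le_one hn0]; exact hwr'
  obtain ⟨p, hp⟩ : ∃ p : ℤ, (w : ℤ) * x - p * n = 1 := by
    have : (((w * x : ℤ) - 1 : ℤ) : ZMod n) = 0 := by
      push_cast at hinv ⊢
      rw [hinv, sub_self]
    obtain ⟨p, hp⟩ := (ZMod.intCast_zmod_eq_zero_iff_dvd _ n).1 this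
    exact ⟨p, by linarith⟩
  have hnz : (2 : ℤ) ≤ n := by exact_mod_cast hn2
  have hxz : (1 : ℤ) ≤ x := by exact_mod_cast hx
  have hwz : (1 : ℤ) ≤ w := by exact_mod_cast hw1
  have hwz' : (w : ℤ) + 1 ≤ n := by exact_mod_cast hw
  have hp0 : 0 ≤ p := by
    by_contra hcon
    have : p ≤ -1 := by omega
    nlinarith
  have hpx : p ≤ x := by
    by_contra hcon
    have : (x : ℤ) + 1 ≤ p := by omega
    nlinarith
  ext α
  constructor
  · rintro ⟨⟨h0, hi⟩, e1, e2⟩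
    refine ⟨?_, hi⟩
    obtain ⟨m, hm, -, -⟩ := nIndex_spec h0 hi hR
    rw [hm] at e1 e2
    rw [Nat.add_sub_cancel] at e2
    have hα := alpha_eq h0 hi m
    have hdet := pq_det (pq α) m
    have hple := (p_le_q (pq α) (pq_ge h0 hi) m).2
    have ht := (tt_mem h0 hi (m + 1)).1
    rw [e1] at hple
    rw [e1, e2] at hα hdet
    generalize gaussMap^[m + 1] α = t at hα ht
    generalize pnum (pq α) (m + 1) = P' at hα hdet hple
    generalize pnum (pq α) m = P at hα hdet
    have ht0 := ht.1
    have ht1 := ht.2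
    have hD : 0 < (n : ℝ) + x * t := by positivity
    have hfrac : t / (n * (n + x * t)) < 1 / (n * (n + x)) := by
      rw [div_lt_div_iff₀ (by positivity) (by positivity)]
      have : 0 < n * n * (1 - t) := by
        have : 0 < 1 - t := by linarith
        positivity
      nlinarith
    have hfrac0 : 0 < t / (n * (n + x * t)) := by positivity
    rcases neg_one_pow_eq_or ℤ m with h | h
    · rw [h] at hdet
      have hP : P' = w := by
        have hh : ((P' * x : ℕ) : ZMod n) = 1 := by
          have := congrArg (Int.cast : ℤ → ZMod n) hdet
          push_cast at this ⊢
          simpa using this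
        have hh2 : ((P' : ℕ) : ZMod n) = (w : ℕ) := by
          push_cast at hh hinv
          calc (P' : ZMod n) = P' * (w * x) := by rw [hinv, mul_one]
            _ = (P' * x) * w := by ring
            _ = w := by rw [hh, one_mul]
        have hlt : P' < n := by
          rcases Nat.lt_or_ge P' n with h | h
          · exact h
          · exfalso
            have : P' = n := by omega
            rw [this] at hh
            simp at hh
        have := (ZMod.natCast_eq_natCast_iff' _ _ _).1 hh2
        rwa [Nat.mod_eq_of_lt hlt, Nat.mod_eq_of_lt hw] at this
      left
      have hdr : (P' : ℝ) * x - P * n = 1 := by exact_mod_cast hdet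
      have key : α = w / n - t / (n * (n + x * t)) := by
        rw [← hP]
        have : α = (P' + P * t) / (n + x * t) := by rw [eq_div_iff hD.ne', hα]
        rw [this]
        field_simp
        linear_combination (-t) * hdr
      constructor <;> linarith
    · rw [h] at hdet
      have hPw : P' + w = n := by
        have hh : ((P' * x : ℕ) : ZMod n) = -1 := by
          have := congrArg (Int.cast : ℤ → ZMod n) hdet
          push_cast at this ⊢
          simpa using this
        have hh2 : ((P' + w : ℕ) : ZMod n) = 0 := by
          push_cast at hh hinv ⊢
          have : (P' : ZMod n) = - w := by
            calc (P' : ZMod n) = P' * (w * x) := by rw [hinv, mul_one]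
              _ = (P' * x) * w := by ring
              _ = -w := by rw [hh]; ring
          rw [this]; ring
        have hlt : P' < n := by
          rcases Nat.lt_or_ge P' n with h | h
          · exact h
          · exfalso
            have : P' = n := by omega
            rw [this] at hh
            simp at hh
        obtain ⟨k, hk⟩ := (ZMod.natCast_eq_zero_iff _ _).1 hh2
        have hk1 : k < 2 := by
          by_contra hcon
          have : n * 2 ≤ n * k := Nat.mul_le_mul_left _ (by omega)
          omega
        have hk0 : k ≠ 0 := by
          rintro rfl
          omega
        have : k = 1 := by omega
        rw [this] at hk
        omega
      right
      have hdr : (P' : ℝ) * x - P * n = -1 := by exact_mod_cast hdet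
      have hPr : (P' : ℝ) = n - w := by
        rw [← hPw]; push_cast; ring
      have key : α = 1 - w / n + t / (n * (n + x * t)) := by
        have : α = (P' + P * t) / (n + x * t) := by rw [eq_div_iff hD.ne', hα]
        have e3 : 1 - (w : ℝ) / n = P' / n := by rw [hPr]; field_simp
        rw [this, e3]
        field_simp
        linear_combination (-t) * hdr
      constructor <;> linarith
  · rintro ⟨hJ, hi⟩
    have hi' : Irrational α := hi
    rcases hJ with hJ | hJ
    · obtain ⟨t, ht, he⟩ := J1_solve hx hxn hp hJ
      have h0 : α ∈ Ioo (0 : ℝ) 1 := ⟨by linarith [hJ.1], by linarith [hJ.2]⟩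
      obtain ⟨m, m1, m2, -⟩ := conv_exists x n x w p α t le_rfl h0 hx hxn hp0 hpx (Or.inr (by linarith)) ht
        (by push_cast; exact he)
      have hidx := nIndex_eq h0 hi' (R := R) (m := m) (by rw [m2]; exact hxR) (by rw [m1]; exact hn)
      exact ⟨⟨h0, hi'⟩, by rw [hidx, m1], by rw [hidx, Nat.add_sub_cancel, m2]⟩
    · have hJ' : 1 - α ∈ Ioo ((w : ℝ) / n - 1 / (n * (n + x))) (w / n) :=
        ⟨by linarith [hJ.2], by linarith [hJ.1]⟩
      obtain ⟨t, ht, he⟩ := J1_solve hx hxn hp hJ'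
      have h0 : α ∈ Ioo (0 : ℝ) 1 := ⟨by linarith [hJ.1], by linarith [hJ.2]⟩
      obtain ⟨m, m1, m2, -⟩ := conv_exists x n x (n - w) (x - p) α t le_rfl h0 hx hxn (by linarith) (by linarith)
        (Or.inl (by linarith)) ht (by push_cast; linarith)
      have hidx := nIndex_eq h0 hi' (R := R) (m := m) (by rw [m2]; exact hxR) (by rw [m1]; exact hn)
      exact ⟨⟨h0, hi'⟩, by rw [hidx, m1], by rw [hidx, Nat.add_sub_cancel, m2]⟩


lemma gm_Ioo {u v : ℝ} (hu : 0 ≤ u) (huv : u ≤ v) (hv : v ≤ 1) :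
    (gaussMeasure (Ioo u v)).toReal = ∫ x in u..v, gd x := by
  have hsub : Ioo u v ∩ Ioo 0 1 = Ioo u v := by
    rw [inter_eq_left]; exact Ioo_subset_Ioo hu hv
  rw [gm_apply _ measurableSet_Ioo, hsub, intervalIntegral.integral_of_le huv, integral_Ioc_eq_integral_Ioo,
    integral_eq_lintegral_of_nonneg_ae]
  · rw [EventuallyLE, ae_restrict_iff' measurableSet_Ioo]
    exact ae_of_all _ fun x hx => (gd_pos (hu.trans hx.1.le)).le
  · exact gd_measurable.aestronglyMeasurable

lemma gd_lip {x y : ℝ} (hx : 0 ≤ x) (hy : 0 ≤ y) : |gd x - gd y| ≤ |x - y| / Real.log 2 := by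
  have hl := gm_log2
  have : gd x - gd y = (y - x) / (1 + x) / (1 + y) / Real.log 2 := by
    rw [gd, gd]
    field_simp
    ring
  rw [this, abs_div, abs_of_pos hl]
  refine div_le_div_of_nonneg_right ?_ hl.le
  rw [abs_div, abs_div, abs_of_pos (by positivity : 0 < 1 + x), abs_of_pos (by positivity : 0 < 1 + y), abs_sub_comm]
  exact (div_le_self (by positivity) (by linarith)).trans (div_le_self (abs_nonneg _) (by linarith))

lemma gm_Ioo_approx {u v w L : ℝ} (hu : 0 ≤ u) (hv : v ≤ 1) (hL : v - u = L) (hL0 : 0 ≤ L) (hw : w ∈ Icc u v) :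
    |(gaussMeasure (Ioo u v)).toReal - L * gd w| ≤ L ^ 2 / Real.log 2 := by
  have huv : u ≤ v := by linarith
  have hl := gm_log2
  rw [gm_Ioo hu huv hv]
  have hIntg : IntervalIntegrable gd volume u v := by
    refine ContinuousOn.intervalIntegrable (gd_continuousOn.mono ?_)
    rw [uIcc_of_le huv]
    exact Icc_subset_Icc hu hv
  have e2 : (∫ x in u..v, gd x) - L * gd w = ∫ x in u..v, (gd x - gd w) := by
    rw [intervalIntegral.integral_sub hIntg (by simp), intervalIntegral.integral_const, hL, smul_eq_mul]
  rw [e2]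
  have := intervalIntegral.norm_integral_le_of_norm_le_const (a := u) (b := v) (f := fun x => gd x - gd w)
    (C := L / Real.log 2) (by
      intro x hx
      rw [uIoc_of_le huv] at hx
      rw [Real.norm_eq_abs]
      refine (gd_lip (hu.trans hx.1.le) (hu.trans hw.1)).trans ?_
      gcongr
      rw [abs_le]
      constructor <;> linarith [hx.1, hx.2, hw.1, hw.2])
  rw [hL, abs_of_nonneg hL0, Real.norm_eq_abs] at this
  refine this.trans (le_of_eq ?_)
  ring

lemma JJ_measurable (n x w : ℕ) : MeasurableSet (JJ n x w) := measurableSet_Ioo.union measurableSet_Ioo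

lemma JJ_approx {n x w : ℕ} (hx : 1 ≤ x) (hxn : x < n) (hw1 : 1 ≤ w) (hw : w < n) :
    |(gaussMeasure (JJ n x w)).toReal - 1 / (n * (n + x)) * gdS ((w : ℝ) / n)| ≤
      2 / Real.log 2 / (n : ℝ) ^ 4 := by
  have hl := gm_log2
  have hxr : (1 : ℝ) ≤ x := by exact_mod_cast hx
  have hnr : (x : ℝ) < n := by exact_mod_cast hxn
  have hn0 : (0 : ℝ) < n := by linarith
  have hwr : (1 : ℝ) ≤ w := by exact_mod_cast hw1
  have hwr' : (w : ℝ) + 1 ≤ n := by exact_mod_cast hw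
  obtain ⟨L, hL⟩ : ∃ L, L = 1 / ((n : ℝ) * (n + x)) := ⟨_, rfl⟩
  have hLpos : 0 < L := by rw [hL]; positivity
  have hLle : 2 * L ≤ 1 / n := by
    rw [hL, mul_one_div, div_le_div_iff₀ (by positivity) hn0]
    nlinarith
  have hLle2 : L ^ 2 ≤ 1 / (n : ℝ) ^ 4 := by
    have : L ≤ 1 / (n : ℝ) ^ 2 := by
      rw [hL]
      apply one_div_le_one_div_of_le (by positivity)
      nlinarith
    calc L ^ 2 ≤ (1 / (n : ℝ) ^ 2) ^ 2 := by gcongr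
      _ = _ := by rw [div_pow, ← pow_mul]; norm_num
  have hw_ge : 1 / (n : ℝ) ≤ w / n := by gcongr
  have hw_le : (w : ℝ) / n + 1 / n ≤ 1 := by
    rw [← add_div, div_le_one hn0]; exact hwr'
  have hdisj : Disjoint (Ioo ((w : ℝ) / n - L) (w / n)) (Ioo (1 - (w : ℝ) / n) (1 - (w : ℝ) / n + L)) := by
    rw [Set.disjoint_left]
    rintro y ⟨h1, h2⟩ ⟨h3, h4⟩
    rcases Nat.lt_or_ge n (2 * w) with h | h
    · have h5 : (n : ℝ) + 1 ≤ 2 * w := by exact_mod_cast h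
      have h6 : 1 + 1 / (n : ℝ) ≤ 2 * (w / n) := by
        have : ((n : ℝ) + 1) / n ≤ 2 * w / n := by gcongr
        rw [add_div, div_self hn0.ne'] at this
        linarith [mul_div_assoc (2 : ℝ) w n]
      linarith
    · have h5 : 2 * (w : ℝ) ≤ n := by exact_mod_cast h
      have h6 : 2 * ((w : ℝ) / n) ≤ 1 := by
        rw [← mul_div_assoc, div_le_one hn0]; exact h5
      linarith
  have a1 := gm_Ioo_approx (u := (w : ℝ) / n - L) (v := w / n) (w := w / n) (L := L) (by linarith) (by linarith)
    (by ring) hLpos.le ⟨by linarith, le_rfl⟩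
  have a2 := gm_Ioo_approx (u := 1 - (w : ℝ) / n) (v := 1 - (w : ℝ) / n + L) (w := 1 - w / n) (L := L)
    (by linarith) (by linarith) (by ring) hLpos.le ⟨le_rfl, by linarith⟩
  rw [JJ, ← hL, measure_union hdisj measurableSet_Ioo,
    ENNReal.toReal_add (measure_ne_top _ _) (measure_ne_top _ _), gdS]
  have hb : L ^ 2 / Real.log 2 ≤ 1 / (n : ℝ) ^ 4 / Real.log 2 := by gcongr
  have e : 2 / Real.log 2 / (n : ℝ) ^ 4 = 1 / (n : ℝ) ^ 4 / Real.log 2 + 1 / (n : ℝ) ^ 4 / Real.log 2 := by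
    field_simp
    norm_num
  rw [e]
  rw [abs_le] at a1 a2 ⊢
  constructor <;> linarith [a1.1, a1.2, a2.1, a2.2]

lemma gm_ae_irr : ∀ᵐ x ∂gaussMeasure, Irrational x := gm_ac.ae_le ae_irr

lemma gm_inter_irr (s : Set ℝ) : gaussMeasure (s ∩ {α | Irrational α}) = gaussMeasure s := by
  refine measure_congr ?_
  filter_upwards [gm_ae_irr] with x hx
  apply propext
  exact ⟨fun h => h.1, fun h => ⟨h, hx⟩⟩

/-- the set with prescribed last denominator `n` and ratio in the cylinder -/
def BN (N : ℕ) (c : Fin N → ℕ) (R : ℝ) (n : ℕ) : Set ℝ :=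
  {α : ℝ | (α ∈ Ioo (0 : ℝ) 1 ∧ Irrational α) ∧ qden (pq α) (nIndex α R) = n ∧
    (qden (pq α) (nIndex α R - 1) : ℝ) / n ∈ Cset N c}

open Classical in
lemma BN_main (N : ℕ) (c : Fin N → ℕ) {R : ℝ} (hR : 1 ≤ R) (n : ℕ) [NeZero n] (hn : R < n) :
    MeasurableSet (BN N c R n) ∧
    |(gaussMeasure (BN N c R n)).toReal - (n.totient : ℝ) / (n : ℝ) ^ 2 * Psi N c n (R / n)| ≤
      2 / Real.log 2 / (n : ℝ) ^ 3 := by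
  have hl := gm_log2
  have hn0 : (0 : ℝ) < n := by linarith
  have hn1 : 1 < n := by exact_mod_cast (hR.trans_lt hn)
  have : Fact (1 < n) := ⟨hn1⟩
  set S : Finset (ZMod n)ˣ := Finset.univ.filter fun u =>
    ((u : ZMod n).val : ℝ) / n ∈ Cset N c ∩ Iic (R / n) with hS
  have hval1 : ∀ u : (ZMod n)ˣ, 1 ≤ (u : ZMod n).val := by
    intro u
    rw [Nat.one_le_iff_ne_zero, Ne, ZMod.val_eq_zero]
    exact u.ne_zero
  have hvaln : ∀ u : (ZMod n)ˣ, (u : ZMod n).val < n := fun u => ZMod.val_lt _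
  have hinv : ∀ u : (ZMod n)ˣ, (((↑u⁻¹ : ZMod n).val * (u : ZMod n).val : ℕ) : ZMod n) = 1 := by
    intro u
    push_cast
    rw [ZMod.natCast_zmod_val, ZMod.natCast_zmod_val, Units.inv_mul]
  have hSR : ∀ u ∈ S, ((u : ZMod n).val : ℝ) ≤ R := by
    intro u hu
    have := (Finset.mem_filter.1 hu).2.2
    rw [mem_Iic, div_le_div_iff_of_pos_right hn0] at this
    exact this
  have hBB : ∀ u ∈ S, BB R n (u : ZMod n).val =
      JJ n (u : ZMod n).val (↑u⁻¹ : ZMod n).val ∩ {α | Irrational α} := by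
    intro u hu
    exact BB_eq hR (hval1 u) (hSR u hu) hn (hvaln _) (hinv u)
  have hBBm : ∀ u ∈ S, MeasurableSet (BB R n (u : ZMod n).val) := by
    intro u hu
    rw [hBB u hu]
    exact (JJ_measurable _ _ _).inter irr_measurable
  have hBN : BN N c R n = ⋃ u ∈ S, BB R n (u : ZMod n).val := by
    ext α
    simp only [mem_iUnion]
    constructor
    · rintro ⟨⟨h0, hi⟩, e1, e2⟩
      obtain ⟨m, hm, hm1, hm2⟩ := nIndex_spec h0 hi hR
      rw [hm] at e1 e2
      rw [Nat.add_sub_cancel] at e2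
      have hdet := pq_det (pq α) m
      have hcop : Nat.Coprime (qden (pq α) m) n := by
        rw [← e1, ← Nat.isCoprime_iff_coprime]
        rcases neg_one_pow_eq_or ℤ m with h | h
        · exact ⟨pnum (pq α) (m + 1), -pnum (pq α) m, by rw [← h, ← hdet]; ring⟩
        · exact ⟨-pnum (pq α) (m + 1), pnum (pq α) m, by
            rw [h] at hdet; linarith⟩
      have hlt : qden (pq α) m < n := by exact_mod_cast hm1.trans_lt hn
      have hv : ((ZMod.unitOfCoprime _ hcop : (ZMod n)ˣ) : ZMod n).val = qden (pq α) m := by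
        rw [ZMod.coe_unitOfCoprime, ZMod.val_natCast, Nat.mod_eq_of_lt hlt]
      refine ⟨ZMod.unitOfCoprime _ hcop, ?_, ⟨h0, hi⟩, ?_, ?_⟩
      · rw [hS, Finset.mem_filter, hv]
        refine ⟨Finset.mem_univ _, e2, ?_⟩
        rw [mem_Iic]
        gcongr
      · rw [hm]; exact e1
      · rw [hm, Nat.add_sub_cancel, hv]
    · rintro ⟨u, hu, h0, e1, e2⟩
      refine ⟨h0, e1, ?_⟩
      rw [e2]
      exact (Finset.mem_filter.1 hu).2.1
  refine ⟨by rw [hBN]; exact S.measurableSet_biUnion hBBm, ?_⟩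
  have hdisj : PairwiseDisjoint (↑S : Set (ZMod n)ˣ) fun u => BB R n (u : ZMod n).val := by
    intro u _ v _ huv
    rw [Function.onFun, Set.disjoint_left]
    rintro α ⟨-, -, h1⟩ ⟨-, -, h2⟩
    apply huv
    rw [h1] at h2
    exact Units.ext (ZMod.val_injective n h2)
  have hmeas : (gaussMeasure (BN N c R n)).toReal =
      ∑ u ∈ S, (gaussMeasure (JJ n (u : ZMod n).val (↑u⁻¹ : ZMod n).val)).toReal := by
    rw [hBN, measure_biUnion_finset hdisj hBBm, ENNReal.toReal_sum fun _ _ => measure_ne_top _ _]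
    refine Finset.sum_congr rfl fun u hu => ?_
    rw [hBB u hu, gm_inter_irr]
  have hmain : (n.totient : ℝ) / (n : ℝ) ^ 2 * Psi N c n (R / n) =
      ∑ u ∈ S, 1 / ((n : ℝ) * (n + ((u : ZMod n).val : ℝ))) * gdS (((↑u⁻¹ : ZMod n).val : ℝ) / n) := by
    have ht : (n.totient : ℝ) ≠ 0 := by
      have := Nat.totient_pos.2 (by omega : 0 < n)
      positivity
    rw [Psi, hypR, hS, Finset.sum_filter]
    rw [div_mul_div_comm, mul_comm ((n : ℝ) ^ 2), mul_div_mul_left _ _ ht, Finset.sum_div]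
    refine Finset.sum_congr rfl fun u _ => ?_
    by_cases h : ((u : ZMod n).val : ℝ) / n ∈ Cset N c ∩ Iic (R / n)
    · rw [if_pos h, indicator_of_mem h]
      field_simp
    · rw [if_neg h, indicator_of_notMem h]
      simp
  rw [hmeas, hmain, ← Finset.sum_sub_distrib]
  refine (Finset.abs_sum_le_sum_abs _ _).trans ?_
  have hb : ∀ u ∈ S, |(gaussMeasure (JJ n (u : ZMod n).val (↑u⁻¹ : ZMod n).val)).toReal -
      1 / ((n : ℝ) * (n + ((u : ZMod n).val : ℝ))) * gdS (((↑u⁻¹ : ZMod n).val : ℝ) / n)| ≤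
        2 / Real.log 2 / (n : ℝ) ^ 4 := fun u _ => JJ_approx (hval1 u) (hvaln u) (hval1 u⁻¹) (hvaln _)
  refine (Finset.sum_le_card_nsmul _ _ _ hb).trans ?_
  rw [nsmul_eq_mul]
  have hcard : (S.card : ℝ) ≤ n := by
    have h1 : S.card ≤ Fintype.card (ZMod n)ˣ := Finset.card_le_univ _
    rw [ZMod.card_units_eq_totient] at h1
    exact_mod_cast h1.trans (Nat.totient_le n)
  calc (S.card : ℝ) * (2 / Real.log 2 / (n : ℝ) ^ 4) ≤ n * (2 / Real.log 2 / (n : ℝ) ^ 4) := by gcongr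
    _ = _ := by field_simp


lemma xi_step (b : ℕ → ℕ) (hb : ∀ n, 1 ≤ b (n + 1)) (m : ℕ) :
    gaussMap ((qden b (m + 2) : ℝ) / qden b (m + 3)) = (qden b (m + 1) : ℝ) / qden b (m + 2) ∧
    ⌊1 / ((qden b (m + 2) : ℝ) / qden b (m + 3))⌋₊ = b (m + 3) := by
  have h1 : 0 < (qden b (m + 1) : ℝ) := by exact_mod_cast (q_pos b hb m).2
  have h2 : (qden b (m + 1) : ℝ) < qden b (m + 2) := by exact_mod_cast q_lt b hb m
  have h2' : 0 < (qden b (m + 2) : ℝ) := h1.trans h2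
  have e : (qden b (m + 2) : ℝ) / qden b (m + 3) =
      1 / ((b (m + 3) : ℝ) + (qden b (m + 1) : ℝ) / qden b (m + 2)) := by
    rw [q_succ b (m + 1)]
    push_cast
    field_simp
  rw [e]
  exact tt_read _ _ ⟨by positivity, (div_lt_one h2').2 h2⟩

lemma xi_iter (b : ℕ → ℕ) (hb : ∀ n, 1 ≤ b (n + 1)) (m k : ℕ) :
    gaussMap^[k] ((qden b (m + k + 1) : ℝ) / qden b (m + k + 2)) = (qden b (m + 1) : ℝ) / qden b (m + 2) := by
  induction k with
  | zero => rfl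
  | succ k ih =>
    rw [Function.iterate_succ_apply]
    have := (xi_step b hb (m + k)).1
    show gaussMap^[k] (gaussMap ((qden b (m + k + 2) : ℝ) / qden b (m + k + 3))) = _
    rw [this, ih]

lemma xi_pq (b : ℕ → ℕ) (hb : ∀ n, 1 ≤ b (n + 1)) (M k : ℕ) (hM : k + 3 ≤ M) :
    pq ((qden b (M - 1) : ℝ) / qden b M) (k + 1) = b (M - k) := by
  obtain ⟨m, rfl⟩ : ∃ m, M = m + 1 + k + 2 := ⟨M - k - 3, by omega⟩
  have e1 : m + 1 + k + 2 - 1 = m + 1 + k + 1 := by omega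
  have e2 : m + 1 + k + 2 - k = m + 3 := by omega
  rw [pq, Nat.add_sub_cancel, e1, e2, xi_iter b hb (m + 1) k]
  exact (xi_step b hb m).2

lemma q_measurable (n : ℕ) : Measurable (fun α => qden (pq α) n) ∧ Measurable (fun α => qden (pq α) (n + 1)) := by
  induction n with
  | zero => exact ⟨measurable_const, pq_measurable 1⟩
  | succ n ih =>
    refine ⟨ih.2, ?_⟩
    exact ((pq_measurable (n + 2)).mul ih.2).add ih.1

lemma bad_tendsto (K : ℕ) :
    Tendsto (fun R : ℝ => (gaussMeasure {α : ℝ | R < (qden (pq α) K : ℝ)}).toReal) atTop (𝓝 0) := by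
  have h := tendsto_measure_iInter_atTop (μ := gaussMeasure) (s := fun R : ℝ => {α : ℝ | R < (qden (pq α) K : ℝ)})
    (fun R => (measurableSet_lt measurable_const
      ((measurable_from_top (f := fun n : ℕ => (n : ℝ))).comp (q_measurable K).1)).nullMeasurableSet)
    (fun R S hRS α (hα : S < _) => lt_of_le_of_lt hRS hα) ⟨0, measure_ne_top _ _⟩
  have e : (⋂ R : ℝ, {α : ℝ | R < (qden (pq α) K : ℝ)}) = ∅ := by
    ext α
    simp only [mem_iInter, mem_setOf_eq, mem_empty_iff_false, iff_false, not_forall, not_lt]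
    exact ⟨_, le_rfl⟩
  rw [e, measure_empty] at h
  exact (ENNReal.tendsto_toReal ENNReal.zero_ne_top).comp h

/-- the set of the statement -/
def AA (N : ℕ) (c : Fin N → ℕ) (a b R : ℝ) : Set ℝ :=
  {α : ℝ | α ∈ Ioo (0 : ℝ) 1 ∧ Irrational α ∧
          a < (qden (pq α) (nIndex α R) : ℝ) / R ∧
          (qden (pq α) (nIndex α R) : ℝ) / R < b ∧
          ∀ k : Fin N, pq α (nIndex α R - (k : ℕ)) = c k}

lemma AA_BN (N : ℕ) (c : Fin N → ℕ) (a b R : ℝ) (hR : 1 ≤ R) :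
    AA N c a b R ⊆ (⋃ n ∈ SR a b R, BN N c R n) ∪ {α : ℝ | R < (qden (pq α) (N + 2) : ℝ)} ∧
    (⋃ n ∈ SR a b R, BN N c R n) ⊆ AA N c a b R ∪ {α : ℝ | R < (qden (pq α) (N + 2) : ℝ)} := by
  have hR0 : 0 < R := by linarith
  have hbad : ∀ α : ℝ, α ∈ Ioo (0 : ℝ) 1 → Irrational α → ¬ (R < (qden (pq α) (N + 2) : ℝ)) →
      N + 2 ≤ nIndex α R := by
    intro α h0 hi h
    by_contra hcon
    obtain ⟨m, hm, hm1, hm2⟩ := nIndex_spec h0 hi hR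
    apply h
    refine hm2.trans_le ?_
    exact_mod_cast q_mono _ (pq_ge h0 hi) (by omega)
  have hsh : ∀ α : ℝ, α ∈ Ioo (0 : ℝ) 1 → Irrational α → N + 2 ≤ nIndex α R →
      ((∀ k : Fin N, pq α (nIndex α R - (k : ℕ)) = c k) ↔
      (qden (pq α) (nIndex α R - 1) : ℝ) / qden (pq α) (nIndex α R) ∈ Cset N c) := by
    intro α h0 hi hM
    rw [Cset, mem_setOf_eq]
    refine forall_congr' fun k => ?_
    rw [xi_pq _ (pq_ge h0 hi) _ _ (by omega)]
  constructor
  · rintro α ⟨h0, hi, h1, h2, h3⟩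
    by_cases hb : R < (qden (pq α) (N + 2) : ℝ)
    · exact Or.inr hb
    · left
      simp only [mem_iUnion]
      refine ⟨qden (pq α) (nIndex α R), ?_, ⟨h0, hi⟩, rfl, ?_⟩
      · rw [mem_SR]
        exact ⟨(lt_div_iff₀ hR0).1 h1, (div_lt_iff₀ hR0).1 h2⟩
      · exact (hsh α h0 hi (hbad α h0 hi hb)).1 h3
  · intro α hα
    simp only [mem_iUnion] at hα
    obtain ⟨n, hn, ⟨h0, hi⟩, rfl, h3⟩ := hα
    by_cases hb : R < (qden (pq α) (N + 2) : ℝ)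
    · exact Or.inr hb
    · left
      rw [mem_SR] at hn
      exact ⟨h0, hi, (lt_div_iff₀ hR0).2 hn.1, (div_lt_iff₀ hR0).2 hn.2,
        (hsh α h0 hi (hbad α h0 hi hb)).2 h3⟩

lemma union_approx (N : ℕ) (c : Fin N → ℕ) (a b R : ℝ) (ha : 1 < a) (hab : a < b) (hR : 1 ≤ R) :
    |(gaussMeasure (⋃ n ∈ SR a b R, BN N c R n)).toReal -
      ∑ n ∈ SR a b R, (n.totient : ℝ) / (n : ℝ) ^ 2 * PsiN N c n (R / n)| ≤
      b * (2 / Real.log 2) / R := by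
  have hl := gm_log2
  have hR0 : 0 < R := by linarith
  have hlt : ∀ n ∈ SR a b R, R < n := by
    intro n hn
    have := (mem_SR.1 hn).1
    nlinarith
  have hB : ∀ n ∈ SR a b R, MeasurableSet (BN N c R n) ∧
    |(gaussMeasure (BN N c R n)).toReal - (n.totient : ℝ) / (n : ℝ) ^ 2 * PsiN N c n (R / n)| ≤
      2 / Real.log 2 / R ^ 2 := by
    intro n hn
    have h1 := hlt n hn
    have : NeZero n := ⟨by rintro rfl; simp at h1; linarith⟩
    obtain ⟨h2, h3⟩ := BN_main N c hR n h1
    refine ⟨h2, ?_⟩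
    rw [PsiN_eq]
    refine h3.trans ?_
    have : R ^ 2 ≤ (n : ℝ) ^ 3 := by
      calc R ^ 2 ≤ R ^ 3 := pow_le_pow_right₀ hR (by norm_num)
        _ ≤ _ := by gcongr
    gcongr
  have hdisj : PairwiseDisjoint (↑(SR a b R) : Set ℕ) fun n => BN N c R n := by
    intro u _ v _ huv
    rw [Function.onFun, Set.disjoint_left]
    rintro α ⟨-, h1, -⟩ ⟨-, h2, -⟩
    exact huv (h1.symm.trans h2)
  rw [measure_biUnion_finset hdisj fun n hn => (hB n hn).1, ENNReal.toReal_sum fun _ _ => measure_ne_top _ _,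
    ← Finset.sum_sub_distrib]
  refine (Finset.abs_sum_le_sum_abs _ _).trans ?_
  refine (Finset.sum_le_card_nsmul _ _ _ fun n hn => (hB n hn).2).trans ?_
  rw [nsmul_eq_mul]
  calc ((SR a b R).card : ℝ) * (2 / Real.log 2 / R ^ 2) ≤ b * R * (2 / Real.log 2 / R ^ 2) := by
        gcongr
        exact card_SR_le (by linarith) (by linarith) hR0
    _ = _ := by field_simp

lemma AA_tendsto (N : ℕ) (c : Fin N → ℕ) (a b l : ℝ) (ha : 1 < a) (hab : a < b)
    (hm : Tendsto (fun R : ℝ => ∑ n ∈ SR a b R, (n.totient : ℝ) / (n : ℝ) ^ 2 * PsiN N c n (R / n)) atTop (𝓝 l)) :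
    Tendsto (fun R : ℝ => (gaussMeasure (AA N c a b R)).toReal) atTop (𝓝 l) := by
  have herr : Tendsto (fun R : ℝ => (gaussMeasure {α : ℝ | R < (qden (pq α) (N + 2) : ℝ)}).toReal +
      b * (2 / Real.log 2) / R) atTop (𝓝 0) := by
    have := (bad_tendsto (N + 2)).add (tendsto_const_nhds (x := b * (2 / Real.log 2)) |>.div_atTop tendsto_id)
    simpa using this
  have hdiff : Tendsto (fun R : ℝ => (gaussMeasure (AA N c a b R)).toReal -
      ∑ n ∈ SR a b R, (n.totient : ℝ) / (n : ℝ) ^ 2 * PsiN N c n (R / n)) atTop (𝓝 0) := by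
    refine squeeze_zero_norm' ?_ herr
    filter_upwards [eventually_ge_atTop (1 : ℝ)] with R hR
    have h1 := union_approx N c a b R ha hab hR
    obtain ⟨h2, h3⟩ := AA_BN N c a b R hR
    have tr : ∀ s t u : Set ℝ, s ⊆ t ∪ u →
        (gaussMeasure s).toReal ≤ (gaussMeasure t).toReal + (gaussMeasure u).toReal := by
      intro s t u h
      rw [← ENNReal.toReal_add (measure_ne_top _ _) (measure_ne_top _ _)]
      exact ENNReal.toReal_mono (ENNReal.add_ne_top.2 ⟨measure_ne_top _ _, measure_ne_top _ _⟩)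
        ((measure_mono h).trans (measure_union_le _ _))
    have h4 := tr _ _ _ h2
    have h5 := tr _ _ _ h3
    rw [Real.norm_eq_abs]
    rw [abs_le] at h1 ⊢
    constructor <;> linarith [h1.1, h1.2]
  have := hdiff.add hm
  simpa using this


/-- For `N ≥ 1`, positive integers `c₀, …, c_{N−1}` and `E ⊆ D` the set of
`(x,y) ∈ D` with `⌊1/y⌋ = c₀` and `a_i(x) = c_i` for `1 ≤ i ≤ N−1`, the Gauss measure of
`{α : a < q_{n_R}(α)/R < b, a_{n_R−k}(α) = c_k, 0 ≤ k < N}` converges, as `R → ∞`, to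
`(∫_D φ dμ₂)⁻¹ · ∫_E (max 0 (φ − ln a) − max 0 (φ − ln b)) dμ₂`. -/
theorem statement2 (N : ℕ) (hN : 0 < N) (c : Fin N → ℕ) (hc : ∀ k, 0 < c k)
    (a b : ℝ) (ha : 1 < a) (hab : a < b) :
    Filter.Tendsto
      (fun R : ℝ =>
        (gaussMeasure {α : ℝ | α ∈ Ioo (0 : ℝ) 1 ∧ Irrational α ∧
          a < (qden (pq α) (nIndex α R) : ℝ) / R ∧
          (qden (pq α) (nIndex α R) : ℝ) / R < b ∧
          ∀ k : Fin N, pq α (nIndex α R - (k : ℕ)) = c k}).toReal)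
      Filter.atTop
      (nhds ((∫ p, roof p ∂mu2)⁻¹ *
        ∫ p in {p ∈ Dset | ⌊1 / p.2⌋₊ = c ⟨0, hN⟩ ∧
            ∀ i : Fin N, 1 ≤ (i : ℕ) → pq p.1 (i : ℕ) = c i},
          (max 0 (roof p - Real.log a) - max 0 (roof p - Real.log b)) ∂mu2)) := by
  rw [← limit_eq N hN c a b ha hab]
  exact AA_tendsto N c a b _ ha hab (mainsum_tendsto N c a b ha hab)
end

section
/- There exists a function f on the set of bi-infinite sequences of positive integers such that for every bi-infinite sequence α̂ = (a_n)_{n∈ℤ} of positive integers and every n ≥ 1, | f_n(α̂) − f(α̂) | ≤ 2^{3−n}; in particular f_n converges to f uniformly and exponentially fast, so that ln q_n(α̂) = Σ_{k=1}^n ln [a_k; a_{k−1}, a_{k−2}, …] + f(α̂) + ε_n(α̂) with sup_{α̂} |ε_n(α̂)| = O(2^{−n}). -/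
open MeasureTheory Filter Set Topology

lemma cf_half_aux (a x y : ℝ) (ha : 1 ≤ a) (hx : 1 ≤ x) (hxy : x ≤ y) :
    |Real.log (a + 1 / x) - Real.log (a + 1 / y)| ≤ |Real.log x - Real.log y| / 2 := by
  have hx0 : 0 < x := by linarith
  have hy0 : 0 < y := by linarith
  have h1 : 1 / y ≤ 1 / x := one_div_le_one_div_of_le hx0 hxy
  have hX : 0 < a + 1 / x := by positivity
  have hY : 0 < a + 1 / y := by positivity
  have hl1 : Real.log (a + 1 / y) ≤ Real.log (a + 1 / x) := Real.log_le_log hY (by linarith)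
  have hl2 : Real.log x ≤ Real.log y := Real.log_le_log hx0 hxy
  rw [abs_of_nonneg (by linarith), abs_of_nonpos (by linarith)]
  have key : (a + 1 / x) ^ 2 * x ≤ (a + 1 / y) ^ 2 * y := by
    have e1 : (a + 1 / x) ^ 2 * x = a ^ 2 * x + 2 * a + 1 / x := by field_simp; ring
    have e2 : (a + 1 / y) ^ 2 * y = a ^ 2 * y + 2 * a + 1 / y := by field_simp; ring
    have e3 : 1 / x - 1 / y = (y - x) * (1 / (x * y)) := by field_simp
    have e4 : 1 / (x * y) ≤ 1 := by
      rw [div_le_one (by positivity)]; nlinarith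
    have e5 : (y - x) * (1 / (x * y)) ≤ (y - x) * 1 :=
      mul_le_mul_of_nonneg_left e4 (by linarith)
    have e6 : (y - x) * 1 ≤ (y - x) * a ^ 2 :=
      mul_le_mul_of_nonneg_left (by nlinarith) (by linarith)
    rw [e1, e2]; nlinarith
  have := Real.log_le_log (by positivity) key
  rw [Real.log_mul (by positivity) (by positivity), Real.log_mul (by positivity) (by positivity),
    Real.log_pow, Real.log_pow] at this
  push_cast at this
  linarith

lemma cf_half (a x y : ℝ) (ha : 1 ≤ a) (hx : 1 ≤ x) (hy : 1 ≤ y) :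
    |Real.log (a + 1 / x) - Real.log (a + 1 / y)| ≤ |Real.log x - Real.log y| / 2 := by
  rcases le_total x y with h | h
  · exact cf_half_aux a x y ha hx h
  · rw [abs_sub_comm, abs_sub_comm (Real.log x)]
    exact cf_half_aux a y x ha hy h

lemma cfTrunc_zero (b : ℕ → ℝ) : cfTrunc b 0 = 0 := by simp [cfTrunc, cfList]

lemma cfTrunc_succ (b : ℕ → ℝ) (m : ℕ) :
    cfTrunc b (m + 1) = 1 / (b 1 + cfTrunc (fun j => b (j + 1)) m) := by
  simp [cfTrunc, List.range_succ_eq_map, cfList, Function.comp_def]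

lemma cfTrunc_nonneg (m : ℕ) : ∀ b : ℕ → ℝ, (∀ j, 1 ≤ b j) → 0 ≤ cfTrunc b m := by
  induction m with
  | zero => intro b _; rw [cfTrunc_zero]
  | succ m ih =>
    intro b hb
    rw [cfTrunc_succ]
    have := ih (fun j => b (j + 1)) (fun j => hb _)
    have := hb 1
    positivity

lemma log_ratio_le (a t : ℝ) (ha : 1 ≤ a) (ht : 0 ≤ t) (ht1 : t ≤ 1) :
    |Real.log a - Real.log (a + t)| ≤ 1 := by
  have h1 : Real.log a ≤ Real.log (a + t) := Real.log_le_log (by linarith) (by linarith)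
  rw [abs_of_nonpos (by linarith)]
  have h2 : Real.log (a + t) ≤ Real.log (a * 2) := Real.log_le_log (by linarith) (by linarith)
  rw [Real.log_mul (by linarith) (by norm_num)] at h2
  have := Real.log_le_sub_one_of_pos (show (0 : ℝ) < 2 by norm_num)
  linarith

lemma cf_cauchy (m : ℕ) : ∀ b : ℕ → ℝ, (∀ j, 1 ≤ b j) →
    |Real.log (b 0 + cfTrunc b m) - Real.log (b 0 + cfTrunc b (m + 1))| ≤ 1 * (1 / 2 : ℝ) ^ m := by
  induction m with
  | zero =>
    intro b hb
    have h1 := hb 1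
    rw [cfTrunc_succ, cfTrunc_zero, cfTrunc_zero]
    simp only [add_zero, pow_zero, mul_one]
    apply log_ratio_le _ _ (hb 0) (by positivity)
    rw [div_le_one (by positivity)]; exact h1
  | succ m ih =>
    intro b hb
    rw [cfTrunc_succ, cfTrunc_succ b (m + 1)]
    have hb' : ∀ j, 1 ≤ (fun j => b (j + 1)) j := fun j => hb _
    have h := ih (fun j => b (j + 1)) hb'
    have n1 := cfTrunc_nonneg m _ hb'
    have n2 := cfTrunc_nonneg (m + 1) _ hb'
    have h1 := hb 1
    refine (cf_half _ _ _ (hb 0) (by linarith) (by linarith)).trans ?_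
    simp only [zero_add] at h
    rw [pow_succ]
    linarith

lemma cf_tendsto (b : ℕ → ℝ) (hb : ∀ j, 1 ≤ b j) :
    Tendsto (fun m => cfTrunc b m) atTop (𝓝 (cfVal b)) := by
  have hc : CauchySeq (fun m => Real.log (b 0 + cfTrunc b m)) :=
    cauchySeq_of_le_geometric (1 / 2 : ℝ) 1 (by norm_num)
      (fun m => by rw [Real.dist_eq]; exact cf_cauchy m b hb)
  obtain ⟨l, hl⟩ := cauchySeq_tendsto_of_complete hc
  have h2 : Tendsto (fun m => Real.exp (Real.log (b 0 + cfTrunc b m)) - b 0) atTop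
      (𝓝 (Real.exp l - b 0)) := ((Real.continuous_exp.tendsto l).comp hl).sub_const _
  have h3 : (fun m => Real.exp (Real.log (b 0 + cfTrunc b m)) - b 0) = fun m => cfTrunc b m := by
    funext m
    have := cfTrunc_nonneg m b hb
    have := hb 0
    rw [Real.exp_log (by linarith)]; ring
  rw [h3] at h2
  exact tendsto_nhds_limUnder ⟨_, h2⟩

lemma cfVal_nonneg (b : ℕ → ℝ) (hb : ∀ j, 1 ≤ b j) : 0 ≤ cfVal b :=
  ge_of_tendsto' (cf_tendsto b hb) (fun m => cfTrunc_nonneg m b hb)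

lemma cfVal_rec (b : ℕ → ℝ) (hb : ∀ j, 1 ≤ b j) :
    cfVal b = 1 / (b 1 + cfVal (fun j => b (j + 1))) := by
  have h1 := (tendsto_add_atTop_iff_nat 1).2 (cf_tendsto b hb)
  have hb' : ∀ j, 1 ≤ (fun j => b (j + 1)) j := fun j => hb _
  have h2 := cf_tendsto _ hb'
  have h3 := cfVal_nonneg _ hb'
  have h4 := hb 1
  have h5 := (tendsto_const_nhds (x := (1 : ℝ))).div (h2.const_add (b 1)) (by linarith)
  refine tendsto_nhds_unique h1 (h5.congr fun m => ?_)
  rw [cfTrunc_succ]; rfl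

/-- The value `[a_k; a_{k-1}, ...]`. -/
noncomputable def yVal (a : ℤ → ℕ) (k : ℕ) : ℝ :=
  (a (k : ℤ) : ℝ) + cfVal fun j => (a ((k : ℤ) - (j : ℤ)) : ℝ)

lemma cast_ge (a : ℤ → ℕ) (ha : ∀ m, 0 < a m) (m : ℤ) : (1 : ℝ) ≤ (a m : ℝ) := by
  exact_mod_cast ha m

lemma yVal_ge (a : ℤ → ℕ) (ha : ∀ m, 0 < a m) (k : ℕ) : 1 ≤ yVal a k := by
  have := cfVal_nonneg (fun j => (a ((k : ℤ) - (j : ℤ)) : ℝ)) (fun j => cast_ge a ha _)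
  have := cast_ge a ha k
  unfold yVal; linarith

lemma yVal_succ (a : ℤ → ℕ) (ha : ∀ m, 0 < a m) (k : ℕ) :
    yVal a (k + 1) = (a ((k + 1 : ℕ) : ℤ) : ℝ) + 1 / yVal a k := by
  unfold yVal
  rw [cfVal_rec _ (fun j => cast_ge a ha _)]
  have e1 : ((k + 1 : ℕ) : ℤ) - ((1 : ℕ) : ℤ) = k := by push_cast; ring
  have e2 : ∀ j : ℕ, ((k + 1 : ℕ) : ℤ) - ((j + 1 : ℕ) : ℤ) = (k : ℤ) - j := by
    intro j; push_cast; ring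
  simp only [e1, e2]

lemma qden_pos (b : ℕ → ℕ) (hb : ∀ j, 0 < b j) (n : ℕ) : 0 < qden b n ∧ 0 < qden b (n + 1) := by
  induction n with
  | zero => exact ⟨by simp [qden], by simpa [qden] using hb 1⟩
  | succ n ih => exact ⟨ih.2, by rw [qden]; exact Nat.add_pos_right _ ih.1⟩

lemma qden_ratio (b : ℕ → ℕ) (hb : ∀ j, 0 < b j) (n : ℕ) :
    (qden b (n + 2) : ℝ) / qden b (n + 1) =
      (b (n + 2) : ℝ) + 1 / ((qden b (n + 1) : ℝ) / qden b n) := by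
  have h1 : (0 : ℝ) < qden b n := by exact_mod_cast (qden_pos b hb n).1
  have h2 : (0 : ℝ) < qden b (n + 1) := by exact_mod_cast (qden_pos b hb n).2
  rw [qden]; push_cast; field_simp

lemma qden_ratio_ge (b : ℕ → ℕ) (hb : ∀ j, 0 < b j) (n : ℕ) :
    1 ≤ (qden b (n + 1) : ℝ) / qden b n := by
  have hb' : ∀ j, (1 : ℝ) ≤ b j := fun j => by exact_mod_cast hb j
  cases n with
  | zero => simpa [qden] using Nat.succ_le_of_lt (hb 1)
  | succ n =>
    rw [qden_ratio b hb]
    have : (0 : ℝ) ≤ 1 / ((qden b (n + 1) : ℝ) / qden b n) := by positivity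
    linarith [hb' (n + 2)]

lemma diff_bound (a : ℤ → ℕ) (ha : ∀ m, 0 < a m) (n : ℕ) :
    |Real.log ((qden (fun k => a (k : ℤ)) (n + 1) : ℝ) / qden (fun k => a (k : ℤ)) n)
      - Real.log (yVal a (n + 1))| ≤ 1 * (1 / 2 : ℝ) ^ n := by
  have hb : ∀ j : ℕ, 0 < (fun k : ℕ => a (k : ℤ)) j := fun j => ha _
  induction n with
  | zero =>
    rw [yVal_succ a ha]
    have hy := yVal_ge a ha 0
    have h := log_ratio_le (a ((0 + 1 : ℕ) : ℤ) : ℝ) (1 / yVal a 0) (cast_ge a ha _)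
      (by positivity) (by rw [div_le_one (by positivity)]; exact hy)
    simpa [qden] using h
  | succ n ih =>
    rw [qden_ratio _ hb, yVal_succ a ha (n + 1)]
    refine (cf_half _ _ _ (cast_ge a ha _) (qden_ratio_ge _ hb n) (yVal_ge a ha _)).trans ?_
    rw [pow_succ]
    linarith

lemma fn_diff (a : ℤ → ℕ) (ha : ∀ m, 0 < a m) (n : ℕ) :
    dist (fn a n) (fn a (n + 1)) ≤ 1 * (1 / 2 : ℝ) ^ n := by
  have hb : ∀ j : ℕ, 0 < (fun k : ℕ => a (k : ℤ)) j := fun j => ha _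
  have h := diff_bound a ha n
  have h1 : (0 : ℝ) < qden (fun k => a (k : ℤ)) n := by exact_mod_cast (qden_pos _ hb n).1
  have h2 : (0 : ℝ) < qden (fun k => a (k : ℤ)) (n + 1) := by exact_mod_cast (qden_pos _ hb n).2
  rw [Real.log_div h2.ne' h1.ne'] at h
  rw [dist_comm, Real.dist_eq]
  have e : fn a (n + 1) - fn a n = Real.log (qden (fun k => a (k : ℤ)) (n + 1) : ℝ)
      - Real.log (qden (fun k => a (k : ℤ)) n : ℝ) - Real.log (yVal a (n + 1)) := by
    unfold fn yVal
    rw [Finset.sum_Icc_succ_top (by omega)]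
    ring
  rw [e]; exact h

/-- There is a function `f` on bi-infinite sequences of positive integers
such that `|f_n(α̂) − f(α̂)| ≤ 2^{3−n}` for all such sequences `α̂` and all `n ≥ 1`; in
particular `ln q_n = ∑_{k=1}^n ln [a_k; a_{k−1}, …] + f + ε_n` with `sup |ε_n| = O(2^{−n})`. -/
theorem statement3 :
    ∃ f : (ℤ → ℕ) → ℝ,
      ∀ a : ℤ → ℕ, (∀ m : ℤ, 0 < a m) → ∀ n : ℕ, 1 ≤ n →
        |fn a n - f a| ≤ (2 : ℝ) ^ ((3 : ℤ) - (n : ℤ)) := by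
  refine ⟨fun a => limUnder atTop (fn a), fun a ha n _ => ?_⟩
  have hc : CauchySeq (fn a) :=
    cauchySeq_of_le_geometric (1 / 2 : ℝ) 1 (by norm_num) (fn_diff a ha)
  have h := dist_le_of_le_geometric_of_tendsto (1 / 2 : ℝ) 1 (by norm_num) (fn_diff a ha)
    hc.tendsto_limUnder n
  rw [Real.dist_eq] at h
  refine h.trans ?_
  rw [zpow_sub₀ (by norm_num), zpow_natCast, one_div, inv_pow]
  have : (0 : ℝ) < (2 ^ n)⁻¹ := by positivity
  rw [div_eq_mul_inv ((2 : ℝ) ^ (3 : ℤ))]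
  norm_num
  linarith
end

section
/- For any positive integers a_1, …, a_n and any real x ∈ [0,1), Σ_{k=1}^n ln [a_k; a_{k−1}, …, a_2, a_1 + x] = ln(q_n + x·p_n), where p_n/q_n is the n-th convergent of the finite continued fraction [a_1, …, a_n] and [a_k; a_{k−1}, …, a_2, a_1 + x] denotes the finite continued fraction a_k + 1/(a_{k−1} + ⋯ + 1/(a_2 + 1/(a_1 + x))). -/
open MeasureTheory Filter Set Topology

theorem cfRev_succ_succ (b : ℕ → ℝ) (k : ℕ) :
    cfRev b (k + 2) = b (k + 2) + 1 / cfRev b (k + 1) := by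
  have h : (fun i => b (k + 1 - i)) ∘ Nat.succ = fun i => b (k - i) := by
    funext i
    simp only [Function.comp]
    congr 1
    omega
  have e : k + 2 - 1 = k + 1 := by omega
  simp only [cfRev, e, Nat.add_sub_cancel, List.range_succ_eq_map, List.map_cons, List.map_map,
    cfList, h, Nat.sub_zero]

theorem cfRev_aux (n : ℕ) (a : ℕ → ℕ) (ha : ∀ k, 1 ≤ k → k ≤ n → 0 < a k)
    (x : ℝ) (hx : 0 ≤ x) (k : ℕ) (hk : k + 1 ≤ n) :
    0 < (qden a k : ℝ) + x * (pnum a k : ℝ) ∧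
    0 < (qden a (k + 1) : ℝ) + x * (pnum a (k + 1) : ℝ) ∧
    cfRev (fun i => if i = 1 then (a 1 : ℝ) + x else (a i : ℝ)) (k + 1) =
      ((qden a (k + 1) : ℝ) + x * (pnum a (k + 1) : ℝ)) /
        ((qden a k : ℝ) + x * (pnum a k : ℝ)) := by
  induction k with
  | zero =>
    have h1 : (0 : ℝ) < a 1 := by exact_mod_cast ha 1 le_rfl hk
    refine ⟨by simp [qden, pnum], ?_, by simp [qden, pnum, cfRev, cfList]⟩
    simp only [qden, pnum, Nat.cast_one]
    positivity
  | succ k ih =>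
    obtain ⟨h0, h1, h2⟩ := ih (by omega)
    have h3 : (0 : ℝ) < a (k + 2) := by exact_mod_cast ha (k + 2) (by omega) hk
    have e : (qden a (k + 1 + 1) : ℝ) + x * (pnum a (k + 1 + 1) : ℝ) =
        a (k + 2) * ((qden a (k + 1) : ℝ) + x * (pnum a (k + 1) : ℝ)) +
          ((qden a k : ℝ) + x * (pnum a k : ℝ)) := by
      simp only [qden, pnum]
      push_cast
      ring
    refine ⟨h1, ?_, ?_⟩
    · rw [e]
      positivity
    · rw [cfRev_succ_succ, h2, e, if_neg (by omega), one_div_div, add_div (_ * _),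
        mul_div_cancel_right₀ _ (ne_of_gt h1)]

/-- For positive integers `a₁, …, aₙ` and `x ∈ [0,1)`,
`∑_{k=1}^n ln [a_k; a_{k−1}, …, a_2, a_1 + x] = ln (qₙ + x·pₙ)`. -/
theorem statement6 (n : ℕ) (a : ℕ → ℕ) (ha : ∀ k, 1 ≤ k → k ≤ n → 0 < a k)
    (x : ℝ) (hx : x ∈ Ico (0 : ℝ) 1) :
    ∑ k ∈ Finset.Icc 1 n,
        Real.log (cfRev (fun i => if i = 1 then (a 1 : ℝ) + x else (a i : ℝ)) k) =
      Real.log ((qden a n : ℝ) + x * (pnum a n : ℝ)) := by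
  have key : ∀ m, m ≤ n → ∑ k ∈ Finset.Icc 1 m,
        Real.log (cfRev (fun i => if i = 1 then (a 1 : ℝ) + x else (a i : ℝ)) k) =
      Real.log ((qden a m : ℝ) + x * (pnum a m : ℝ)) := by
    intro m
    induction m with
    | zero => intro _; simp [qden, pnum]
    | succ m ih =>
      intro hm
      obtain ⟨h0, h1, h2⟩ := cfRev_aux n a ha x hx.1 m hm
      rw [Finset.sum_Icc_succ_top (by omega), ih (by omega), h2, Real.log_div h1.ne' h0.ne']
      ring
  exact key n le_rfl
end
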